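/- Let d ≥ 1 and a > 2b > 0. Then there exists a solution φ₀ of the nuclear NLS equation −∇·(∇φ/(1−φ²)) + (|∇φ|²/(1−φ²)²)φ − aφ³ + bφ = 0 on ℝ^d with 0 < φ₀ < 1 which is radial and strictly decreasing in |x|, tends to 0 at infinity, and is unique in the following sense: every C² solution φ of the same equation with 0 < φ(x) < 1 for all x and φ(x) → 0 as |x| → ∞ satisfies φ(x) = φ₀(x − x₀) for some x₀ ∈ ℝ^d. -/

import Mathlib

open MeasureTheory Real Filter

noncomputable section

/-- Partial derivative of a function on `ℝ^d` in the `i`-th coordinate direction. -/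
def pd {d : ℕ} (i : Fin d) (f : EuclideanSpace ℝ (Fin d) → ℝ)
    (x : EuclideanSpace ℝ (Fin d)) : ℝ :=
  fderiv ℝ f x (EuclideanSpace.single i 1)

/-- The nuclear NLS equation
`−∇·(∇φ/(1−φ²)) + (|∇φ|²/(1−φ²)²)φ − aφ³ + bφ = 0` on `ℝ^d`. -/
def NuclearNLS (d : ℕ) (a b : ℝ) (φ : EuclideanSpace ℝ (Fin d) → ℝ) : Prop :=
  ∀ x, -(∑ i, pd i (fun y => pd i φ y / (1 - φ y ^ 2)) x)
      + ((∑ i, (pd i φ x) ^ 2) / (1 - φ x ^ 2) ^ 2) * φ x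
      - a * φ x ^ 3 + b * φ x = 0

def nf (a b x : ℝ) : ℝ := sin x * cos x * (a * sin x ^ 2 - b)
def nfd (a b x : ℝ) : ℝ :=
  (cos x ^ 2 - sin x ^ 2) * (a * sin x ^ 2 - b) + 2 * a * sin x ^ 2 * cos x ^ 2
def nF (a b x : ℝ) : ℝ := a * sin x ^ 4 / 4 - b * sin x ^ 2 / 2

theorem hasDerivAt_nF (a b x : ℝ) : HasDerivAt (nF a b) (nf a b x) x := by
  have h := (((hasDerivAt_sin x).pow 4).const_mul (a / 4)).sub
    (((hasDerivAt_sin x).pow 2).const_mul (b / 2))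
  refine (h.congr_deriv ?_).congr_of_eventuallyEq ?_
  · unfold nf; norm_num; ring
  · refine Eventually.of_forall fun y => ?_
    simp only [nF, Pi.sub_apply, Pi.pow_apply]; ring

theorem hasDerivAt_nf (a b x : ℝ) : HasDerivAt (nf a b) (nfd a b x) x := by
  have h := ((hasDerivAt_sin x).mul (hasDerivAt_cos x)).mul
    ((((hasDerivAt_sin x).pow 2).const_mul a).sub_const b)
  refine (h.congr_deriv ?_).congr_of_eventuallyEq ?_
  · unfold nfd; norm_num; ring
  · exact Eventually.of_forall fun y => by simp [nf]

theorem nf_cont (a b : ℝ) : Continuous (nf a b) := by unfold nf; fun_prop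
theorem nF_cont (a b : ℝ) : Continuous (nF a b) := by unfold nF; fun_prop
theorem nfd_cont (a b : ℝ) : Continuous (nfd a b) := by unfold nfd; fun_prop

theorem nf_lip (a b : ℝ) : ∃ K : ℝ, 0 < K ∧ ∀ x y, |nf a b x - nf a b y| ≤ K * |x - y| := by
  refine ⟨1 + |a| + |b| + 2 * |a|, by positivity, fun x y => ?_⟩
  have := Convex.norm_image_sub_le_of_norm_hasDerivWithin_le (𝕜 := ℝ) (f := nf a b)
    (f' := nfd a b) (s := Set.univ) (C := 1 + |a| + |b| + 2 * |a|)
    (fun z _ => (hasDerivAt_nf a b z).hasDerivWithinAt) (fun z _ => ?_) convex_univ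
    (Set.mem_univ y) (Set.mem_univ x)
  · simpa [Real.norm_eq_abs] using this
  · have hs := sin_sq_add_cos_sq z
    have h1 : |cos z ^ 2 - sin z ^ 2| ≤ 1 := by
      rw [abs_le]; constructor <;> nlinarith [sq_nonneg (sin z), sq_nonneg (cos z)]
    have h2 : |a * sin z ^ 2 - b| ≤ |a| + |b| := by
      refine (abs_sub _ _).trans ?_
      rw [abs_mul]
      have : |sin z ^ 2| ≤ 1 := by
        rw [abs_le]; constructor <;> nlinarith [sq_nonneg (sin z), sq_nonneg (cos z)]
      nlinarith [abs_nonneg a]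
    have h3 : |2 * a * sin z ^ 2 * cos z ^ 2| ≤ 2 * |a| := by
      have h : |sin z ^ 2 * cos z ^ 2| ≤ 1 := by
        rw [abs_of_nonneg (by positivity)]
        nlinarith [sq_nonneg (sin z), sq_nonneg (cos z), sq_nonneg (sin z ^ 2 - cos z ^ 2)]
      have : 2 * a * sin z ^ 2 * cos z ^ 2 = 2 * (a * (sin z ^ 2 * cos z ^ 2)) := by ring
      rw [this, abs_mul, abs_mul, abs_two]
      nlinarith [abs_nonneg a]
    rw [Real.norm_eq_abs]
    unfold nfd
    refine (abs_add_le _ _).trans ?_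
    rw [abs_mul]
    have := mul_le_mul h1 h2 (abs_nonneg _) zero_le_one
    linarith

theorem nf_bdd (a b : ℝ) : ∀ x, |nf a b x| ≤ |a| + |b| := by
  intro z
  have hs := sin_sq_add_cos_sq z
  have h1 : |sin z * cos z| ≤ 1 := by
    rw [abs_mul]
    exact mul_le_one₀ (abs_sin_le_one z) (abs_nonneg _) (abs_cos_le_one z)
  have h2 : |a * sin z ^ 2 - b| ≤ |a| + |b| := by
    refine (abs_sub _ _).trans ?_
    rw [abs_mul]
    have : |sin z ^ 2| ≤ 1 := by
      rw [abs_le]; constructor <;> nlinarith [sq_nonneg (sin z), sq_nonneg (cos z)]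
    nlinarith [abs_nonneg a]
  unfold nf
  rw [abs_mul]
  have := mul_le_mul h1 h2 (abs_nonneg _) zero_le_one
  linarith

theorem sin_pos_q {x : ℝ} (h0 : 0 < x) (h1 : x < π / 2) : 0 < sin x :=
  sin_pos_of_pos_of_lt_pi h0 (by linarith [pi_pos])
theorem cos_pos_q {x : ℝ} (h0 : 0 < x) (h1 : x < π / 2) : 0 < cos x :=
  cos_pos_of_mem_Ioo ⟨by linarith [pi_pos], h1⟩

theorem nf_pos {a b x : ℝ} (h0 : 0 < x) (h1 : x < π / 2) (h : b < a * sin x ^ 2) :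
    0 < nf a b x :=
  mul_pos (mul_pos (sin_pos_q h0 h1) (cos_pos_q h0 h1)) (by linarith)

theorem nf_nonpos {a b x : ℝ} (h0 : 0 < x) (h1 : x < π / 2) (h : a * sin x ^ 2 ≤ b) :
    nf a b x ≤ 0 :=
  mul_nonpos_of_nonneg_of_nonpos (mul_pos (sin_pos_q h0 h1) (cos_pos_q h0 h1)).le (by linarith)

theorem of_nF_nonneg {a b x : ℝ} (hb : 0 < b) (h0 : 0 < x) (h1 : x < π / 2)
    (h : 0 ≤ nF a b x) : b < a * sin x ^ 2 := by
  have hs := sin_pos_q h0 h1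
  unfold nF at h
  by_contra hc
  push Not at hc
  have : 0 < sin x ^ 2 := by positivity
  nlinarith

theorem nF_le {a b x : ℝ} (hb : 0 < b) (h0 : 0 ≤ x) (h1 : x ≤ π / 2)
    (h : a * sin x ^ 2 ≤ b) : nF a b x ≤ -(b / π ^ 2) * x ^ 2 := by
  have hj := mul_le_sin h0 h1
  have hx : 0 ≤ 2 / π * x := by positivity
  have h2 : (2 / π * x) ^ 2 ≤ sin x ^ 2 := pow_le_pow_left₀ hx hj 2
  have h3 : (2 / π * x) ^ 2 = 4 * (x ^ 2 / π ^ 2) := by field_simp; ring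
  have h4 : -(b / π ^ 2) * x ^ 2 = - b * (x ^ 2 / π ^ 2) := by field_simp
  unfold nF
  rw [h4]
  rw [h3] at h2
  have : 0 ≤ sin x ^ 2 := by positivity
  nlinarith

theorem sin_gt_mul_cos {x : ℝ} (h0 : 0 < x) (h1 : x < π) : x * cos x < sin x := by
  rcases lt_or_ge x (π / 2) with h | h
  · have hc := cos_pos_of_mem_Ioo ⟨by linarith [pi_pos], h⟩
    have := lt_tan h0 h
    rw [tan_eq_sin_div_cos, lt_div_iff₀ hc] at this
    exact this
  · have hc : cos x ≤ 0 := cos_nonpos_of_pi_div_two_le_of_le h (by linarith [pi_pos])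
    have := sin_pos_of_pos_of_lt_pi h0 h1
    nlinarith

theorem I_pos_low {a b x l : ℝ} (ha : 0 < a) (hl : 1 ≤ l) (h0 : 0 < x) (h1 : x < π / 2)
    (h : a * sin x ^ 2 ≤ b) : 0 < x * nfd a b x - l * nf a b x := by
  have hs := sin_pos_q h0 h1
  have hc := cos_pos_q h0 h1
  have h2 := sin_gt_mul_cos (x := 2 * x) (by linarith) (by linarith)
  rw [sin_two_mul, cos_two_mul'] at h2
  have hq : 0 ≤ b - a * sin x ^ 2 := by linarith
  have h3 : 0 ≤ l * (sin x * cos x) - x * (cos x ^ 2 - sin x ^ 2) := by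
    have : 0 < sin x * cos x := mul_pos hs hc
    nlinarith
  have h4 : 0 < 2 * a * x * sin x ^ 2 * cos x ^ 2 := by positivity
  have h5 := mul_nonneg hq h3
  unfold nf nfd
  nlinarith

theorem xcot_anti {x y : ℝ} (h0 : 0 < x) (hxy : x < y) (h1 : y < π / 2) :
    y * (cos y / sin y) < x * (cos x / sin x) := by
  have key : StrictAntiOn (fun x : ℝ => x * (cos x / sin x)) (Set.Ioo 0 (π / 2)) := by
    apply strictAntiOn_of_deriv_neg (convex_Ioo _ _)
    · intro z hz
      have hs := sin_pos_q hz.1 hz.2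
      have : ContinuousAt (fun x : ℝ => x * (cos x / sin x)) z := by
        fun_prop (disch := exact hs.ne')
      exact this.continuousWithinAt
    · intro z hz
      rw [interior_Ioo] at hz
      have hs := sin_pos_q hz.1 hz.2
      have hd := (hasDerivAt_id z).mul ((hasDerivAt_cos z).div (hasDerivAt_sin z) hs.ne')
      have hd' : HasDerivAt (fun x : ℝ => x * (cos x / sin x)) _ z := hd
      rw [hd'.deriv]
      have h2 := sin_lt (x := 2 * z) (by linarith [hz.1])
      rw [sin_two_mul] at h2
      have h3 := sin_sq_add_cos_sq z
      simp only [id, one_mul, Pi.div_apply]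
      have : cos z / sin z + z * ((-sin z * sin z - cos z * cos z) / sin z ^ 2)
          = (sin z * cos z - z) / sin z ^ 2 := by
        field_simp
        linear_combination (-z) * h3
      rw [this]
      apply div_neg_of_neg_of_pos <;> [linarith; positivity]
  exact key ⟨h0, hxy.trans h1⟩ ⟨h0.trans hxy, h1⟩ hxy

theorem I_neg_prop {a b l y z : ℝ} (ha : 0 < a) (hb : 0 < b) (hl : 1 ≤ l) (h0 : 0 < y)
    (hyz : y < z) (h1 : z < π / 2) (hI : y * nfd a b y - l * nf a b y ≤ 0) :
    z * nfd a b z - l * nf a b z < 0 := by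
  have hy1 : y < π / 2 := hyz.trans h1
  have hz0 := h0.trans hyz
  have hqy : b < a * sin y ^ 2 := by
    by_contra hc
    push Not at hc
    linarith [I_pos_low ha hl h0 hy1 hc]
  have hsy := sin_pos_q h0 hy1
  have hcy := cos_pos_q h0 hy1
  have hsz := sin_pos_q hz0 h1
  have hcz := cos_pos_q hz0 h1
  have hss : sin y < sin z := sin_lt_sin_of_lt_of_le_pi_div_two (by linarith [pi_pos]) h1.le hyz
  have hcc : cos z < cos y := cos_lt_cos_of_nonneg_of_le_pi_div_two h0.le h1.le hyz
  have hs2 : sin y ^ 2 < sin z ^ 2 := pow_lt_pow_left₀ hss hsy.le (by norm_num)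
  have hqz : b < a * sin z ^ 2 := by nlinarith
  have hq : a * sin y ^ 2 - b < a * sin z ^ 2 - b := by nlinarith
  have hcot := xcot_anti h0 hyz h1
  have hKf : ∀ x, 0 < sin x → 0 < cos x → b < a * sin x ^ 2 →
      x * nfd a b x = nf a b x * (x * (cos x / sin x) - x * (sin x / cos x)
        + 2 * (x * (cos x / sin x)) * (1 + b / (a * sin x ^ 2 - b))) := by
    intro x hs hc hqx
    have hne : a * sin x ^ 2 - b ≠ 0 := by linarith
    unfold nf nfd
    obtain ⟨q, hq'⟩ : ∃ q, q = a * sin x ^ 2 - b := ⟨_, rfl⟩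
    rw [← hq'] at hne ⊢
    have e : 2 * a * sin x ^ 2 * cos x ^ 2 = 2 * (q + b) * cos x ^ 2 := by rw [hq']; ring
    rw [e]
    field_simp
  have hfy := nf_pos h0 hy1 hqy
  have hfz := nf_pos hz0 h1 hqz
  have ey := hKf y hsy hcy hqy
  have ez := hKf z hsz hcz hqz
  have htan : y * (sin y / cos y) < z * (sin z / cos z) := by
    apply mul_lt_mul hyz _ (by positivity) hz0.le
    rw [div_le_div_iff₀ hcy hcz]; nlinarith
  have hdiv : b / (a * sin z ^ 2 - b) ≤ b / (a * sin y ^ 2 - b) :=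
    div_le_div_of_nonneg_left hb.le (by linarith) hq.le
  have hpz : 0 < z * (cos z / sin z) := by positivity
  have hdz : 0 < b / (a * sin z ^ 2 - b) := div_pos hb (by linarith)
  have hprod : (z * (cos z / sin z)) * (1 + b / (a * sin z ^ 2 - b)) ≤
      (y * (cos y / sin y)) * (1 + b / (a * sin y ^ 2 - b)) :=
    mul_le_mul hcot.le (by linarith) (by linarith) (by linarith)
  rw [ey] at hI
  rw [ez]
  have hKy : (y * (cos y / sin y) - y * (sin y / cos y)
        + 2 * (y * (cos y / sin y)) * (1 + b / (a * sin y ^ 2 - b))) ≤ l := by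
    by_contra hc
    push Not at hc
    nlinarith
  have hKz : (z * (cos z / sin z) - z * (sin z / cos z)
        + 2 * (z * (cos z / sin z)) * (1 + b / (a * sin z ^ 2 - b))) < l := by
    nlinarith
  nlinarith

theorem nf_anti (a b : ℝ) (hb : 0 < b) (ε : ℝ) (hε : 0 < ε) :
    ∃ δ : ℝ, 0 < δ ∧ δ < ε ∧ StrictAntiOn (nf a b) (Set.Icc 0 δ) := by
  have h0 : nfd a b 0 < 0 := by simp [nfd, hb]
  have h1 : ∀ᶠ x in nhds (0:ℝ), nfd a b x < 0 :=
    (nfd_cont a b).continuousAt.eventually_lt continuousAt_const h0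
  obtain ⟨η, hη, h⟩ := Metric.eventually_nhds_iff.1 h1
  refine ⟨min (η / 2) (ε / 2), by positivity, (min_le_right _ _).trans_lt (by linarith), ?_⟩
  apply strictAntiOn_of_deriv_neg (convex_Icc _ _) (nf_cont a b).continuousOn
  intro x hx
  rw [interior_Icc] at hx
  rw [(hasDerivAt_nf a b x).deriv]
  apply h
  have := hx.2.trans_le (min_le_left _ _)
  rw [Real.dist_eq, sub_zero, abs_of_pos hx.1]
  linarith

theorem sd_right {g g' : ℝ → ℝ} {r0 c ε : ℝ} (hε : 0 < ε)
    (hg : ∀ r ∈ Set.Ico r0 (r0 + ε), HasDerivAt g (g' r) r) (h0 : g' r0 = 0)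
    (hc : HasDerivAt g' c r0) (hmin : ∀ r ∈ Set.Ioo r0 (r0 + ε), g r0 ≤ g r) : 0 ≤ c := by
  by_contra hneg
  push Not at hneg
  have h1 := (hasDerivAt_iff_tendsto_slope.1 hc).eventually_lt_const hneg
  have h2 : ∀ᶠ r in nhdsWithin r0 (Set.Ioi r0), slope g' r0 r < 0 :=
    h1.filter_mono (nhdsWithin_mono _ (fun x hx => ne_of_gt hx))
  obtain ⟨s, hs, h3⟩ := mem_nhdsGT_iff_exists_Ioo_subset.1 h2
  have hs' : r0 < s := hs
  set t := min s (r0 + ε) with ht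
  have hrt : r0 < t := lt_min hs' (by linarith)
  set m := (r0 + t) / 2 with hm
  have hm1 : r0 < m := by rw [hm]; linarith
  have hm2 : m < t := by rw [hm]; linarith
  have hts : t ≤ s := min_le_left _ _
  have hte : t ≤ r0 + ε := min_le_right _ _
  have : StrictAntiOn g (Set.Icc r0 m) := by
    apply strictAntiOn_of_deriv_neg (convex_Icc _ _)
    · intro r hr
      exact (hg r ⟨hr.1, by linarith [hr.2]⟩).continuousAt.continuousWithinAt
    · intro r hr
      rw [interior_Icc] at hr
      rw [(hg r ⟨hr.1.le, by linarith [hr.2]⟩).deriv]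
      have h4 : slope g' r0 r < 0 := h3 ⟨hr.1, by linarith [hr.2]⟩
      rw [slope_def_field, h0, sub_zero] at h4
      have : 0 < r - r0 := by linarith [hr.1]
      rcases div_neg_iff.1 h4 with h | h <;> linarith [h.1, h.2]
  have h5 := this (Set.left_mem_Icc.2 hm1.le) (Set.right_mem_Icc.2 hm1.le) hm1
  linarith [hmin m ⟨hm1, by linarith⟩]

theorem sd_left {g g' : ℝ → ℝ} {r0 c ε : ℝ} (hε : 0 < ε)
    (hg : ∀ r ∈ Set.Ioc (r0 - ε) r0, HasDerivAt g (g' r) r) (h0 : g' r0 = 0)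
    (hc : HasDerivAt g' c r0) (hmin : ∀ r ∈ Set.Ioo (r0 - ε) r0, g r0 ≤ g r) : 0 ≤ c := by
  have hneg : ∀ r : ℝ, HasDerivAt (fun x : ℝ => -x) (-1) r := fun r => hasDerivAt_neg r
  refine sd_right (g := fun r => g (-r)) (g' := fun r => - g' (-r)) (r0 := -r0) hε ?_ ?_ ?_ ?_
  · intro r hr
    have := (hg (-r) ⟨by linarith [hr.2], by linarith [hr.1]⟩).comp r (hneg r)
    exact this.congr_deriv (by ring)
  · simp [h0]
  · have h := hc
    rw [← neg_neg r0] at h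
    have := (h.comp (-r0) (hneg (-r0))).neg
    exact this.congr_deriv (by ring)
  · intro r hr
    simp only [neg_neg]
    exact hmin (-r) ⟨by linarith [hr.2], by linarith [hr.1]⟩

/-- Interior local minimum. -/
theorem sd_min {g g' : ℝ → ℝ} {r0 c ε : ℝ} (hε : 0 < ε)
    (hg : ∀ r ∈ Set.Ioo (r0 - ε) (r0 + ε), HasDerivAt g (g' r) r)
    (hc : HasDerivAt g' c r0) (hmin : ∀ r ∈ Set.Ioo (r0 - ε) (r0 + ε), g r0 ≤ g r) :
    g' r0 = 0 ∧ 0 ≤ c := by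
  have h0 : g' r0 = 0 := by
    have hl : IsLocalMin g r0 := by
      filter_upwards [Ioo_mem_nhds (show r0 - ε < r0 by linarith) (show r0 < r0 + ε by linarith)]
        with r hr using hmin r hr
    exact hl.hasDerivAt_eq_zero (hg r0 ⟨by linarith, by linarith⟩)
  exact ⟨h0, sd_right hε (fun r hr => hg r ⟨by linarith [hr.1], hr.2⟩) h0 hc
    (fun r hr => hmin r ⟨by linarith [hr.1], hr.2⟩)⟩

def SolP (a b : ℝ) (n : ℕ) (U V : ℝ → ℝ) : Prop :=
  ∀ r, 0 < r → HasDerivAt U (V r) r ∧ HasDerivAt V (-(((n:ℝ) - 1) / r * V r) - nf a b (U r)) r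

structure Sol (a b : ℝ) (n : ℕ) (U V : ℝ → ℝ) : Prop where
  dU : ∀ r, HasDerivAt U (V r) r
  dV : ∀ r, 0 < r → HasDerivAt V (-(((n:ℝ) - 1) / r * V r) - nf a b (U r)) r
  dV0 : HasDerivAt V (-(nf a b (U 0) / n)) 0
  V0 : V 0 = 0

structure GS (a b : ℝ) (n : ℕ) (U V : ℝ → ℝ) : Prop extends Sol a b n U V where
  pos : ∀ r, 0 ≤ r → 0 < U r
  lt : ∀ r, 0 ≤ r → U r < π / 2
  lim : Tendsto U atTop (nhds 0)

theorem Sol.solP {a b n U V} (h : Sol a b n U V) : SolP a b n U V :=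
  fun r hr => ⟨h.dU r, h.dV r hr⟩

theorem Sol.contU {a b n U V} (h : Sol a b n U V) : Continuous U :=
  continuous_iff_continuousAt.2 fun r => (h.dU r).continuousAt

theorem Sol.contV {a b n U V} (h : Sol a b n U V) : ContinuousOn V (Set.Ici 0) := by
  intro r hr
  rcases eq_or_lt_of_le (show 0 ≤ r from hr) with h0 | h0
  · subst h0; exact h.dV0.continuousAt.continuousWithinAt
  · exact (h.dV r h0).continuousAt.continuousWithinAt

/-- Abstract Gronwall -/
theorem gron_abs {Q Q' : ℝ → ℝ} {C r s : ℝ} (hrs : r ≤ s) (hc : ContinuousOn Q (Set.Icc r s))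
    (hd : ∀ t ∈ Set.Ioo r s, HasDerivAt Q (Q' t) t) (hQ : ∀ t ∈ Set.Ioo r s, Q' t ≤ C * Q t) :
    Q s ≤ Q r * exp (C * (s - r)) := by
  have : AntitoneOn (fun t => Q t * exp (-(C * t))) (Set.Icc r s) := by
    apply antitoneOn_of_deriv_nonpos (convex_Icc _ _)
    · exact hc.mul (by fun_prop)
    · intro t ht
      rw [interior_Icc] at ht
      have h := (hd t ht).mul (((hasDerivAt_id t).const_mul C).neg.exp)
      exact h.differentiableAt.differentiableWithinAt
    · intro t ht
      rw [interior_Icc] at ht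
      have h := (hd t ht).mul (((hasDerivAt_id t).const_mul C).neg.exp)
      have h' : HasDerivAt (fun t => Q t * exp (-(C * t))) _ t := h
      rw [h'.deriv]
      have := hQ t ht
      have e := exp_pos (-(C * t))
      simp only [id, mul_one]
      have : Q' t * exp (-(C * t)) + Q t * (exp (-(C * t)) * -C) =
        (Q' t - C * Q t) * exp (-(C * t)) := by ring
      simp only [Pi.neg_apply] at *
      rw [this]
      exact mul_nonpos_of_nonpos_of_nonneg (by linarith) e.le
  have h := this (Set.left_mem_Icc.2 hrs) (Set.right_mem_Icc.2 hrs) hrs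
  simp only at h
  have e := exp_pos (C * s)
  have e1 : exp (-(C * s)) * exp (C * s) = 1 := by rw [← exp_add]; simp
  have e2 : exp (-(C * r)) * exp (C * s) = exp (C * (s - r)) := by rw [← exp_add]; ring_nf
  calc Q s = Q s * exp (-(C * s)) * exp (C * s) := by rw [mul_assoc, e1, mul_one]
    _ ≤ Q r * exp (-(C * r)) * exp (C * s) := mul_le_mul_of_nonneg_right h e.le
    _ = _ := by rw [mul_assoc, e2]

theorem SolP.dQ {a b n U V U' V'} (h : SolP a b n U V) (h' : SolP a b n U' V') (r : ℝ)
    (hr : 0 < r) : HasDerivAt (fun r => (U r - U' r) ^ 2 + (V r - V' r) ^ 2)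
      (2 * (U r - U' r) * (V r - V' r) - 2 * (((n:ℝ) - 1) / r) * (V r - V' r) ^ 2
        - 2 * (V r - V' r) * (nf a b (U r) - nf a b (U' r))) r := by
  have h1 := (((h r hr).1.sub (h' r hr).1).pow 2).add (((h r hr).2.sub (h' r hr).2).pow 2)
  refine HasDerivAt.congr_deriv h1 ?_
  simp only [Pi.sub_apply]
  norm_num
  ring

theorem Sol.gron {a b n U V U' V' K} (hn : 1 ≤ n) (h : Sol a b n U V) (h' : Sol a b n U' V')
    (hK0 : 0 < K) (hK : ∀ x y, |nf a b x - nf a b y| ≤ K * |x - y|) (r : ℝ) (hr : 0 ≤ r) :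
    (U r - U' r) ^ 2 + (V r - V' r) ^ 2 ≤ (U 0 - U' 0) ^ 2 * exp ((1 + K) * r) := by
  have := gron_abs (Q := fun r => (U r - U' r) ^ 2 + (V r - V' r) ^ 2) (C := 1 + K) hr ?_
    (fun t ht => h.solP.dQ h'.solP t ht.1) ?_
  · simpa [h.V0, h'.V0] using this
  · have c1 := h.contU
    have c2 := h'.contU
    have c3 := h.contV.mono (Set.Icc_subset_Ici_self : Set.Icc 0 r ⊆ _)
    have c4 := h'.contV.mono (Set.Icc_subset_Ici_self : Set.Icc 0 r ⊆ _)
    fun_prop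
  · intro t ht
    have h1 := hK (U t) (U' t)
    have h2 : 0 ≤ 2 * (((n:ℝ) - 1) / t) * (V t - V' t) ^ 2 := by
      have : (1:ℝ) ≤ n := by exact_mod_cast hn
      have : 0 ≤ ((n:ℝ) - 1) / t := div_nonneg (by linarith) ht.1.le
      positivity
    have h3 : -(2 * (V t - V' t) * (nf a b (U t) - nf a b (U' t))) ≤
        2 * |V t - V' t| * (K * |U t - U' t|) := by
      have := neg_abs_le ((V t - V' t) * (nf a b (U t) - nf a b (U' t)))
      rw [abs_mul] at this
      have := mul_le_mul_of_nonneg_left h1 (abs_nonneg (V t - V' t))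
      nlinarith
    have h4 : (U t - U' t) * (V t - V' t) ≤ |U t - U' t| * |V t - V' t| := by
      rw [← abs_mul]; exact le_abs_self _
    have e1 := sq_abs (U t - U' t)
    have e2 := sq_abs (V t - V' t)
    nlinarith [sq_nonneg (|U t - U' t| - |V t - V' t|)]

theorem SolP.cauchy {a b n U V U' V'} (hn : 1 ≤ n) (h : SolP a b n U V) (h' : SolP a b n U' V')
    {s : ℝ} (hs : 0 < s) (e1 : U s = U' s) (e2 : V s = V' s) (r : ℝ) (hr : 0 < r) :
    U r = U' r ∧ V r = V' r := by
  obtain ⟨K, hK0, hK⟩ := nf_lip a b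
  have hn' : (1:ℝ) ≤ n := by exact_mod_cast hn
  have hcont : ∀ t, 0 < t → ContinuousAt (fun r => (U r - U' r) ^ 2 + (V r - V' r) ^ 2) t :=
    fun t ht => (h.dQ h' t ht).continuousAt
  have main : (U r - U' r) ^ 2 + (V r - V' r) ^ 2 ≤ 0 := by
    have key : ∀ t, 0 < t → |2 * (U t - U' t) * (V t - V' t)
        - 2 * (V t - V' t) * (nf a b (U t) - nf a b (U' t))| ≤
        (1 + K) * ((U t - U' t) ^ 2 + (V t - V' t) ^ 2) := by
      intro t ht
      have h1 := hK (U t) (U' t)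
      have h3 : |(V t - V' t) * (nf a b (U t) - nf a b (U' t))| ≤
        |V t - V' t| * (K * |U t - U' t|) := by
        rw [abs_mul]; exact mul_le_mul_of_nonneg_left h1 (abs_nonneg (V t - V' t))
      have h4 : |(U t - U' t) * (V t - V' t)| = |U t - U' t| * |V t - V' t| := abs_mul _ _
      have e1 := sq_abs (U t - U' t)
      have e2 := sq_abs (V t - V' t)
      have h5 : 2 * (|U t - U' t| * |V t - V' t|) ≤ (U t - U' t) ^ 2 + (V t - V' t) ^ 2 := by
        nlinarith [sq_nonneg (|U t - U' t| - |V t - V' t|)]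
      calc _ = |2 * ((U t - U' t) * (V t - V' t))
            - 2 * ((V t - V' t) * (nf a b (U t) - nf a b (U' t)))| := by ring_nf
        _ ≤ _ := abs_sub _ _
        _ ≤ _ := by
          rw [abs_mul, abs_mul 2, abs_two]
          nlinarith
    rcases le_total s r with hsr | hsr
    · have := gron_abs (Q := fun r => (U r - U' r) ^ 2 + (V r - V' r) ^ 2) (C := 1 + K) hsr
        (fun t ht => (hcont t (by linarith [ht.1])).continuousWithinAt)
        (fun t ht => h.dQ h' t (by linarith [ht.1])) ?_
      · simpa [e1, e2] using this
      · intro t ht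
        have ht0 : 0 < t := hs.trans ht.1
        have h2 : 0 ≤ 2 * (((n:ℝ) - 1) / t) * (V t - V' t) ^ 2 := by
          have : 0 ≤ ((n:ℝ) - 1) / t := div_nonneg (by linarith) ht0.le
          positivity
        linarith [(abs_le.1 (key t ht0)).2]
    · have := gron_abs (Q := fun r => (U (-r) - U' (-r)) ^ 2 + (V (-r) - V' (-r)) ^ 2)
        (C := 1 + K + 2 * (((n:ℝ) - 1) / r)) (neg_le_neg hsr)
        (fun t ht => ?_)
        (fun t ht => (h.dQ h' (-t) (by linarith [ht.2])).comp t (hasDerivAt_neg t)) ?_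
      · simpa [e1, e2] using this
      · have : ContinuousAt ((fun r => (U r - U' r) ^ 2 + (V r - V' r) ^ 2) ∘ (fun t => -t)) t :=
          ContinuousAt.comp (hcont (-t) (by linarith [ht.2])) continuous_neg.continuousAt
        exact this.continuousWithinAt
      · intro t ht
        have ht0 : 0 < -t := by linarith [ht.2]
        have k := key (-t) ht0
        have h2 : ((n:ℝ) - 1) / (-t) ≤ ((n:ℝ) - 1) / r :=
          div_le_div_of_nonneg_left (by linarith) hr (by linarith [ht.2])
        have h3 : 2 * (((n:ℝ) - 1) / (-t)) * (V (-t) - V' (-t)) ^ 2 ≤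
            2 * (((n:ℝ) - 1) / r) * (V (-t) - V' (-t)) ^ 2 := by
          have := sq_nonneg (V (-t) - V' (-t))
          nlinarith
        have h4 : 0 ≤ 2 * (((n:ℝ) - 1) / r) * (U (-t) - U' (-t)) ^ 2 := by
          have : 0 ≤ ((n:ℝ) - 1) / r := div_nonneg (by linarith) hr.le
          positivity
        have := (abs_le.1 k).1
        linarith
  constructor
  · nlinarith [sq_nonneg (U r - U' r), sq_nonneg (V r - V' r)]
  · nlinarith [sq_nonneg (U r - U' r), sq_nonneg (V r - V' r)]

def En (a b : ℝ) (U V : ℝ → ℝ) (r : ℝ) : ℝ := V r ^ 2 / 2 + nF a b (U r)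

theorem SolP.dEn {a b n U V} (h : SolP a b n U V) (r : ℝ) (hr : 0 < r) :
    HasDerivAt (En a b U V) (-(((n:ℝ) - 1) / r * V r ^ 2)) r := by
  have h1 := (((h r hr).2.pow 2).div_const 2).add
    ((hasDerivAt_nF a b (U r)).comp r (h r hr).1)
  refine HasDerivAt.congr_deriv h1 ?_
  norm_num
  ring

theorem Sol.contEn {a b n U V} (h : Sol a b n U V) : ContinuousOn (En a b U V) (Set.Ici 0) := by
  have c1 := h.contV
  have c2 := h.contU
  have c3 := nF_cont a b
  unfold En
  fun_prop

theorem Sol.En_anti {a b n U V} (hn : 1 ≤ n) (h : Sol a b n U V) :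
    AntitoneOn (En a b U V) (Set.Ici 0) := by
  apply antitoneOn_of_deriv_nonpos (convex_Ici _) h.contEn
  · intro r hr
    rw [interior_Ici] at hr
    exact (h.solP.dEn r hr).differentiableAt.differentiableWithinAt
  · intro r hr
    rw [interior_Ici] at hr
    rw [(h.solP.dEn r hr).deriv]
    have : (1:ℝ) ≤ n := by exact_mod_cast hn
    have : 0 ≤ ((n:ℝ) - 1) / r := div_nonneg (by linarith) (le_of_lt hr)
    have := mul_nonneg this (sq_nonneg (V r))
    linarith

theorem GS.En_nonneg {a b n U V} (hn : 1 ≤ n) (h : GS a b n U V) (r : ℝ) (hr : 0 ≤ r) :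
    0 ≤ En a b U V r := by
  by_contra hneg
  push Not at hneg
  have h1 : Tendsto (fun r => nF a b (U r)) atTop (nhds 0) := by
    have := ((nF_cont a b).tendsto 0).comp h.lim
    simpa [nF, Function.comp_def] using this
  have h2 := h1.eventually (lt_mem_nhds hneg)
  obtain ⟨s, hs1, hs2⟩ := (h2.and (eventually_ge_atTop r)).exists
  have h3 := h.toSol.En_anti hn hr (hr.trans hs2) hs2
  unfold En at h3 hs1
  nlinarith [sq_nonneg (V s)]

theorem Sol.V_neg {a b n U V} (hn : 1 ≤ n) (hb : 0 < b) (h : Sol a b n U V) (hU0 : 0 < U 0)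
    (hU1 : U 0 < π / 2)
    (H : ∀ r, 0 ≤ r → (∀ s, 0 ≤ s → s ≤ r → V s ≤ 0) → 0 ≤ En a b U V r ∧ 0 < U r) :
    ∀ r, 0 < r → V r < 0 := by
  have hn' : (0:ℝ) < n := by exact_mod_cast hn
  have H0 := H 0 le_rfl (fun s h1 h2 => by
    have : s = 0 := le_antisymm h2 h1
    rw [this, h.V0])
  have hf0 : 0 < nf a b (U 0) := by
    apply nf_pos hU0 hU1 (of_nF_nonneg hb hU0 hU1 _)
    have := H0.1
    simpa [En, h.V0] using this
  have hd : -(nf a b (U 0) / n) < 0 := by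
    have := div_pos hf0 hn'
    linarith
  have hev := (hasDerivAt_iff_tendsto_slope.1 h.dV0).eventually_lt_const hd
  have hev2 : ∀ᶠ r in nhdsWithin 0 (Set.Ioi 0), slope V 0 r < 0 :=
    hev.filter_mono (nhdsWithin_mono _ (fun x hx => ne_of_gt hx))
  obtain ⟨ε, hε, h3⟩ := mem_nhdsGT_iff_exists_Ioo_subset.1 hev2
  have hε0 : 0 < ε := hε
  have hsmall : ∀ r, 0 < r → r < ε → V r < 0 := by
    intro r h0 h1
    have : slope V 0 r < 0 := h3 ⟨h0, h1⟩
    rw [slope_def_field, h.V0, sub_zero, sub_zero] at this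
    rcases div_neg_iff.1 this with h | h <;> linarith [h.1, h.2]
  intro r1 hr1
  by_contra hc
  push Not at hc
  have hεr : ε ≤ r1 := by
    by_contra hh
    push Not at hh
    linarith [hsmall r1 hr1 hh]
  have hcompact : IsCompact {r ∈ Set.Icc ε r1 | 0 ≤ V r} := by
    have hcl : IsClosed {r ∈ Set.Icc ε r1 | 0 ≤ V r} :=
      (isClosed_Icc).isClosed_le continuousOn_const
        (h.contV.mono fun x hx => (hε0.le.trans hx.1 : (0:ℝ) ≤ x))
    exact isCompact_Icc.of_isClosed_subset hcl (fun x hx => hx.1)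
  obtain ⟨s, ⟨hs1, hs2⟩, hs3⟩ := hcompact.exists_isLeast ⟨r1, ⟨hεr, le_rfl⟩, hc⟩
  have hs0 : 0 < s := hε0.trans_le hs1.1
  have hVlt : ∀ t, 0 < t → t < s → V t < 0 := by
    intro t h0 h1
    rcases lt_or_ge t ε with h2 | h2
    · exact hsmall t h0 h2
    · by_contra h4
      push Not at h4
      have := hs3 (a := t) ⟨⟨h2, by linarith [hs1.2]⟩, h4⟩
      linarith
  have hVs : V s = 0 := by
    refine le_antisymm ?_ hs2
    have hc := (h.dV s hs0).continuousAt
    have hc' : Tendsto V (nhdsWithin s (Set.Iio s)) (nhds (V s)) :=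
      hc.tendsto.mono_left nhdsWithin_le_nhds
    refine le_of_tendsto hc' ?_
    filter_upwards [Ioo_mem_nhdsLT hs0] with t ht
    exact (hVlt t ht.1 ht.2).le
  have hVle : ∀ t, 0 ≤ t → t ≤ s → V t ≤ 0 := by
    intro t h0 h1
    rcases eq_or_lt_of_le h0 with h2 | h2
    · rw [← h2, h.V0]
    · rcases eq_or_lt_of_le h1 with h4 | h4
      · rw [h4, hVs]
      · exact (hVlt t h2 h4).le
  obtain ⟨hE, hUs⟩ := H s hs0.le hVle
  have hUa : AntitoneOn U (Set.Icc 0 s) := by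
    apply antitoneOn_of_deriv_nonpos (convex_Icc _ _) h.contU.continuousOn
    · intro t _; exact (h.dU t).differentiableAt.differentiableWithinAt
    · intro t ht
      rw [interior_Icc] at ht
      rw [(h.dU t).deriv]; exact hVle t ht.1.le ht.2.le
  have hUs' : U s < π / 2 :=
    (hUa (Set.left_mem_Icc.2 hs0.le) (Set.right_mem_Icc.2 hs0.le) hs0.le).trans_lt hU1
  have hfs : 0 < nf a b (U s) := by
    apply nf_pos hUs hUs' (of_nF_nonneg hb hUs hUs' _)
    simpa [En, hVs] using hE
  have hds := h.dV s hs0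
  rw [hVs, mul_zero, neg_zero, zero_sub] at hds
  have hev := (hasDerivAt_iff_tendsto_slope.1 hds).eventually_lt_const (by linarith : - nf a b (U s) < 0)
  have hev2 : ∀ᶠ r in nhdsWithin s (Set.Iio s), slope V s r < 0 :=
    hev.filter_mono (nhdsWithin_mono _ (fun x hx => ne_of_lt hx))
  obtain ⟨t, ht1, ht2⟩ := (hev2.and (Ioo_mem_nhdsLT hs0)).exists
  rw [slope_def_field, hVs, sub_zero] at ht1
  have := hVlt t ht2.1 ht2.2
  rcases div_neg_iff.1 ht1 with h | h
  · linarith [h.1]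
  · linarith [h.2, ht2.2]

theorem GS.V_neg {a b n U V} (hn : 1 ≤ n) (hb : 0 < b) (h : GS a b n U V) :
    ∀ r, 0 < r → V r < 0 :=
  h.toSol.V_neg hn hb (h.pos 0 le_rfl) (h.lt 0 le_rfl)
    (fun r hr _ => ⟨h.En_nonneg hn r hr, h.pos r hr⟩)

theorem GS.anti {a b n U V} (hn : 1 ≤ n) (hb : 0 < b) (h : GS a b n U V) :
    StrictAntiOn U (Set.Ici 0) := by
  apply strictAntiOn_of_deriv_neg (convex_Ici _) h.contU.continuousOn
  intro r hr
  rw [interior_Ici] at hr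
  rw [(h.dU r).deriv]
  exact h.V_neg hn hb r hr

/-- logarithmic slope -/
def ly (U V : ℝ → ℝ) (r : ℝ) : ℝ := -(r * V r) / U r

def lN (a b : ℝ) (n : ℕ) (U V : ℝ → ℝ) (r : ℝ) : ℝ :=
  ly U V r ^ 2 - ((n:ℝ) - 2) * ly U V r + r ^ 2 * nf a b (U r) / U r

theorem GS.ly_pos {a b n U V} (hn : 1 ≤ n) (hb : 0 < b) (h : GS a b n U V) (r : ℝ) (hr : 0 < r) :
    0 < ly U V r := by
  have := h.V_neg hn hb r hr
  apply div_pos _ (h.pos r hr.le)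
  nlinarith

theorem GS.dly {a b n U V} (h : GS a b n U V) (r : ℝ) (hr : 0 < r) :
    HasDerivAt (ly U V) (lN a b n U V r / r) r := by
  have hU := h.pos r hr.le
  have h1 := (((hasDerivAt_id r).mul (h.dV r hr)).neg).div (h.dU r) hU.ne'
  refine HasDerivAt.congr_deriv h1 ?_
  unfold lN ly
  simp only [Pi.neg_apply, Pi.mul_apply, id]
  field_simp
  ring

theorem GS.contly {a b n U V} (h : GS a b n U V) : ContinuousOn (ly U V) (Set.Ici 0) := by
  have c1 := h.contV
  have c2 := h.contU
  unfold ly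
  refine ContinuousOn.div (by fun_prop) (by fun_prop) (fun r hr => (h.pos r hr).ne')

theorem GS.dlN {a b n U V} (h : GS a b n U V) (r : ℝ) (hr : 0 < r) :
    HasDerivAt (lN a b n U V) (((2 * ly U V r - ((n:ℝ) - 2)) * lN a b n U V r + r ^ 2 *
      (2 * nf a b (U r) - ly U V r * (U r * nfd a b (U r) - nf a b (U r))) / U r) / r) r := by
  have hU := h.pos r hr.le
  have hy := h.dly r hr
  have hf := (hasDerivAt_nf a b (U r)).comp r (h.dU r)
  have h1 := ((hy.pow 2).sub (hy.const_mul ((n:ℝ) - 2))).add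
    ((((hasDerivAt_id r).pow 2).mul hf).div (h.dU r) hU.ne')
  refine HasDerivAt.congr_deriv h1 ?_
  have e : V r = - (ly U V r) * U r / r := by unfold ly; field_simp
  simp only [Pi.pow_apply, Pi.mul_apply, id, Function.comp]
  rw [e]
  field_simp
  norm_num
  ring

/-- f(x) <= 0 region for small U -/
theorem GS.tail {a b n U V} (hn : 1 ≤ n) (ha : 0 < a) (hb : 0 < b) (h : GS a b n U V) :
    ∃ R, 0 < R ∧ ∀ r, R ≤ r → a * sin (U r) ^ 2 ≤ b := by
  have h1 : Tendsto (fun r => a * sin (U r) ^ 2) atTop (nhds 0) := by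
    have : Continuous fun x : ℝ => a * sin x ^ 2 := by fun_prop
    have := (this.tendsto 0).comp h.lim
    simpa [Function.comp_def] using this
  obtain ⟨R, hR⟩ := eventually_atTop.1 (h1.eventually (gt_mem_nhds hb))
  exact ⟨max R 1, by positivity, fun r hr => (hR r ((le_max_left _ _).trans hr)).le⟩

theorem GS.ly_ge {a b n U V} (hn : 1 ≤ n) (ha : 0 < a) (hb : 0 < b) (h : GS a b n U V) :
    ∃ R c, 0 < R ∧ 0 < c ∧ ∀ r, R ≤ r → c * r ≤ ly U V r := by
  obtain ⟨R, hR0, hR⟩ := h.tail hn ha hb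
  refine ⟨R, sqrt (2 * b / π ^ 2), hR0, by positivity, fun r hr => ?_⟩
  have hr0 := hR0.trans_le hr
  have hU := h.pos r hr0.le
  have h1 := nF_le hb hU.le (h.lt r hr0.le).le (hR r hr)
  have h2 := h.En_nonneg hn r hr0.le
  have hV := h.V_neg hn hb r hr0
  unfold En at h2
  have h3 : (2 * b / π ^ 2) * U r ^ 2 ≤ (-V r) ^ 2 := by
    have : (2 * b / π ^ 2) * U r ^ 2 = 2 * (b / π ^ 2 * U r ^ 2) := by ring
    rw [this]; nlinarith
  have h4 : sqrt (2 * b / π ^ 2) * U r ≤ - V r := by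
    apply le_of_sq_le_sq _ (by linarith) |> fun h => h
    rw [mul_pow, sq_sqrt (by positivity)]
    exact h3
  unfold ly
  rw [le_div_iff₀ hU]
  nlinarith

theorem GS.ly_top {a b n U V} (hn : 1 ≤ n) (ha : 0 < a) (hb : 0 < b) (h : GS a b n U V) :
    Tendsto (ly U V) atTop atTop := by
  obtain ⟨R, c, hR, hc, H⟩ := h.ly_ge hn ha hb
  refine tendsto_atTop_mono' _ ?_ (tendsto_id.const_mul_atTop hc)
  filter_upwards [eventually_ge_atTop R] with r hr using H r hr

def Hp (a b : ℝ) (k : ℕ) (c : ℝ) (U V : ℝ → ℝ) (r : ℝ) : ℝ :=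
  r ^ (k+3) * (V r ^ 2 / 2 + (nF a b (U r) + c)) + ((k:ℝ)+1)/2 * (r ^ (k+2) * (U r * V r))

def Bp (a b : ℝ) (k : ℕ) (c : ℝ) (x : ℝ) : ℝ :=
  ((k:ℝ)+3) * (nF a b x + c) - ((k:ℝ)+1)/2 * (x * nf a b x)

theorem dHp {a b k c U V} (h : Sol a b (k+3) U V) (r : ℝ) (hr : 0 < r) :
    HasDerivAt (Hp a b k c U V) (r ^ (k+2) * Bp a b k c (U r)) r := by
  have hV := h.dV r hr
  have hU := h.dU r
  have h1 := ((hasDerivAt_pow (k+3) r).mul (((hV.pow 2).div_const 2).add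
    (((hasDerivAt_nF a b (U r)).comp r hU).add_const c))).add
    (((hasDerivAt_pow (k+2) r).mul (hU.mul hV)).const_mul (((k:ℝ)+1)/2))
  refine HasDerivAt.congr_deriv h1 ?_
  unfold Bp
  simp only [Pi.pow_apply, Pi.mul_apply, Pi.add_apply, Function.comp]
  push_cast
  field_simp
  norm_num
  ring

theorem dBp (a b : ℝ) (k : ℕ) (c x : ℝ) :
    HasDerivAt (Bp a b k c) (-(((k:ℝ)+1)/2) * (x * nfd a b x - ((k:ℝ)+5)/((k:ℝ)+1) * nf a b x)) x := by
  have h1 := (((hasDerivAt_nF a b x).add_const c).const_mul ((k:ℝ)+3)).sub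
    (((hasDerivAt_id x).mul (hasDerivAt_nf a b x)).const_mul (((k:ℝ)+1)/2))
  refine HasDerivAt.congr_deriv h1 ?_
  simp only [id]
  field_simp
  ring

theorem GS.lN_pos {a b n U V} (hn : 1 ≤ n) (ha : 0 < a) (hb : 0 < b) (h : GS a b n U V)
    (r : ℝ) (hr : 0 < r) (hs : b < a * sin (U r) ^ 2) : 0 < lN a b n U V r := by
  have hU := h.pos r hr.le
  have hU1 := h.lt r hr.le
  have hf := nf_pos hU hU1 hs
  have hy := h.ly_pos hn hb r hr
  have hg : 0 < r ^ 2 * nf a b (U r) / U r := by positivity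
  by_contra hN
  push Not at hN
  rcases Nat.lt_or_ge n 3 with hn3 | hn3
  · have : (n:ℝ) ≤ 2 := by exact_mod_cast (by omega : n ≤ 2)
    unfold lN at hN
    nlinarith
  obtain ⟨k, rfl⟩ : ∃ k, n = k + 3 := ⟨n - 3, by omega⟩
  have hk : (0:ℝ) ≤ k := Nat.cast_nonneg k
  set y := ly U V r with hyd
  have hVe : V r = - y * U r / r := by rw [hyd]; unfold ly; field_simp
  have hg2 : r ^ 2 * nf a b (U r) / U r ≤ y * ((k:ℝ) + 1 - y) := by
    unfold lN at hN
    push_cast at hN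
    rw [← hyd] at hN
    linarith
  have hneg : ∀ c, Bp a b k c (U r) ≤ 0 → Hp a b k c U V r < 0 := by
    intro c hB
    unfold Bp at hB
    have hF : nF a b (U r) + c ≤ ((k:ℝ)+1)/2 * (U r * nf a b (U r)) / ((k:ℝ)+3) := by
      rw [le_div_iff₀ (by positivity)]; linarith
    have hF2 : ((k:ℝ)+1)/2 * (U r * nf a b (U r)) / ((k:ℝ)+3) =
       U r ^ 2 / r ^ 2 * (((k:ℝ)+1)/(2 * (k+3)) * (r ^ 2 * nf a b (U r) / U r)) := by
      field_simp
    have hF3 : nF a b (U r) + c ≤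
       U r ^ 2 / r ^ 2 * (((k:ℝ)+1)/(2 * (k+3)) * (y * ((k:ℝ) + 1 - y))) := by
      rw [hF2] at hF
      refine hF.trans ?_
      gcongr
    have e : Hp a b k c U V r = r ^ (k+3) * (V r ^ 2 / 2 + (nF a b (U r) + c)
        - ((k:ℝ)+1)/2 * y * (U r ^ 2 / r ^ 2)) := by
      unfold Hp
      rw [hVe]
      field_simp
      ring
    rw [e]
    apply mul_neg_of_pos_of_neg (by positivity)
    have e2 : V r ^ 2 = U r ^ 2 / r ^ 2 * y ^ 2 := by rw [hVe]; field_simp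
    have hq : 0 < U r ^ 2 / r ^ 2 := by positivity
    have hyy : 0 < y * ((k:ℝ) + 1 - y) := hg.trans_le hg2
    have e3 : ((k:ℝ)+1)/(2 * (k+3)) = 1/2 - 1/((k:ℝ)+3) := by field_simp; ring
    have hk3 : 0 < 1/((k:ℝ)+3) := by positivity
    rw [e3] at hF3
    rw [e2]
    have := mul_pos hq (mul_pos hk3 hyy)
    nlinarith
  have hl : (1:ℝ) ≤ ((k:ℝ)+5)/((k:ℝ)+1) := by
    rw [le_div_iff₀ (by positivity)]; linarith
  have hcH : ∀ c, ContinuousOn (Hp a b k c U V) (Set.Ici 0) := by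
    intro c
    have c1 := h.contV
    have c2 := h.contU
    have c3 := nF_cont a b
    unfold Hp
    fun_prop
  have hcB : ∀ c, Continuous (Bp a b k c) := fun c =>
    continuous_iff_continuousAt.2 fun x => (dBp a b k c x).continuousAt
  have hUa := h.anti hn hb
  rcases le_or_gt (U r * nfd a b (U r) - ((k:ℝ)+5)/((k:ℝ)+1) * nf a b (U r)) 0 with hI | hI
  · obtain ⟨c, hc⟩ : ∃ c, Bp a b k c (U r) = 0 := by
      refine ⟨((k:ℝ)+1)/2 * (U r * nf a b (U r)) / ((k:ℝ)+3) - nF a b (U r), ?_⟩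
      unfold Bp; field_simp; ring
    have hBm : MonotoneOn (Bp a b k c) (Set.Ico (U r) (π / 2)) := by
      apply monotoneOn_of_deriv_nonneg (convex_Ico _ _) (hcB c).continuousOn
      · intro x _; exact (dBp a b k c x).differentiableAt.differentiableWithinAt
      · intro x hx
        rw [interior_Ico] at hx
        rw [(dBp a b k c x).deriv]
        have := I_neg_prop ha hb hl hU hx.1 hx.2 hI
        nlinarith
    have hHm : MonotoneOn (Hp a b k c U V) (Set.Icc 0 r) := by
      apply monotoneOn_of_deriv_nonneg (convex_Icc _ _) ((hcH c).mono Set.Icc_subset_Ici_self)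
      · intro x hx
        rw [interior_Icc] at hx
        exact (dHp h.toSol x hx.1).differentiableAt.differentiableWithinAt
      · intro x hx
        rw [interior_Icc] at hx
        rw [(dHp h.toSol x hx.1).deriv]
        have h1 := hUa (show x ∈ Set.Ici 0 from hx.1.le) (show r ∈ Set.Ici 0 from hr.le) hx.2
        have := hBm ⟨le_rfl, hU1⟩ ⟨h1.le, h.lt x hx.1.le⟩ h1.le
        rw [hc] at this
        exact mul_nonneg (pow_nonneg hx.1.le _) this
    have h1 := hHm (Set.left_mem_Icc.2 hr.le) (Set.right_mem_Icc.2 hr.le) hr.le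
    have h2 := hneg c hc.le
    have h3 : Hp a b k c U V 0 = 0 := by simp [Hp]
    linarith
  · have hBm : AntitoneOn (Bp a b k 0) (Set.Icc 0 (U r)) := by
      apply antitoneOn_of_deriv_nonpos (convex_Icc _ _) (hcB 0).continuousOn
      · intro x _; exact (dBp a b k 0 x).differentiableAt.differentiableWithinAt
      · intro x hx
        rw [interior_Icc] at hx
        rw [(dBp a b k 0 x).deriv]
        have : 0 < x * nfd a b x - ((k:ℝ)+5)/((k:ℝ)+1) * nf a b x := by
          by_contra hc
          push Not at hc
          linarith [I_neg_prop ha hb hl hx.1 hx.2 hU1 hc]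
        nlinarith
    have hB0 : Bp a b k 0 0 = 0 := by simp [Bp, nF]
    have hBn : ∀ x, 0 ≤ x → x ≤ U r → Bp a b k 0 x ≤ 0 := by
      intro x h0 h1
      have := hBm ⟨le_rfl, hU.le⟩ ⟨h0, h1⟩ h0
      linarith
    have hHm : AntitoneOn (Hp a b k 0 U V) (Set.Ici r) := by
      apply antitoneOn_of_deriv_nonpos (convex_Ici _)
        ((hcH 0).mono (Set.Ici_subset_Ici.2 hr.le))
      · intro x hx
        rw [interior_Ici] at hx
        exact (dHp h.toSol x (hr.trans hx)).differentiableAt.differentiableWithinAt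
      · intro x hx
        rw [interior_Ici] at hx
        have hx0 : 0 < x := hr.trans hx
        rw [(dHp h.toSol x hx0).deriv]
        have h1 := hUa (show r ∈ Set.Ici 0 from hr.le) (show x ∈ Set.Ici 0 from hx0.le) hx
        exact mul_nonpos_of_nonneg_of_nonpos (pow_nonneg hx0.le _) (hBn _ (h.pos x hx0.le).le h1.le)
    have h2 := hneg 0 (hBn _ hU.le le_rfl)
    obtain ⟨R, hR0, hR⟩ := h.tail hn ha hb
    have hd : ∀ x, 0 < x → HasDerivAt (fun x => x ^ (k+2) * V x) (-(x ^ (k+2) * nf a b (U x))) x := by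
      intro x hx
      have h1 := (hasDerivAt_pow (k+2) x).mul (h.dV x hx)
      refine HasDerivAt.congr_deriv h1 ?_
      push_cast
      field_simp
      ring
    have hm : MonotoneOn (fun x => x ^ (k+2) * V x) (Set.Ici R) := by
      apply monotoneOn_of_deriv_nonneg (convex_Ici _)
      · intro x hx
        exact (hd x (hR0.trans_le hx)).continuousAt.continuousWithinAt
      · intro x hx
        rw [interior_Ici] at hx
        exact (hd x (hR0.trans hx)).differentiableAt.differentiableWithinAt
      · intro x hx
        rw [interior_Ici] at hx
        have hx0 : 0 < x := hR0.trans hx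
        rw [(hd x hx0).deriv]
        have := nf_nonpos (h.pos x hx0.le) (h.lt x hx0.le) (hR x (le_of_lt hx))
        have := mul_nonpos_of_nonneg_of_nonpos (pow_nonneg hx0.le (k+2)) this
        linarith
    have hlim : Tendsto (fun x => ((k:ℝ)+1)/2 * (R ^ (k+2) * V R) * U x) atTop (nhds 0) := by
      have := h.lim.const_mul (((k:ℝ)+1)/2 * (R ^ (k+2) * V R))
      simpa using this
    obtain ⟨x, ⟨hx1, hx2⟩, hx3⟩ := ((hlim.eventually (lt_mem_nhds h2)).and
      (eventually_ge_atTop r)).and (eventually_ge_atTop R) |>.exists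
    have h3 := hHm (Set.self_mem_Ici) hx2 hx2
    have h4 : R ^ (k+2) * V R ≤ x ^ (k+2) * V x := hm (Set.self_mem_Ici) hx3 hx3
    have hx0 := hr.le.trans hx2
    have h5 := h.En_nonneg hn x hx0
    have h6 := mul_nonneg (pow_nonneg hx0 (k+3)) h5
    have h7 := mul_le_mul_of_nonneg_right h4 (h.pos x hx0).le
    have h8 := mul_le_mul_of_nonneg_left h7 (show 0 ≤ ((k:ℝ)+1)/2 by positivity)
    unfold En at h6
    have e : Hp a b k 0 U V x = x ^ (k+3) * (V x ^ 2 / 2 + nF a b (U x)) +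
      ((k:ℝ)+1)/2 * (x ^ (k+2) * V x * U x) := by unfold Hp; ring
    rw [e] at h3
    nlinarith

theorem GS.ly_mono {a b n U V} (hn : 1 ≤ n) (ha : 0 < a) (hb : 0 < b) (h : GS a b n U V) :
    StrictMonoOn (ly U V) (Set.Ioi 0) := by
  intro r1 hr1 r2 hr2 h12
  by_contra hc
  push Not at hc
  have hr1' : 0 < r1 := hr1
  obtain ⟨R, hR1, hR2⟩ := (((h.ly_top hn ha hb).eventually_gt_atTop (ly U V r1)).and
    (eventually_gt_atTop r2)).exists
  have hcont : ContinuousOn (ly U V) (Set.Icc r1 R) :=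
    h.contly.mono fun x hx => (hr1'.le.trans hx.1 : (0:ℝ) ≤ x)
  obtain ⟨m, hm1, hm2⟩ := isCompact_Icc.exists_isMinOn ⟨r1, le_rfl, by linarith⟩ hcont
  obtain ⟨m, ⟨hm1, hm1'⟩, hm2⟩ : ∃ m ∈ Set.Ioo r1 R, ∀ r ∈ Set.Icc r1 R, ly U V m ≤ ly U V r := by
    have hm2' : ∀ r ∈ Set.Icc r1 R, ly U V m ≤ ly U V r := fun r hr => hm2 hr
    rcases eq_or_lt_of_le hm1.1 with e | e
    · refine ⟨r2, ⟨h12, hR2⟩, fun r hr => hc.trans ?_⟩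
      rw [e]; exact hm2' r hr
    · refine ⟨m, ⟨e, lt_of_le_of_ne hm1.2 ?_⟩, hm2'⟩
      rintro rfl
      linarith [hm2' r2 ⟨h12.le, hR2.le⟩]
  have hm0 : 0 < m := hr1'.trans hm1
  obtain ⟨ε, hε, hεs⟩ : ∃ ε > 0, Set.Ioo (m - ε) (m + ε) ⊆ Set.Icc r1 R := by
    refine ⟨min (m - r1) (R - m), lt_min (by linarith) (by linarith), fun x hx => ⟨?_, ?_⟩⟩
    · linarith [hx.1, min_le_left (m - r1) (R - m)]
    · linarith [hx.2, min_le_right (m - r1) (R - m)]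
  have hd := (h.dlN m hm0).div (hasDerivAt_id m) hm0.ne'
  have := sd_min (g := ly U V) (g' := fun r => lN a b n U V r / r) hε
    (fun r hr => h.dly r (hr1'.trans_le (hεs hr).1)) hd (fun r hr => hm2 r (hεs hr))
  obtain ⟨hN, hge⟩ := this
  have hN0 : lN a b n U V m = 0 := by
    rcases div_eq_zero_iff.1 hN with h | h
    · exact h
    · exact absurd h hm0.ne'
  have hU := h.pos m hm0.le
  have hU1 := h.lt m hm0.le
  have hs : a * sin (U m) ^ 2 ≤ b := by
    by_contra hs
    push Not at hs
    linarith [h.lN_pos hn ha hb m hm0 hs]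
  have hf := nf_nonpos hU hU1 hs
  have hI := I_pos_low ha le_rfl hU hU1 hs
  have hy := h.ly_pos hn hb m hm0
  rw [hN0] at hge
  simp only [mul_zero, zero_add, id, zero_mul, sub_zero] at hge
  have : m ^ 2 * (2 * nf a b (U m) - ly U V m * (U m * nfd a b (U m) - nf a b (U m))) / U m < 0 := by
    apply div_neg_of_neg_of_pos _ hU
    apply mul_neg_of_pos_of_neg (by positivity)
    nlinarith
  have h2 : m ^ 2 * (2 * nf a b (U m) - ly U V m * (U m * nfd a b (U m) - nf a b (U m))) / U m / m * m / m ^ 2 < 0 := by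
    apply div_neg_of_neg_of_pos _ (by positivity)
    apply mul_neg_of_neg_of_pos _ hm0
    exact div_neg_of_neg_of_pos this hm0
  linarith

theorem GS.tip {a b n U V} (hn : 1 ≤ n) (ha : 0 < a) (hb : 0 < b) (h : GS a b n U V) (θ : ℝ)
    (hθ : 0 < θ) : ∃ t, 0 < t ∧ ly U V t = θ ∧ ∀ r, 0 < r → r ≠ t →
      log (U r) + θ * log r < log (U t) + θ * log t := by
  obtain ⟨R, hR1, hR2⟩ := (((h.ly_top hn ha hb).eventually_ge_atTop θ).and
    (eventually_gt_atTop 0)).exists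
  have h0 : ly U V 0 = 0 := by simp [ly]
  obtain ⟨t, ht, hte⟩ := intermediate_value_Icc hR2.le
    (h.contly.mono (Set.Icc_subset_Ici_self)) (show θ ∈ Set.Icc _ _ from ⟨by rw [h0]; exact hθ.le, hR1⟩)
  have ht0 : 0 < t := by
    rcases eq_or_lt_of_le ht.1 with e | e
    · rw [← e, h0] at hte; linarith
    · exact e
  have hd : ∀ r, 0 < r → HasDerivAt (fun r => log (U r) + θ * log r) ((θ - ly U V r) / r) r := by
    intro r hr
    have hU := h.pos r hr.le
    have h1 := ((h.dU r).log hU.ne').add ((hasDerivAt_log hr.ne').const_mul θ)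
    refine HasDerivAt.congr_deriv h1 ?_
    unfold ly; field_simp; ring
  refine ⟨t, ht0, hte, fun r hr hrt => ?_⟩
  have hmono := h.ly_mono hn ha hb
  rcases lt_or_gt_of_ne hrt with hlt | hlt
  · have : StrictMonoOn (fun r => log (U r) + θ * log r) (Set.Icc r t) := by
      apply strictMonoOn_of_deriv_pos (convex_Icc _ _)
      · intro x hx
        exact (hd x (hr.trans_le hx.1)).continuousAt.continuousWithinAt
      · intro x hx
        rw [interior_Icc] at hx
        have hx0 := hr.trans hx.1
        rw [(hd x hx0).deriv]
        have := hmono (show x ∈ Set.Ioi 0 from hx0) (show t ∈ Set.Ioi 0 from ht0) hx.2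
        apply div_pos _ hx0
        linarith
    exact this (Set.left_mem_Icc.2 hlt.le) (Set.right_mem_Icc.2 hlt.le) hlt
  · have : StrictAntiOn (fun r => log (U r) + θ * log r) (Set.Icc t r) := by
      apply strictAntiOn_of_deriv_neg (convex_Icc _ _)
      · intro x hx
        exact (hd x (ht0.trans_le hx.1)).continuousAt.continuousWithinAt
      · intro x hx
        rw [interior_Icc] at hx
        have hx0 := ht0.trans hx.1
        rw [(hd x hx0).deriv]
        have := hmono (show t ∈ Set.Ioi 0 from ht0) (show x ∈ Set.Ioi 0 from hx0) hx.1
        apply div_neg_of_neg_of_pos _ hx0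
        linarith
    exact this (Set.left_mem_Icc.2 hlt.le) (Set.right_mem_Icc.2 hlt.le) hlt

theorem GS.exists_M {a b n U V} (hn : 1 ≤ n) (ha : 0 < a) (hb : 0 < b) (h : GS a b n U V) :
    ∃ t : ℝ → ℝ, (∀ θ, 0 < θ → 0 < t θ ∧ ly U V (t θ) = θ ∧ ∀ r, 0 < r → r ≠ t θ →
      log (U r) + θ * log r < log (U (t θ)) + θ * log (t θ)) ∧
      ContinuousOn (fun θ => log (U (t θ)) + θ * log (t θ)) (Set.Ioi 0) := by
  have H := fun θ : ℝ => fun hθ : 0 < θ => h.tip hn ha hb θ hθ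
  choose! t ht using H
  refine ⟨t, ht, ?_⟩
  have hle : ∀ θ, 0 < θ → ∀ r, 0 < r →
      log (U r) + θ * log r ≤ log (U (t θ)) + θ * log (t θ) := by
    intro θ hθ r hr
    rcases eq_or_ne r (t θ) with e | e
    · rw [e]
    · exact ((ht θ hθ).2.2 r hr e).le
  have hconv : ConvexOn ℝ (Set.Ioi (0:ℝ)) (fun θ => log (U (t θ)) + θ * log (t θ)) := by
    refine ⟨convex_Ioi 0, ?_⟩
    intro x hx y hy p q hp hq hpq
    have hxy : p • x + q • y ∈ Set.Ioi (0:ℝ) := convex_Ioi 0 hx hy hp hq hpq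
    have hz := ht _ hxy
    simp only [smul_eq_mul] at *
    have h1 := hle x hx _ hz.1
    have h2 := hle y hy _ hz.1
    set τ := t (p * x + q * y)
    have h3 := mul_le_mul_of_nonneg_left h1 hp
    have h4 := mul_le_mul_of_nonneg_left h2 hq
    have h5 : log (U τ) = p * log (U τ) + q * log (U τ) := by rw [← add_mul, hpq, one_mul]
    linarith
  exact hconv.continuousOn isOpen_Ioi

def jj (a b θ x : ℝ) : ℝ := nf a b x * x ^ (-(1 + 2 / θ))

theorem jj_cmp {a b θ μ w y : ℝ} (hθ : 0 < θ) (hμ : 0 < μ) (hy : 0 < y) (hw : w = μ ^ θ * y) :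
    jj a b θ w < jj a b θ y ↔ nf a b w < μ ^ θ * μ ^ 2 * nf a b y := by
  have hP : 0 < μ ^ θ := rpow_pos_of_pos hμ θ
  have hw0 : 0 < w := by rw [hw]; positivity
  have e : w ^ (-(1 + 2 / θ)) * (μ ^ θ * μ ^ 2) = y ^ (-(1 + 2 / θ)) := by
    have e1 : (μ ^ θ) ^ (-(1 + 2 / θ)) * (μ ^ θ * μ ^ 2) = 1 := by
      rw [← rpow_mul hμ.le, ← rpow_natCast μ 2, ← rpow_add hμ, ← rpow_add hμ]
      have : θ * -(1 + 2 / θ) + (θ + ((2:ℕ):ℝ)) = 0 := by field_simp; norm_num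
      rw [this, rpow_zero]
    rw [hw, mul_rpow hP.le hy.le]
    calc _ = ((μ ^ θ) ^ (-(1 + 2 / θ)) * (μ ^ θ * μ ^ 2)) * y ^ (-(1 + 2 / θ)) := by ring
      _ = _ := by rw [e1, one_mul]
  unfold jj
  rw [← e]
  have hp := rpow_pos_of_pos hw0 (-(1 + 2 / θ))
  constructor
  · intro h
    by_contra hc
    push Not at hc
    have := mul_le_mul_of_nonneg_right hc hp.le
    linarith
  · intro h
    have := mul_lt_mul_of_pos_right h hp
    linarith

theorem jj_deriv {a b θ x : ℝ} (hx : 0 < x) :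
    HasDerivAt (jj a b θ) (x ^ (-(1 + 2 / θ) - 1) * (x * nfd a b x - (1 + 2 / θ) * nf a b x)) x := by
  have h1 := (hasDerivAt_nf a b x).mul (hasDerivAt_rpow_const (p := -(1 + 2 / θ)) (Or.inl hx.ne'))
  refine HasDerivAt.congr_deriv h1 ?_
  have : x ^ (-(1 + 2 / θ)) = x ^ (-(1 + 2 / θ) - 1) * x := by
    rw [← rpow_add_one hx.ne']; ring_nf
  rw [this]; ring

theorem jj_qc {a b θ x y z : ℝ} (ha : 0 < a) (hb : 0 < b) (hθ : 0 < θ) (hx : 0 < x) (hxy : x < y)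
    (hyz : y < z) (hz : z < π / 2) : jj a b θ x < jj a b θ y ∨ jj a b θ z < jj a b θ y := by
  rcases lt_or_ge (jj a b θ x) (jj a b θ y) with h | h
  · exact Or.inl h
  right
  have hl : (1:ℝ) ≤ 1 + 2 / θ := by have : 0 < 2 / θ := by positivity
                                    linarith
  obtain ⟨c, hc, hce⟩ := exists_hasDerivAt_eq_slope (jj a b θ) _ hxy
    (fun t ht => (jj_deriv (hx.trans_le ht.1)).continuousAt.continuousWithinAt)
    (fun t ht => jj_deriv (a := a) (b := b) (θ := θ) (hx.trans ht.1))
  have hc0 := hx.trans hc.1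
  have hIc : c * nfd a b c - (1 + 2 / θ) * nf a b c ≤ 0 := by
    by_contra hh
    push Not at hh
    have h1 := mul_pos (rpow_pos_of_pos hc0 (-(1 + 2 / θ) - 1)) hh
    rw [hce] at h1
    have := div_nonpos_of_nonpos_of_nonneg (by linarith : jj a b θ y - jj a b θ x ≤ 0)
      (by linarith : 0 ≤ y - x)
    linarith
  have hy0 := hx.trans hxy
  have : StrictAntiOn (jj a b θ) (Set.Icc y z) := by
    apply strictAntiOn_of_deriv_neg (convex_Icc _ _)
    · intro t ht
      exact (jj_deriv (hy0.trans_le ht.1)).continuousAt.continuousWithinAt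
    · intro t ht
      rw [interior_Icc] at ht
      have ht0 := hy0.trans ht.1
      rw [(jj_deriv ht0).deriv]
      exact mul_neg_of_pos_of_neg (rpow_pos_of_pos ht0 _)
        (I_neg_prop ha hb hl hc0 (hc.2.trans ht.1) (ht.2.trans hz) hIc)
  exact this (Set.left_mem_Icc.2 hyz.le) (Set.right_mem_Icc.2 hyz.le) hyz

theorem qc_outer {a b θ w0 W0 w y : ℝ} (ha : 0 < a) (hb : 0 < b) (hθ : 0 < θ) (hw0 : 0 < w)
    (h1 : w ≤ w0) (h2 : w < y) (h3 : y ≤ W0) (h4 : w0 < W0) (h5 : W0 < π / 2)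
    (hj : jj a b θ w0 ≤ jj a b θ W0) (hs : y < W0) :
    jj a b θ w < jj a b θ y := by
  by_contra hc
  push Not at hc
  have h6 : jj a b θ W0 < jj a b θ y := by
    rcases jj_qc ha hb hθ hw0 h2 hs h5 with h | h <;> linarith
  rcases eq_or_lt_of_le h1 with e | e
  · rw [e] at hc; linarith
  · rcases jj_qc ha hb hθ hw0 e h4 h5 with h | h <;> linarith

theorem qc_inner {a b θ w0 W0 w y : ℝ} (ha : 0 < a) (hb : 0 < b) (hθ : 0 < θ) (hw0 : 0 < w0)
    (h1 : w0 ≤ w) (h2 : w < y) (h3 : W0 ≤ y) (h4 : w0 < W0) (h5 : y < π / 2)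
    (hj : jj a b θ W0 < jj a b θ w0) : jj a b θ y < jj a b θ w := by
  by_contra hc
  push Not at hc
  have h6 : jj a b θ w0 ≤ jj a b θ w := by
    rcases eq_or_lt_of_le h1 with e | e
    · rw [e]
    · rcases jj_qc ha hb hθ hw0 e h2 h5 with h | h <;> linarith
  rcases eq_or_lt_of_le h3 with e | e
  · rw [e] at hj; linarith
  · rcases jj_qc ha hb hθ hw0 h4 e h5 with h | h <;> linarith

theorem scale_d {a b n U V U' V'} (h : Sol a b n U V) (h' : Sol a b n U' V') (P μ r : ℝ)
    (hμ : 0 < μ) (hr : 0 < r) :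
    HasDerivAt (fun r => P * U' (μ * r) - U r) (P * μ * V' (μ * r) - V r) r ∧
    HasDerivAt (fun r => P * μ * V' (μ * r) - V r)
      (-(((n:ℝ) - 1) / r) * (P * μ * V' (μ * r) - V r) + nf a b (U r)
        - P * μ ^ 2 * nf a b (U' (μ * r))) r := by
  have hm : HasDerivAt (fun r => μ * r) μ r := by simpa using (hasDerivAt_id r).const_mul μ
  have h1 := (((h'.dU (μ * r)).comp r hm).const_mul P).sub (h.dU r)
  have h2 := (((h'.dV (μ * r) (by positivity)).comp r hm).const_mul (P * μ)).sub (h.dV r hr)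
  constructor
  · exact HasDerivAt.congr_deriv h1 (by ring)
  · refine HasDerivAt.congr_deriv h2 ?_
    field_simp; ring

theorem scale_d0 {a b n U V U' V'} (hn : 1 ≤ n) (h : Sol a b n U V) (h' : Sol a b n U' V') (P μ : ℝ) :
    HasDerivAt (fun r => P * U' (μ * r) - U r) (P * μ * V' (μ * 0) - V 0) 0 ∧
    HasDerivAt (fun r => P * μ * V' (μ * r) - V r)
      ((nf a b (U 0) - P * μ ^ 2 * nf a b (U' (μ * 0))) / n) 0 := by
  have hn' : (n:ℝ) ≠ 0 := by positivity
  have hm : HasDerivAt (fun r => μ * r) μ (0:ℝ) := by simpa using (hasDerivAt_id (0:ℝ)).const_mul μ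
  have h0 := h'.dV0
  have h1 := (((h'.dU (μ * 0)).comp 0 hm).const_mul P).sub (h.dU 0)
  have h0' : HasDerivAt V' (-(nf a b (U' (μ * 0)) / n)) (μ * 0) := by rw [mul_zero]; exact h0
  have h2 := ((h0'.comp 0 hm).const_mul (P * μ)).sub h.dV0
  constructor
  · exact HasDerivAt.congr_deriv h1 (by ring)
  · refine HasDerivAt.congr_deriv h2 ?_
    field_simp; ring

theorem neg_min {φ : ℝ → ℝ} {A r1 : ℝ} (hc : Continuous φ) (hl : Tendsto φ atTop (nhds 0))
    (h1 : A ≤ r1) (h2 : φ r1 < 0) : ∃ m, A ≤ m ∧ φ m < 0 ∧ ∀ r, A ≤ r → φ m ≤ φ r := by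
  obtain ⟨R, hR⟩ := eventually_atTop.1 (hl.eventually (lt_mem_nhds h2))
  obtain ⟨m, hm1, hm2⟩ := (isCompact_Icc (a := A) (b := max R r1)).exists_isMinOn
    ⟨r1, h1, le_max_right _ _⟩ hc.continuousOn
  have h3 : φ m ≤ φ r1 := hm2 ⟨h1, le_max_right _ _⟩
  refine ⟨m, hm1.1, by linarith, fun r hr => ?_⟩
  rcases le_total r (max R r1) with h | h
  · exact hm2 ⟨hr, h⟩
  · linarith [hR r ((le_max_left _ _).trans h)]

theorem lemN {k : ℕ} {φ ψ c : ℝ → ℝ} {r0 K : ℝ} (hr0 : 0 < r0) (hK : 0 < K)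
    (h1 : ∀ r, r0 ≤ r → HasDerivAt φ (ψ r) r) (h2 : ∀ r, r0 ≤ r → HasDerivAt ψ (c r) r)
    (h3 : ∀ r, r0 < r → c r + (k:ℝ) / r * ψ r ≤ K * φ r) (h4 : ∀ r, r0 ≤ r → 0 ≤ φ r)
    (h5 : φ r0 = 0) (h6 : ψ r0 = 0) : ∃ h > 0, ∀ r ∈ Set.Icc r0 (r0 + h), φ r = 0 := by
  have hh : 0 < 1 / (K + 1) := by positivity
  set h := 1 / (K + 1) with hdef
  refine ⟨h, hh, ?_⟩
  obtain ⟨s, hs1, hs2⟩ := (isCompact_Icc (a := r0) (b := r0 + h)).exists_isMaxOn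
    ⟨r0, le_rfl, by linarith⟩
    (fun r hr => (h1 r hr.1).continuousAt.continuousWithinAt : ContinuousOn φ _)
  have hs2' : ∀ r ∈ Set.Icc r0 (r0 + h), φ r ≤ φ s := fun r hr => hs2 hr
  have hm0 := h4 s hs1.1
  have hψ : ∀ r ∈ Set.Icc r0 (r0 + h), ψ r ≤ K * φ s * (r - r0) := by
    have hd : ∀ r, r0 ≤ r → HasDerivAt (fun r => r ^ k * (ψ r - K * φ s * (r - r0)))
        ((k:ℝ) * r ^ (k - 1) * (ψ r - K * φ s * (r - r0)) + r ^ k * (c r - K * φ s)) r := by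
      intro r hr
      have := (hasDerivAt_pow k r).mul ((h2 r hr).sub
        (((hasDerivAt_id r).sub_const r0).const_mul (K * φ s)))
      exact HasDerivAt.congr_deriv this (by simp)
    have hanti : AntitoneOn (fun r => r ^ k * (ψ r - K * φ s * (r - r0))) (Set.Icc r0 (r0 + h)) := by
      apply antitoneOn_of_deriv_nonpos (convex_Icc _ _)
      · intro r hr; exact (hd r hr.1).continuousAt.continuousWithinAt
      · intro r hr
        rw [interior_Icc] at hr
        exact (hd r hr.1.le).differentiableAt.differentiableWithinAt
      · intro r hr
        rw [interior_Icc] at hr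
        rw [(hd r hr.1.le).deriv]
        have hrp := hr0.trans hr.1
        have e : (k:ℝ) * r ^ (k - 1) = r ^ k * ((k:ℝ) / r) := by
          rcases Nat.eq_zero_or_pos k with h | h
          · simp [h]
          · obtain ⟨m, rfl⟩ : ∃ m, k = m + 1 := ⟨k - 1, by omega⟩
            simp only [Nat.add_sub_cancel]
            field_simp
            ring
        have e2 : (k:ℝ) * r ^ (k - 1) * (ψ r - K * φ s * (r - r0)) + r ^ k * (c r - K * φ s)
          = r ^ k * (c r + (k:ℝ) / r * ψ r - K * φ s - (k:ℝ) / r * (K * φ s * (r - r0))) := by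
          rw [e]; ring
        rw [e2]
        apply mul_nonpos_of_nonneg_of_nonpos (by positivity)
        have := h3 r hr.1
        have := mul_le_mul_of_nonneg_left (hs2' r ⟨hr.1.le, hr.2.le⟩) hK.le
        have : 0 ≤ (k:ℝ) / r * (K * φ s * (r - r0)) := by
          have : 0 ≤ r - r0 := by linarith [hr.1]
          positivity
        linarith
    intro r hr
    have := hanti (Set.left_mem_Icc.2 (by linarith)) hr hr.1
    simp only [h6, sub_self, mul_zero] at this
    have hp : 0 < r ^ k := pow_pos (hr0.trans_le hr.1) k
    by_contra hcc
    push Not at hcc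
    have := mul_pos hp (sub_pos.2 hcc)
    linarith
  have hφ : φ s ≤ K * φ s * h * h := by
    rcases eq_or_lt_of_le hs1.1 with e | e
    · rw [← e, h5]; simp
    · obtain ⟨x, hx, hxe⟩ := exists_hasDerivAt_eq_slope φ ψ e
        (fun t ht => (h1 t ht.1).continuousAt.continuousWithinAt) (fun t ht => h1 t ht.1.le)
      rw [h5, sub_zero, eq_div_iff (by linarith)] at hxe
      have h7 := hψ x ⟨hx.1.le, by linarith [hx.2, hs1.2]⟩
      have h8 : K * φ s * (x - r0) ≤ K * φ s * h := by
        apply mul_le_mul_of_nonneg_left _ (by positivity)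
        linarith [hx.2, hs1.2]
      have h9 : 0 ≤ K * φ s * h := by positivity
      nlinarith [hs1.2]
  have hKh : K * h * h < 1 := by
    have : K * h * h = K / ((K + 1) * (K + 1)) := by rw [hdef]; field_simp
    rw [this, div_lt_one (by positivity)]
    nlinarith
  have hz : φ s = 0 := by nlinarith
  intro r hr
  exact le_antisymm (by rw [← hz]; exact hs2' r hr) (h4 r hr.1)

theorem log_scale {μ r W θ : ℝ} (hμ : 0 < μ) (hr : 0 < r) (hW : 0 < W) :
    log (μ ^ θ * W) = log W + θ * log (μ * r) - θ * log r := by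
  rw [log_mul (rpow_pos_of_pos hμ θ).ne' hW.ne', log_rpow hμ, log_mul hμ.ne' hr.ne']; ring

theorem slide_outer {a b n U V U' V'} (hn : 1 ≤ n) (ha : 0 < a) (hb : 0 < b) (hu : GS a b n U V)
    (hv : GS a b n U' V') {θ ru rv : ℝ} (hθ : 0 < θ) (hrv : 0 < rv) (hlt : rv < ru)
    (hlu : ly U V ru = θ) (hlv : ly U' V' rv = θ)
    (hmu : ∀ r, 0 < r → r ≠ ru → log (U r) + θ * log r < log (U ru) + θ * log ru)
    (hM : log (U ru) + θ * log ru = log (U' rv) + θ * log rv)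
    (hj : jj a b θ (U ru) ≤ jj a b θ (U' rv)) : False := by
  have hru : 0 < ru := hrv.trans hlt
  obtain ⟨K, hK0, hK⟩ := nf_lip a b
  obtain ⟨δ, hδ0, -, hδ⟩ := nf_anti a b hb 1 one_pos
  obtain ⟨R, hR⟩ := eventually_atTop.1 (hu.lim.eventually (gt_mem_nhds hδ0))
  set μ0 := rv / ru with hμ0
  have hμ0p : 0 < μ0 := by positivity
  have hμ01 : μ0 < 1 := by rw [hμ0, div_lt_one hru]; exact hlt
  have hw0 := hu.pos ru hru.le
  have hW0 := hv.pos rv hrv.le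
  have e0 : μ0 * ru = rv := by rw [hμ0]; field_simp
  have hwW : U ru = μ0 ^ θ * U' rv := by
    have h1 := log_scale (θ := θ) hμ0p hru hW0
    rw [e0] at h1
    exact log_injOn_pos (Set.mem_Ioi.2 hw0)
      (Set.mem_Ioi.2 (mul_pos (rpow_pos_of_pos hμ0p θ) hW0)) (by linarith)
  have hvanti := hv.anti hn hb
  -- strict comparison
  have hcmp : ∀ μ r, 0 < μ → μ ≤ μ0 → rv < μ * r →
      nf a b (μ ^ θ * U' (μ * r)) < μ ^ θ * μ ^ 2 * nf a b (U' (μ * r)) := by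
    intro μ r hμ hμl hr
    have hmr : 0 ≤ μ * r := hrv.le.trans hr.le
    have hy := hv.pos (μ * r) hmr
    have hyW : U' (μ * r) < U' rv := hvanti (show rv ∈ Set.Ici 0 from hrv.le) hmr hr
    have hP : 0 < μ ^ θ := rpow_pos_of_pos hμ θ
    have hP1 : μ ^ θ < 1 := rpow_lt_one hμ.le (by linarith) hθ
    have hPP : μ ^ θ ≤ μ0 ^ θ := rpow_le_rpow hμ.le hμl hθ.le
    rw [← jj_cmp hθ hμ hy rfl]
    refine qc_outer ha hb hθ (by positivity) (w0 := U ru) (W0 := U' rv) ?_ ?_ hyW.le ?_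
      (hv.lt rv hrv.le) hj hyW
    · rw [hwW]; exact mul_le_mul hPP hyW.le hy.le (by positivity)
    · nlinarith
    · rw [hwW]; have := rpow_lt_one hμ0p.le hμ01 hθ; nlinarith
  -- boundary
  have hbd : ∀ μ r, 0 < μ → 0 < r → μ * r = rv → U r ≤ μ ^ θ * U' (μ * r) ∧
      (μ ^ θ * U' (μ * r) ≤ U r → r = ru) := by
    intro μ r hμ hr he
    have hUr := hu.pos r hr.le
    have h1 := log_scale (θ := θ) hμ hr hW0
    rw [he] at h1 ⊢
    have hpp : 0 < μ ^ θ * U' rv := mul_pos (rpow_pos_of_pos hμ θ) hW0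
    constructor
    · rw [← log_le_log_iff hUr hpp]
      rcases eq_or_ne r ru with e | e
      · rw [e] at h1 ⊢; linarith
      · linarith [hmu r hr e]
    · intro h2
      rw [← log_le_log_iff hpp hUr] at h2
      by_contra e
      linarith [hmu r hr e]
  have hcφ : ∀ μ, Continuous (fun r => μ ^ θ * U' (μ * r) - U r) := by
    intro μ
    have := hu.contU
    have := hv.contU
    fun_prop
  have hnb : ∀ μ m, 0 < μ → rv < μ * m → 0 < m ∧ ∃ ε > 0, ∀ r ∈ Set.Ioo (m - ε) (m + ε), rv ≤ μ * r ∧ 0 < r := by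
    intro μ m hμ hm
    have hm0 : 0 < m := by
      by_contra hc
      push Not at hc
      nlinarith
    refine ⟨hm0, m - rv / μ, ?_, fun r hr => ?_⟩
    · rw [gt_iff_lt, sub_pos, div_lt_iff₀ hμ]; linarith
    · have h1 : rv / μ < r := by linarith [hr.1]
      refine ⟨?_, lt_trans (by positivity) h1⟩
      rw [div_lt_iff₀ hμ] at h1; linarith
  have hneg : ∀ μ, 0 < μ → μ ≤ μ0 → ∀ r1, rv ≤ μ * r1 → μ ^ θ * U' (μ * r1) < U r1 →
      ∃ m, rv < μ * m ∧ μ ^ θ * U' (μ * m) < U m ∧ m ≤ R := by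
    intro μ hμ hμl r1 hr1 hlt1
    have hlim : Tendsto (fun r => μ ^ θ * U' (μ * r) - U r) atTop (nhds 0) := by
      have h1 := ((hv.lim.comp (tendsto_id.const_mul_atTop hμ)).const_mul (μ ^ θ)).sub hu.lim
      simpa [Function.comp_def] using h1
    obtain ⟨m, hm1, hm2, hm3⟩ := neg_min (A := rv / μ) (r1 := r1) (hcφ μ) hlim
      (by rw [div_le_iff₀ hμ]; linarith) (by linarith)
    have hm4 : rv < μ * m := by
      rw [div_le_iff₀ hμ] at hm1
      refine lt_of_le_of_ne (by linarith) (fun he => ?_)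
      have hm0 : 0 < m := by
        by_contra hc
        push Not at hc
        nlinarith
      linarith [(hbd μ m hμ hm0 he.symm).1]
    refine ⟨m, hm4, by linarith, ?_⟩
    obtain ⟨hm0, ε, hε, hεs⟩ := hnb μ m hμ hm4
    have := sd_min (g := fun r => μ ^ θ * U' (μ * r) - U r)
      (g' := fun r => μ ^ θ * μ * V' (μ * r) - V r) hε
      (fun r hr => (scale_d hu.toSol hv.toSol (μ ^ θ) μ r hμ (hεs r hr).2).1)
      (scale_d hu.toSol hv.toSol (μ ^ θ) μ m hμ hm0).2
      (fun r hr => hm3 r (by rw [div_le_iff₀ hμ]; linarith [(hεs r hr).1]))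
    obtain ⟨h1, h2⟩ := this
    rw [h1] at h2
    have h3 := hcmp μ m hμ hμl hm4
    by_contra hmR
    push Not at hmR
    have h4 := hR m hmR.le
    have hy := hv.pos (μ * m) (by positivity)
    have hP : 0 < μ ^ θ := rpow_pos_of_pos hμ θ
    have := hδ (a := μ ^ θ * U' (μ * m)) (b := U m) ⟨by positivity, by linarith⟩
      ⟨(hu.pos m hm0.le).le, h4.le⟩ (by linarith)
    linarith
  -- no interior touching
  have htouch : ∀ μ m, 0 < μ → μ ≤ μ0 → rv < μ * m → (∀ r, rv ≤ μ * r → U r ≤ μ ^ θ * U' (μ * r)) →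
      μ ^ θ * U' (μ * m) = U m → False := by
    intro μ m hμ hμl hm4 hge heq
    obtain ⟨hm0, ε, hε, hεs⟩ := hnb μ m hμ hm4
    have := sd_min (g := fun r => μ ^ θ * U' (μ * r) - U r)
      (g' := fun r => μ ^ θ * μ * V' (μ * r) - V r) hε
      (fun r hr => (scale_d hu.toSol hv.toSol (μ ^ θ) μ r hμ (hεs r hr).2).1)
      (scale_d hu.toSol hv.toSol (μ ^ θ) μ m hμ hm0).2
      (fun r hr => by linarith [hge r (hεs r hr).1])
    obtain ⟨h1, h2⟩ := this
    rw [h1] at h2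
    have h3 := hcmp μ m hμ hμl hm4
    rw [heq] at h3
    linarith
  -- main claim
  have main : ∀ r, rv ≤ μ0 * r → U r ≤ μ0 ^ θ * U' (μ0 * r) := by
    intro r1 hr1
    by_contra hc
    push Not at hc
    obtain ⟨m1, hm1, hm2, hm3⟩ := hneg μ0 hμ0p le_rfl r1 hr1 hc
    have hcomp : IsCompact {p : ℝ × ℝ | p ∈ Set.Icc (0:ℝ) μ0 ×ˢ Set.Icc (0:ℝ) R ∧
        rv ≤ p.1 * p.2 ∧ p.1 ^ θ * U' (p.1 * p.2) ≤ U p.2} := by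
      refine (isCompact_Icc.prod isCompact_Icc).of_isClosed_subset ?_ (fun p hp => hp.1)
      have c1 := hu.contU
      have c2 := hv.contU
      have c3 : Continuous fun p : ℝ × ℝ => p.1 ^ θ :=
        (continuous_rpow_const hθ.le).comp continuous_fst
      have s1 : IsClosed {p : ℝ × ℝ | rv ≤ p.1 * p.2} := isClosed_le (by fun_prop) (by fun_prop)
      have s2 : IsClosed {p : ℝ × ℝ | p.1 ^ θ * U' (p.1 * p.2) ≤ U p.2} :=
        isClosed_le (by fun_prop) (by fun_prop)
      exact (isClosed_Icc.prod isClosed_Icc).inter (s1.inter s2)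
    have hm10 : 0 < m1 := (hnb μ0 m1 hμ0p hm1).1
    obtain ⟨⟨μ, m⟩, ⟨hpm, hp1, hp2⟩, hpmin⟩ := hcomp.exists_isMinOn
      ⟨(μ0, m1), ⟨⟨hμ0p.le, le_rfl⟩, ⟨hm10.le, hm3⟩⟩, hm1.le, hm2.le⟩ continuous_fst.continuousOn
    simp only at hp1 hp2
    have hμl : μ ≤ μ0 := hpm.1.2
    have hμ : 0 < μ := by
      refine lt_of_le_of_ne hpm.1.1 (fun he => ?_)
      rw [← he, zero_mul] at hp1; linarith
    have hmin : ∀ μ' m', 0 ≤ μ' → μ' ≤ μ0 → 0 ≤ m' → m' ≤ R → rv ≤ μ' * m' →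
        μ' ^ θ * U' (μ' * m') ≤ U m' → μ ≤ μ' := by
      intro μ' m' h1 h2 h3 h4 h5 h6
      exact hpmin (a := (μ', m')) ⟨⟨⟨h1, h2⟩, ⟨h3, h4⟩⟩, h5, h6⟩
    have hge : ∀ r, rv ≤ μ * r → U r ≤ μ ^ θ * U' (μ * r) := by
      intro r hr
      by_contra hcc
      push Not at hcc
      obtain ⟨m', h1, h2, h3⟩ := hneg μ hμ hμl r hr hcc
      have hm'0 := (hnb μ m' hμ h1).1
      have c2 := hv.contU
      have ev1 : ∀ᶠ x in nhds μ, rv < x * m' :=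
        (continuous_id.mul continuous_const).continuousAt.eventually (lt_mem_nhds h1)
      have ev2 : ∀ᶠ x in nhds μ, x ^ θ * U' (x * m') < U m' := by
        have : Continuous fun x : ℝ => x ^ θ * U' (x * m') :=
          (continuous_rpow_const hθ.le).mul (by fun_prop)
        exact this.continuousAt.eventually (gt_mem_nhds h2)
      have ev3 : ∀ᶠ x in nhdsWithin μ (Set.Iio μ), rv < x * m' ∧ x ^ θ * U' (x * m') < U m' :=
        (ev1.and ev2).filter_mono nhdsWithin_le_nhds
      obtain ⟨x, ⟨hx1, hx2⟩, hx3⟩ := (ev3.and (Ioo_mem_nhdsLT hμ)).exists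
      have := hmin x m' hx3.1.le (hx3.2.le.trans hμl) hm'0.le h3 hx1.le hx2.le
      linarith [hx3.2]
    rcases eq_or_lt_of_le hp1 with he | he
    · have hm0 : 0 < m := by
        refine lt_of_le_of_ne hpm.2.1 (fun h => ?_)
        rw [← h, mul_zero] at he; linarith
      have hmru := (hbd μ m hμ hm0 he.symm).2 hp2
      have : μ = μ0 := by
        rw [hmru] at he
        rw [hμ0, he]; field_simp
      rw [this] at hge
      linarith [hge r1 hr1]
    · exact htouch μ m hμ hμl he hge (le_antisymm hp2 (hge m hp1))
  -- lemma N
  obtain ⟨k, rfl⟩ : ∃ k, n = k + 1 := ⟨n - 1, by omega⟩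
  obtain ⟨h, hh, hz⟩ := lemN (k := k) (φ := fun r => μ0 ^ θ * U' (μ0 * r) - U r)
    (ψ := fun r => μ0 ^ θ * μ0 * V' (μ0 * r) - V r)
    (c := fun r => -((((k+1:ℕ):ℝ) - 1) / r) * (μ0 ^ θ * μ0 * V' (μ0 * r) - V r) + nf a b (U r)
        - μ0 ^ θ * μ0 ^ 2 * nf a b (U' (μ0 * r))) hru hK0
    (fun r hr => (scale_d hu.toSol hv.toSol (μ0 ^ θ) μ0 r hμ0p (hru.trans_le hr)).1)
    (fun r hr => (scale_d hu.toSol hv.toSol (μ0 ^ θ) μ0 r hμ0p (hru.trans_le hr)).2)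
    (fun r hr => by
      have h1 := hcmp μ0 r hμ0p le_rfl (by rw [← e0]; gcongr)
      have h2 := hK (U r) (μ0 ^ θ * U' (μ0 * r))
      have h3 := main r (by rw [← e0]; gcongr)
      rw [abs_sub_comm (U r), abs_of_nonneg (by linarith : 0 ≤ μ0 ^ θ * U' (μ0 * r) - U r)] at h2
      have h4 := (abs_le.1 h2).2
      push_cast
      have : ((k:ℝ) + 1 - 1) = k := by ring
      rw [this]
      linarith)
    (fun r hr => by linarith [main r (by rw [← e0]; gcongr)])
    (by simp only [e0]; rw [hwW]; ring)
    (by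
      simp only [e0]
      have h1 : V ru = - θ * U ru / ru := by rw [← hlu]; unfold ly; field_simp
      have h2 : V' rv = - θ * U' rv / rv := by rw [← hlv]; unfold ly; field_simp
      rw [h1, h2, hwW, hμ0]; field_simp; ring)
  refine htouch μ0 (ru + h / 2) hμ0p le_rfl (by rw [← e0]; gcongr; linarith) main ?_
  have := hz (ru + h / 2) ⟨by linarith, by linarith⟩
  linarith

theorem slide_inner {a b n U V U' V'} (hn : 1 ≤ n) (ha : 0 < a) (hb : 0 < b) (hu : GS a b n U V)
    (hv : GS a b n U' V') {θ ru rv : ℝ} (hθ : 0 < θ) (hrv : 0 < rv) (hlt : rv < ru)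
    (hlu : ly U V ru = θ) (hlv : ly U' V' rv = θ)
    (hmv : ∀ r, 0 < r → r ≠ rv → log (U' r) + θ * log r < log (U' rv) + θ * log rv)
    (hM : log (U ru) + θ * log ru = log (U' rv) + θ * log rv)
    (hj : jj a b θ (U' rv) < jj a b θ (U ru)) : False := by
  have hru : 0 < ru := hrv.trans hlt
  set μ0 := ru / rv with hμ0
  have hμ0p : 0 < μ0 := by positivity
  have hμ01 : 1 < μ0 := by rw [hμ0, one_lt_div hrv]; exact hlt
  have hw0 := hu.pos ru hru.le
  have hW0 := hv.pos rv hrv.le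
  have e0 : μ0 * rv = ru := by rw [hμ0]; field_simp
  have hwW : U' rv = μ0 ^ θ * U ru := by
    have h1 := log_scale (θ := θ) hμ0p hrv hw0
    rw [e0] at h1
    exact log_injOn_pos (Set.mem_Ioi.2 hW0)
      (Set.mem_Ioi.2 (mul_pos (rpow_pos_of_pos hμ0p θ) hw0)) (by linarith)
  have huanti := hu.anti hn hb
  have hUge : ∀ x, 0 ≤ x → x ≤ ru → U ru ≤ U x := fun x h0 h1 =>
    huanti.antitoneOn h0 hru.le h1
  have hcmp : ∀ μ r, μ0 ≤ μ → 0 ≤ r → μ * r ≤ ru → μ ^ θ * U (μ * r) = U' r →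
      nf a b (U' r) < μ ^ θ * μ ^ 2 * nf a b (U (μ * r)) := by
    intro μ r hμl hr hmr he
    have hμ : 0 < μ := hμ0p.trans_le hμl
    have hy := hu.pos (μ * r) (by positivity)
    have hyW : U ru ≤ U (μ * r) := hUge _ (by positivity) hmr
    have hP1 : 1 < μ ^ θ := one_lt_rpow (by linarith) hθ
    have hPP : μ0 ^ θ ≤ μ ^ θ := rpow_le_rpow hμ0p.le hμl hθ.le
    rw [← jj_cmp hθ hμ hy he.symm]
    refine qc_inner ha hb hθ hw0 (W0 := U' rv) hyW ?_ ?_ ?_ (hv.lt r hr) hj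
    · rw [← he]; nlinarith
    · rw [← he, hwW]; exact mul_le_mul hPP hyW hw0.le (by positivity)
    · rw [hwW]; have := one_lt_rpow hμ01 hθ; nlinarith
  have hbd : ∀ μ r, 0 < μ → 0 < r → μ * r = ru → U' r ≤ μ ^ θ * U (μ * r) ∧
      (μ ^ θ * U (μ * r) ≤ U' r → r = rv) := by
    intro μ r hμ hr he
    have hUr := hv.pos r hr.le
    have h1 := log_scale (θ := θ) hμ hr hw0
    rw [he] at h1 ⊢
    have hpp : 0 < μ ^ θ * U ru := mul_pos (rpow_pos_of_pos hμ θ) hw0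
    constructor
    · rw [← log_le_log_iff hUr hpp]
      rcases eq_or_ne r rv with e | e
      · rw [e] at h1 ⊢; linarith
      · linarith [hmv r hr e]
    · intro h2
      rw [← log_le_log_iff hpp hUr] at h2
      by_contra e
      linarith [hmv r hr e]
  obtain ⟨μ1, hμ1, hμ1'⟩ : ∃ μ1, μ0 ≤ μ1 ∧ ∀ μ, μ1 ≤ μ → π / 2 < μ ^ θ * U ru := by
    have := ((tendsto_rpow_atTop hθ).atTop_mul_const hw0).eventually_gt_atTop (π / 2)
    obtain ⟨R, hR⟩ := eventually_atTop.1 this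
    exact ⟨max R μ0, le_max_right _ _, fun μ h => hR μ ((le_max_left _ _).trans h)⟩
  have hcomp : IsCompact {p : ℝ × ℝ | p ∈ Set.Icc μ0 μ1 ×ˢ Set.Icc (0:ℝ) rv ∧
      p.1 * p.2 ≤ ru ∧ p.1 ^ θ * U (p.1 * p.2) ≤ U' p.2} := by
    refine (isCompact_Icc.prod isCompact_Icc).of_isClosed_subset ?_ (fun p hp => hp.1)
    have c1 := hu.contU
    have c2 := hv.contU
    have c3 : Continuous fun p : ℝ × ℝ => p.1 ^ θ :=
      (continuous_rpow_const hθ.le).comp continuous_fst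
    have s1 : IsClosed {p : ℝ × ℝ | p.1 * p.2 ≤ ru} := isClosed_le (by fun_prop) (by fun_prop)
    have s2 : IsClosed {p : ℝ × ℝ | p.1 ^ θ * U (p.1 * p.2) ≤ U' p.2} :=
      isClosed_le (by fun_prop) (by fun_prop)
    exact (isClosed_Icc.prod isClosed_Icc).inter (s1.inter s2)
  obtain ⟨⟨μ, m⟩, ⟨hpm, hp1, hp2⟩, hpmax⟩ := hcomp.exists_isMaxOn
    ⟨(μ0, rv), ⟨⟨le_rfl, hμ1⟩, ⟨hrv.le, le_rfl⟩⟩, e0.le, by simp only [e0]; exact hwW.ge⟩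
    continuous_fst.continuousOn
  simp only at hp1 hp2
  have hμl : μ0 ≤ μ := hpm.1.1
  have hμ : 0 < μ := hμ0p.trans_le hμl
  have hm0 : 0 ≤ m := hpm.2.1
  have hmax : ∀ μ' m', μ0 ≤ μ' → 0 ≤ m' → μ' * m' ≤ ru →
      μ' ^ θ * U (μ' * m') ≤ U' m' → μ' ≤ μ := by
    intro μ' m' h1 h3 h5 h6
    have hμ' := hμ0p.trans_le h1
    refine hpmax (a := (μ', m')) ⟨⟨⟨h1, ?_⟩, ⟨h3, ?_⟩⟩, h5, h6⟩
    · by_contra hc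
      push Not at hc
      simp only at hc
      have h7 := hμ1' μ' hc.le
      have h8 := mul_le_mul_of_nonneg_left (hUge (μ' * m') (by positivity) h5)
        (rpow_pos_of_pos hμ' θ).le
      linarith [hv.lt m' h3]
    · simp only
      rw [← e0] at h5
      by_contra hc
      push Not at hc
      nlinarith
  have hge : ∀ r, 0 ≤ r → μ * r ≤ ru → U' r ≤ μ ^ θ * U (μ * r) := by
    intro r h0 hr
    by_contra hcc
    push Not at hcc
    have hr' : μ * r < ru := by
      refine lt_of_le_of_ne hr (fun he => ?_)
      have hr0 : 0 < r := by
        refine lt_of_le_of_ne h0 (fun h => ?_)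
        rw [← h, mul_zero] at he; linarith
      linarith [(hbd μ r hμ hr0 he).1]
    have c2 := hu.contU
    have ev1 : ∀ᶠ x in nhds μ, x * r < ru :=
      (continuous_id.mul continuous_const).continuousAt.eventually (gt_mem_nhds hr')
    have ev2 : ∀ᶠ x in nhds μ, x ^ θ * U (x * r) < U' r := by
      have : Continuous fun x : ℝ => x ^ θ * U (x * r) :=
        (continuous_rpow_const hθ.le).mul (by fun_prop)
      exact this.continuousAt.eventually (gt_mem_nhds hcc)
    have ev3 : ∀ᶠ x in nhdsWithin μ (Set.Ioi μ), x * r < ru ∧ x ^ θ * U (x * r) < U' r :=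
      (ev1.and ev2).filter_mono nhdsWithin_le_nhds
    obtain ⟨x, ⟨hx1, hx2⟩, hx3⟩ := (ev3.and self_mem_nhdsWithin).exists
    have hx3' : μ < x := hx3
    have := hmax x r (hμl.trans hx3'.le) h0 hx1.le hx2.le
    linarith
  have heq : μ ^ θ * U (μ * m) = U' m := le_antisymm hp2 (hge m hm0 hp1)
  have hlast := hcmp μ m hμl hm0 hp1 heq
  have hdd := fun r (hr : 0 < r) => scale_d hv.toSol hu.toSol (μ ^ θ) μ r hμ hr
  rcases eq_or_lt_of_le hm0 with hz | hpos
  · rw [← hz] at heq hlast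
    have hd0 := scale_d0 hn hv.toSol hu.toSol (μ ^ θ) μ
    have := sd_right (g := fun r => μ ^ θ * U (μ * r) - U' r)
      (g' := fun r => μ ^ θ * μ * V (μ * r) - V' r) (r0 := 0) (ε := ru / μ) (by positivity)
      (fun r hr => by
        rcases eq_or_lt_of_le hr.1 with h | h
        · rw [← h]; exact hd0.1
        · exact (hdd r h).1) (by simp [hu.V0, hv.V0]) hd0.2
      (fun r hr => by
        have h1 := hr.2
        rw [zero_add, lt_div_iff₀ hμ] at h1
        have := hge r hr.1.le (by linarith)
        linarith)
    have hn' : (0:ℝ) < n := by exact_mod_cast hn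
    have h2 : (nf a b (U' 0) - μ ^ θ * μ ^ 2 * nf a b (U (μ * 0))) / n < 0 :=
      div_neg_of_neg_of_pos (by linarith) hn'
    linarith
  · have hgen : μ ^ θ * μ * V (μ * m) - V' m = 0 → (0 ≤ -(((n:ℝ) - 1) / m) * (μ ^ θ * μ * V (μ * m) - V' m) + nf a b (U' m)
        - μ ^ θ * μ ^ 2 * nf a b (U (μ * m))) → False := by
      intro h1 h2
      rw [h1] at h2
      linarith
    rcases eq_or_lt_of_le hp1 with he | he
    · have hmrv := (hbd μ m hμ hpos he).2 hp2
      have hψ : μ ^ θ * μ * V (μ * m) - V' m = 0 := by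
        rw [he, hmrv]
        have hμμ : μ = μ0 := by rw [hmrv] at he; rw [hμ0, ← he]; field_simp
        have h1 : V ru = - θ * U ru / ru := by rw [← hlu]; unfold ly; field_simp
        have h2 : V' rv = - θ * U' rv / rv := by rw [← hlv]; unfold ly; field_simp
        rw [h1, h2, hwW, hμμ, hμ0]; field_simp; ring
      refine hgen hψ (sd_left (g := fun r => μ ^ θ * U (μ * r) - U' r)
        (g' := fun r => μ ^ θ * μ * V (μ * r) - V' r) (r0 := m) (ε := m) hpos
        (fun r hr => (hdd r (by linarith [hr.1])).1) hψ (hdd m hpos).2 ?_)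
      intro r hr
      have h0 : 0 < r := by linarith [hr.1]
      have := hge r h0.le (by nlinarith [hr.2])
      linarith
    · have hm2 : m < ru / μ := by rw [lt_div_iff₀ hμ]; linarith
      have hε : 0 < min m (ru / μ - m) := lt_min hpos (by linarith)
      have := sd_min (g := fun r => μ ^ θ * U (μ * r) - U' r)
        (g' := fun r => μ ^ θ * μ * V (μ * r) - V' r) (r0 := m) hε
        (fun r hr => (hdd r (by linarith [hr.1, min_le_left m (ru / μ - m)])).1) (hdd m hpos).2
        (fun r hr => by
          have h1 : r < ru / μ := by linarith [hr.2, min_le_right m (ru / μ - m)]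
          have h2 : 0 < r := by linarith [hr.1, min_le_left m (ru / μ - m)]
          rw [lt_div_iff₀ hμ] at h1
          have := hge r h2.le (by linarith)
          linarith)
      exact hgen this.1 this.2

theorem no_slide {a b n U V U' V'} (hn : 1 ≤ n) (ha : 0 < a) (hb : 0 < b) (hu : GS a b n U V)
    (hv : GS a b n U' V') {θ ru rv : ℝ} (hθ : 0 < θ) (hrv : 0 < rv) (hlt : rv < ru)
    (hlu : ly U V ru = θ) (hlv : ly U' V' rv = θ)
    (hmu : ∀ r, 0 < r → r ≠ ru → log (U r) + θ * log r < log (U ru) + θ * log ru)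
    (hmv : ∀ r, 0 < r → r ≠ rv → log (U' r) + θ * log r < log (U' rv) + θ * log rv)
    (hM : log (U ru) + θ * log ru = log (U' rv) + θ * log rv) : False := by
  rcases le_or_gt (jj a b θ (U ru)) (jj a b θ (U' rv)) with hj | hj
  · exact slide_outer hn ha hb hu hv hθ hrv hlt hlu hlv hmu hM hj
  · exact slide_inner hn ha hb hu hv hθ hrv hlt hlu hlv hmv hM hj

theorem deriv_right_nonneg {g : ℝ → ℝ} {d x : ℝ} (h : HasDerivAt g d x)
    (hge : ∀ r, x < r → g x ≤ g r) : 0 ≤ d := by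
  have h1 : Tendsto (slope g x) (nhdsWithin x (Set.Ioi x)) (nhds d) :=
    (hasDerivAt_iff_tendsto_slope.1 h).mono_left (nhdsWithin_mono _ (fun y hy => ne_of_gt hy))
  refine ge_of_tendsto h1 ?_
  filter_upwards [self_mem_nhdsWithin] with r hr
  rw [slope_def_field]
  have hr' : x < r := hr
  exact div_nonneg (by linarith [hge r hr']) (by linarith)

theorem GS.eq_of_eq0 {a b n U V U' V'} (hn : 1 ≤ n) (hu : GS a b n U V)
    (hv : GS a b n U' V') (h0 : U 0 = U' 0) : ∀ r, 0 ≤ r → U r = U' r := by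
  intro r hr
  obtain ⟨K, hK0, hK⟩ := nf_lip a b
  have := hu.toSol.gron hn hv.toSol hK0 hK r hr
  rw [h0, sub_self] at this
  nlinarith [sq_nonneg (U r - U' r), sq_nonneg (V r - V' r)]

theorem GS.eq_of_cauchy {a b n U V U' V'} (hn : 1 ≤ n) (hu : GS a b n U V)
    (hv : GS a b n U' V') {s : ℝ} (hs : 0 < s) (e1 : U s = U' s) (e2 : V s = V' s) :
    ∀ r, 0 ≤ r → U r = U' r := by
  apply hu.eq_of_eq0 hn hv
  have h1 : ∀ r, 0 < r → U r = U' r := fun r hr =>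
    (hu.toSol.solP.cauchy hn hv.toSol.solP hs e1 e2 r hr).1
  have t1 : Tendsto U (nhdsWithin 0 (Set.Ioi 0)) (nhds (U 0)) :=
    hu.contU.continuousAt.tendsto.mono_left nhdsWithin_le_nhds
  have t2 : Tendsto U' (nhdsWithin 0 (Set.Ioi 0)) (nhds (U' 0)) :=
    hv.contU.continuousAt.tendsto.mono_left nhdsWithin_le_nhds
  refine tendsto_nhds_unique t1 (t2.congr' ?_)
  filter_upwards [self_mem_nhdsWithin] with r hr using (h1 r hr).symm

theorem GS.eq_of_le {a b n U V U' V'} (hn : 1 ≤ n) (hb : 0 < b) (hu : GS a b n U V)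
    (hv : GS a b n U' V') (hle : ∀ r, 0 ≤ r → U r ≤ U' r) : ∀ r, 0 ≤ r → U r = U' r := by
  obtain ⟨δ, hδ0, -, hδ⟩ := nf_anti a b hb 1 one_pos
  obtain ⟨R, hR0, hR⟩ : ∃ R, 0 ≤ R ∧ ∀ r, R ≤ r → U r < δ := by
    obtain ⟨R, hR⟩ := eventually_atTop.1 (hu.lim.eventually (gt_mem_nhds hδ0))
    exact ⟨max R 0, le_max_right _ _, fun r h => hR r ((le_max_left _ _).trans h)⟩
  obtain ⟨T, hT0, hT⟩ : ∃ T, 0 ≤ T ∧ U' T < U 0 := by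
    obtain ⟨T, h1, h2⟩ := ((hv.lim.eventually (gt_mem_nhds (hu.pos 0 le_rfl))).and
      (eventually_ge_atTop 0)).exists
    exact ⟨T, h2, h1⟩
  have hn' : (1:ℝ) ≤ n := by exact_mod_cast hn
  have c1 := hu.contU
  have c2 := hv.contU
  have hd1 : ∀ τ r, HasDerivAt (fun r => U' (r + τ) - U r) (V' (r + τ) - V r) r := fun τ r =>
    ((hv.dU (r + τ)).comp_add_const r τ).sub (hu.dU r)
  have hd2 : ∀ τ r, 0 ≤ τ → 0 < r → HasDerivAt (fun r => V' (r + τ) - V r)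
      (-(((n:ℝ) - 1) / (r + τ) * V' (r + τ)) - nf a b (U' (r + τ)) -
        (-(((n:ℝ) - 1) / r * V r) - nf a b (U r))) r := fun τ r hτ hr =>
    ((hv.dV (r + τ) (by linarith)).comp_add_const r τ).sub (hu.dV r hr)
  -- at an interior minimum
  have hmin : ∀ τ m, 0 ≤ τ → 0 < m → (∀ r, 0 ≤ r → U' (m + τ) - U m ≤ U' (r + τ) - U r) →
      V' (m + τ) = V m ∧ nf a b (U' (m + τ)) - ((n:ℝ) - 1) * V m * (1 / m - 1 / (m + τ)) ≤ nf a b (U m) := by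
    intro τ m hτ hm hmm
    have := sd_min (g := fun r => U' (r + τ) - U r) (g' := fun r => V' (r + τ) - V r) hm
      (fun r _ => hd1 τ r) (hd2 τ m hτ hm) (fun r hr => hmm r (by linarith [hr.1]))
    obtain ⟨h1, h2⟩ := this
    have h1' : V' (m + τ) = V m := by linarith
    refine ⟨h1', ?_⟩
    rw [h1'] at h2
    have : -(((n:ℝ) - 1) / (m + τ) * V m) - nf a b (U' (m + τ)) -
        (-(((n:ℝ) - 1) / m * V m) - nf a b (U m)) = ((n:ℝ) - 1) * V m * (1 / m - 1 / (m + τ))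
         - nf a b (U' (m + τ)) + nf a b (U m) := by ring
    linarith
  have hneg : ∀ τ, 0 ≤ τ → ∀ r1, 0 ≤ r1 → U' (r1 + τ) < U r1 →
      ∃ m, 0 ≤ m ∧ m ≤ R ∧ U' (m + τ) < U m := by
    intro τ hτ r1 hr1 hlt
    have hlim : Tendsto (fun r => U' (r + τ) - U r) atTop (nhds 0) := by
      have h1 := (hv.lim.comp (tendsto_atTop_add_const_right _ τ tendsto_id)).sub hu.lim
      simpa [Function.comp_def] using h1
    obtain ⟨m, hm1, hm2, hm3⟩ := neg_min (A := 0) (by fun_prop) hlim hr1 (by linarith)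
    refine ⟨m, hm1, ?_, by linarith⟩
    rcases eq_or_lt_of_le hm1 with h0 | h0
    · rw [← h0]; exact hR0
    · by_contra hmR
      push Not at hmR
      obtain ⟨h1, h2⟩ := hmin τ m hτ h0 hm3
      have hV := hu.V_neg hn hb m h0
      have h3 : 0 ≤ 1 / m - 1 / (m + τ) := by
        rw [sub_nonneg]; apply one_div_le_one_div_of_le h0; linarith
      have h4 : 0 ≤ ((n:ℝ) - 1) * (-V m) * (1 / m - 1 / (m + τ)) :=
        mul_nonneg (mul_nonneg (by linarith) (by linarith)) h3
      have := hδ (a := U' (m + τ)) (b := U m) ⟨(hv.pos _ (by linarith)).le, by linarith [hR m hmR.le]⟩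
        ⟨(hu.pos m hm1).le, (hR m hmR.le).le⟩ (by linarith)
      linarith
  have hcomp : IsCompact {p : ℝ × ℝ | p ∈ Set.Icc 0 T ×ˢ Set.Icc 0 R ∧ U' (p.2 + p.1) ≤ U p.2} := by
    refine (isCompact_Icc.prod isCompact_Icc).of_isClosed_subset ?_ (fun p hp => hp.1)
    have s2 : IsClosed {p : ℝ × ℝ | U' (p.2 + p.1) ≤ U p.2} :=
      isClosed_le (by fun_prop) (by fun_prop)
    exact (isClosed_Icc.prod isClosed_Icc).inter s2
  obtain ⟨⟨τ, m⟩, ⟨hpm, hp2⟩, hpmin⟩ := hcomp.exists_isMinOn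
    ⟨(T, 0), ⟨⟨hT0, le_rfl⟩, ⟨le_rfl, hR0⟩⟩, by simpa using hT.le⟩ continuous_fst.continuousOn
  simp only at hp2
  have hτ : 0 ≤ τ := hpm.1.1
  have hm0 : 0 ≤ m := hpm.2.1
  have hge : ∀ r, 0 ≤ r → U r ≤ U' (r + τ) := by
    intro r hr
    rcases eq_or_lt_of_le hτ with h0 | h0
    · rw [← h0, add_zero]; exact hle r hr
    by_contra hcc
    push Not at hcc
    obtain ⟨m', h1, h2, h3⟩ := hneg τ hτ r hr hcc
    have ev2 : ∀ᶠ x in nhds τ, U' (m' + x) < U m' := by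
      have : Continuous fun x : ℝ => U' (m' + x) := by fun_prop
      exact this.continuousAt.eventually (gt_mem_nhds h3)
    have ev3 : ∀ᶠ x in nhdsWithin τ (Set.Iio τ), U' (m' + x) < U m' :=
      ev2.filter_mono nhdsWithin_le_nhds
    obtain ⟨x, hx2, hx3⟩ := (ev3.and (Ioo_mem_nhdsLT h0)).exists
    have hT' : τ ≤ T := hpm.1.2
    have : τ ≤ x := hpmin (a := (x, m')) ⟨⟨⟨hx3.1.le, hx3.2.le.trans hT'⟩, ⟨h1, h2⟩⟩, hx2.le⟩
    linarith [hx3.2]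
  have heq : U' (m + τ) = U m := le_antisymm hp2 (hge m hm0)
  have hmm : ∀ r, 0 ≤ r → U' (m + τ) - U m ≤ U' (r + τ) - U r := fun r hr => by
    linarith [hge r hr]
  rcases eq_or_lt_of_le hm0 with h0 | h0
  · rw [← h0] at heq hmm
    have h1 := deriv_right_nonneg (hd1 τ 0) (fun r hr => hmm r hr.le)
    rw [hu.V0, zero_add, sub_zero] at h1
    have hτ0 : τ = 0 := by
      by_contra hne
      linarith [hv.V_neg hn hb τ (lt_of_le_of_ne hτ (Ne.symm hne))]
    rw [hτ0, zero_add] at heq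
    exact hu.eq_of_eq0 hn hv heq.symm
  · obtain ⟨h1, h2⟩ := hmin τ m hτ h0 hmm
    rcases eq_or_lt_of_le hτ with hz | hτp
    · rw [← hz, add_zero] at h1 heq
      exact hu.eq_of_cauchy hn hv h0 heq.symm h1.symm
    · exfalso
      have hV := hu.V_neg hn hb m h0
      have h3 : 0 < 1 / m - 1 / (m + τ) := by
        rw [sub_pos]; apply one_div_lt_one_div_of_lt h0; linarith
      rw [heq] at h2
      rcases eq_or_lt_of_le hn with e | e
      · subst e
        have hs : SolP a b 1 (fun r => U' (r + τ)) (fun r => V' (r + τ)) := by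
          intro r hr
          refine ⟨(hv.dU (r + τ)).comp_add_const r τ, ?_⟩
          have := (hv.dV (r + τ) (by linarith)).comp_add_const r τ
          exact this.congr_deriv (by norm_num)
        have h4 : ∀ r, 0 < r → V' (r + τ) = V r := fun r hr =>
          (hs.cauchy le_rfl hu.toSol.solP h0 heq h1 r hr).2
        have t1 : Tendsto (fun r => V' (r + τ)) (nhdsWithin 0 (Set.Ioi 0)) (nhds (V' τ)) := by
          have hc : ContinuousAt V' (0 + τ) := by
            rw [zero_add]; exact (hv.dV τ hτp).continuousAt
          have : ContinuousAt (fun r => V' (r + τ)) 0 :=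
            ContinuousAt.comp (f := fun r : ℝ => r + τ) hc (by fun_prop)
          have := this.tendsto.mono_left (nhdsWithin_le_nhds (s := Set.Ioi 0))
          simpa using this
        have t2 : Tendsto V (nhdsWithin 0 (Set.Ioi 0)) (nhds (V 0)) :=
          hu.dV0.continuousAt.tendsto.mono_left nhdsWithin_le_nhds
        have : V' τ = V 0 := by
          refine tendsto_nhds_unique t1 (t2.congr' ?_)
          filter_upwards [self_mem_nhdsWithin] with r hr using (h4 r hr).symm
        rw [hu.V0] at this
        linarith [hv.V_neg le_rfl hb τ hτp]
      · have h5 : (1:ℝ) < n := by exact_mod_cast e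
        have h4 : 0 < ((n:ℝ) - 1) * (-V m) * (1 / m - 1 / (m + τ)) :=
          mul_pos (mul_pos (by linarith) (by linarith)) h3
        linarith

theorem GS.le_of_M {a b n U V U' V'} (hn : 1 ≤ n) (ha : 0 < a) (hb : 0 < b) (hu : GS a b n U V)
    (hv : GS a b n U' V') {tu tv : ℝ → ℝ}
    (htu : ∀ θ, 0 < θ → 0 < tu θ ∧ ly U V (tu θ) = θ ∧ ∀ r, 0 < r → r ≠ tu θ →
      log (U r) + θ * log r < log (U (tu θ)) + θ * log (tu θ))
    (htv : ∀ θ, 0 < θ → 0 < tv θ ∧ ly U' V' (tv θ) = θ ∧ ∀ r, 0 < r → r ≠ tv θ →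
      log (U' r) + θ * log r < log (U' (tv θ)) + θ * log (tv θ))
    (hM : ∀ θ, 0 < θ → log (U (tu θ)) + θ * log (tu θ) < log (U' (tv θ)) + θ * log (tv θ)) :
    ∀ r, 0 ≤ r → U r ≤ U' r := by
  have hpos : ∀ r, 0 < r → U r ≤ U' r := by
    intro r hr
    set θ := ly U' V' r with hθ
    have hθ0 : 0 < θ := hv.ly_pos hn hb r hr
    have ht : tv θ = r := (hv.ly_mono hn ha hb).injOn (htv θ hθ0).1 hr (htv θ hθ0).2.1
    have h1 := hM θ hθ0
    rw [ht] at h1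
    have h2 : log (U r) + θ * log r ≤ log (U (tu θ)) + θ * log (tu θ) := by
      rcases eq_or_ne r (tu θ) with e | e
      · rw [← e]
      · exact ((htu θ hθ0).2.2 r hr e).le
    exact (log_le_log_iff (hu.pos r hr.le) (hv.pos r hr.le)).1 (by linarith)
  intro r hr
  rcases eq_or_lt_of_le hr with h | h
  · have t1 : Tendsto U (nhdsWithin 0 (Set.Ioi 0)) (nhds (U 0)) :=
      hu.contU.continuousAt.tendsto.mono_left nhdsWithin_le_nhds
    have t2 : Tendsto U' (nhdsWithin 0 (Set.Ioi 0)) (nhds (U' 0)) :=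
      hv.contU.continuousAt.tendsto.mono_left nhdsWithin_le_nhds
    rw [← h]
    refine le_of_tendsto_of_tendsto t1 t2 ?_
    filter_upwards [self_mem_nhdsWithin] with r hr using hpos r hr
  · exact hpos r h

theorem ly_V {U V : ℝ → ℝ} {r θ : ℝ} (hr : 0 < r) (hU : 0 < U r) (h : ly U V r = θ) :
    V r = - θ * U r / r := by
  rw [← h]; unfold ly; field_simp

theorem GS.unique {a b n U V U' V'} (hn : 1 ≤ n) (ha : 0 < a) (hb : 0 < b) (hu : GS a b n U V)
    (hv : GS a b n U' V') : ∀ r, 0 ≤ r → U r = U' r := by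
  obtain ⟨tu, htu, hcu⟩ := hu.exists_M hn ha hb
  obtain ⟨tv, htv, hcv⟩ := hv.exists_M hn ha hb
  by_cases hex : ∃ θ, 0 < θ ∧ log (U (tu θ)) + θ * log (tu θ) = log (U' (tv θ)) + θ * log (tv θ)
  · obtain ⟨θ, hθ, hM⟩ := hex
    obtain ⟨u1, u2, u3⟩ := htu θ hθ
    obtain ⟨v1, v2, v3⟩ := htv θ hθ
    rcases lt_trichotomy (tu θ) (tv θ) with h | h | h
    · exact (no_slide hn ha hb hv hu hθ u1 h v2 u2 v3 u3 hM.symm).elim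
    · rw [← h] at hM v2 v1
      have hUp := hu.pos _ u1.le
      have e1 : U (tu θ) = U' (tu θ) :=
        log_injOn_pos (Set.mem_Ioi.2 hUp) (Set.mem_Ioi.2 (hv.pos _ u1.le)) (by linarith)
      refine hu.eq_of_cauchy hn hv u1 e1 ?_
      have h1 := ly_V u1 hUp u2
      have h2 := ly_V u1 (hv.pos _ u1.le) v2
      rw [h1, h2, e1]
    · exact (no_slide hn ha hb hu hv hθ v1 h u2 v2 u3 v3 hM).elim
  · push Not at hex
    by_cases hall : ∀ θ, 0 < θ → log (U (tu θ)) + θ * log (tu θ) < log (U' (tv θ)) + θ * log (tv θ)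
    · exact hu.eq_of_le hn hb hv (hu.le_of_M hn ha hb hv htu htv hall)
    · push Not at hall
      obtain ⟨θ1, hθ1, h1⟩ := hall
      have hall' : ∀ θ, 0 < θ → log (U' (tv θ)) + θ * log (tv θ) < log (U (tu θ)) + θ * log (tu θ) := by
        intro θ hθ
        by_contra hc
        push Not at hc
        obtain ⟨c, hc1, hc2⟩ := isPreconnected_Ioi.intermediate_value₂ (show θ ∈ Set.Ioi (0:ℝ) from hθ)
          (show θ1 ∈ Set.Ioi (0:ℝ) from hθ1) hcu hcv hc h1
        exact hex c hc1 hc2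
      exact fun r hr => (hv.eq_of_le hn hb hu (hv.le_of_M hn ha hb hu htv htu hall') r hr).symm

def pB (m : ℕ) (w : ℝ → ℝ) (s : ℝ) : ℝ := ∫ σ in (0:ℝ)..1, σ ^ m * w (s * σ)

theorem pB_cont (m : ℕ) {w : ℝ → ℝ} (hw : Continuous w) : Continuous (pB m w) := by
  unfold pB
  apply intervalIntegral.continuous_parametric_intervalIntegral_of_continuous'
  fun_prop

theorem pB_zero (m : ℕ) (w : ℝ → ℝ) : pB m w 0 = w 0 / ((m+1:ℕ):ℝ) := by
  unfold pB
  simp only [zero_mul]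
  rw [intervalIntegral.integral_mul_const, integral_pow]
  push_cast; simp; ring

theorem pB_diff (m : ℕ) {w w' : ℝ → ℝ} (hw : Continuous w) (hw' : Continuous w') {s C : ℝ}
    (hC : ∀ σ, 0 ≤ σ → σ ≤ 1 → |w (s*σ) - w' (s*σ)| ≤ C) : |pB m w s - pB m w' s| ≤ C := by
  unfold pB
  rw [← intervalIntegral.integral_sub (by apply Continuous.intervalIntegrable; fun_prop)
    (by apply Continuous.intervalIntegrable; fun_prop)]
  have := intervalIntegral.norm_integral_le_of_norm_le_const (a := (0:ℝ)) (b := 1) (C := C)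
    (f := fun σ => σ ^ m * w (s * σ) - σ ^ m * w' (s * σ)) ?_
  · simpa using this
  · intro σ hσ
    rw [Set.uIoc_of_le zero_le_one] at hσ
    rw [← mul_sub, norm_mul, norm_pow, Real.norm_eq_abs, Real.norm_eq_abs, abs_of_pos hσ.1]
    have h1 : σ ^ m ≤ 1 := pow_le_one₀ hσ.1.le hσ.2
    have h2 := hC σ hσ.1.le hσ.2
    have h3 := abs_nonneg (w (s*σ) - w' (s*σ))
    nlinarith

theorem pB_bd (m : ℕ) {w : ℝ → ℝ} (hw : Continuous w) {s C : ℝ}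
    (hC : ∀ x, |w x| ≤ C) : |pB m w s| ≤ C := by
  have := pB_diff m hw (w' := fun _ => 0) (by fun_prop) (s := s) (C := C) (by intro σ _ _; simpa using hC _)
  simpa [pB] using this

theorem pB_subst (m : ℕ) (w : ℝ → ℝ) {s : ℝ} (hs : 0 < s) :
    s * pB m w s = (s ^ m)⁻¹ * ∫ t in (0:ℝ)..s, t ^ m * w t := by
  have := intervalIntegral.mul_integral_comp_mul_left (a := 0) (b := 1) (f := fun t => t ^ m * w t) (c := s)
  simp only [mul_zero, mul_one] at this
  rw [← this]
  unfold pB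
  have h2 : ∀ x, (s * x)^m * w (s*x) = s^m * (x^m * w (s*x)) := by intro x; ring
  simp only [h2, intervalIntegral.integral_const_mul]
  have : s^m ≠ 0 := by positivity
  field_simp

theorem pB_congr (m : ℕ) {w w' : ℝ → ℝ} {s : ℝ} (hs : 0 ≤ s) (h : ∀ x, 0 ≤ x → w x = w' x) :
    pB m w s = pB m w' s := by
  unfold pB
  apply intervalIntegral.integral_congr
  intro σ hσ
  rw [Set.uIcc_of_le zero_le_one] at hσ
  simp only
  rw [h _ (mul_nonneg hs hσ.1)]

def pH (m : ℕ) (w : ℝ → ℝ) (r : ℝ) : ℝ := ∫ s in (0:ℝ)..r, s * pB m w s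

theorem pH_deriv (m : ℕ) {w : ℝ → ℝ} (hw : Continuous w) (r : ℝ) :
    HasDerivAt (pH m w) (r * pB m w r) r := by
  have hc : Continuous fun s => s * pB m w s := continuous_id.mul (pB_cont m hw)
  exact intervalIntegral.integral_hasDerivAt_right (hc.intervalIntegrable _ _)
    (hc.stronglyMeasurableAtFilter _ _) hc.continuousAt

theorem pH_zero (m : ℕ) (w : ℝ → ℝ) : pH m w 0 = 0 := by simp [pH]

/-- comparison for derivatives on half line -/
theorem half_le {F F' G G' : ℝ → ℝ} (hF : ∀ x, HasDerivAt F (F' x) x) (hG : ∀ x, HasDerivAt G (G' x) x)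
    (h0 : |F 0| ≤ G 0) (h : ∀ x, 0 ≤ x → |F' x| ≤ G' x) (r : ℝ) (hr : 0 ≤ r) : |F r| ≤ G r := by
  have := image_norm_le_of_norm_deriv_right_le_deriv_boundary (f := F) (f' := F') (a := 0) (b := r)
    (fun x _ => (hF x).continuousAt.continuousWithinAt) (fun x _ => (hF x).hasDerivWithinAt)
    (B := G) (B' := G') h0 hG (fun x hx => h x hx.1)
  exact this (Set.right_mem_Icc.2 hr)

theorem pH_bd (m : ℕ) {w : ℝ → ℝ} (hw : Continuous w) {C : ℝ} (hC : ∀ x, |w x| ≤ C) (r : ℝ)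
    (hr : 0 ≤ r) : |pH m w r| ≤ C * r^2/2 := by
  refine half_le (G := fun r => C * r^2/2) (G' := fun x => C * x) (pH_deriv m hw) (fun x => ?_) (by simp [pH_zero]) ?_ r hr
  · have := ((hasDerivAt_pow 2 x).const_mul C).div_const 2
    refine this.congr_deriv ?_; simp; ring
  · intro x hx
    rw [abs_mul, abs_of_nonneg hx, mul_comm]
    exact mul_le_mul_of_nonneg_right (pB_bd m hw hC) hx

theorem pH_diff (m : ℕ) {w w' : ℝ → ℝ} (hw : Continuous w) (hw' : Continuous w') {L C : ℝ} (hL : 0 < L)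
    (hC0 : 0 ≤ C)
    (hC : ∀ x, 0 ≤ x → |w x - w' x| ≤ C * exp (L * x^2)) (r : ℝ)
    (hr : 0 ≤ r) : |pH m w r - pH m w' r| ≤ C / (2*L) * exp (L * r^2) := by
  refine half_le (F := fun x => pH m w x - pH m w' x) (F' := fun x => x * pB m w x - x * pB m w' x)
    (G := fun r => C / (2*L) * exp (L * r^2)) (G' := fun x => C * (x * exp (L*x^2))) (fun x => (pH_deriv m hw x).sub (pH_deriv m hw' x)) (fun x => ?_) ?_ ?_ r hr
  · have := (((hasDerivAt_pow 2 x).const_mul L).exp).const_mul (C/(2*L))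
    refine this.congr_deriv ?_; simp; field_simp
  · simp [pH_zero]; positivity
  · intro x hx
    rw [← mul_sub, abs_mul, abs_of_nonneg hx]
    have : |pB m w x - pB m w' x| ≤ C * exp (L*x^2) := by
      apply pB_diff m hw hw'
      intro σ h0 h1
      refine (hC _ (mul_nonneg hx h0)).trans ?_
      gcongr
      nlinarith
    nlinarith

theorem exists_Sol (a b : ℝ) {n : ℕ} (hn : 1 ≤ n) (α : ℝ) : ∃ U V, Sol a b n U V ∧ U 0 = α := by
  obtain ⟨m, rfl⟩ : ∃ m, n = m + 1 := ⟨n - 1, by omega⟩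
  obtain ⟨K, hK, hlip⟩ := nf_lip a b
  let W : (BoundedContinuousFunction ℝ ℝ) → ℝ → ℝ := fun g x => nf a b (α + exp (K * x^2) * g x)
  have hWc : ∀ g, Continuous (W g) := by
    intro g
    apply (nf_cont a b).comp
    have := g.continuous
    fun_prop
  have hWb : ∀ g x, |W g x| ≤ |a| + |b| := fun g x => nf_bdd a b _
  have hHc : ∀ g, Continuous (pH m (W g)) := fun g => 
    continuous_iff_continuousAt.2 fun x => (pH_deriv m (hWc g) x).continuousAt
  let T : (BoundedContinuousFunction ℝ ℝ) → (BoundedContinuousFunction ℝ ℝ) := fun g =>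
    BoundedContinuousFunction.ofNormedAddCommGroup (fun r => -(exp (-(K*r^2)) * pH m (W g) |r|))
      (by have := hHc g; fun_prop) ((|a|+|b|)/(2*K)) (by
        intro r
        have h1 := pH_bd m (hWc g) (hWb g) |r| (abs_nonneg r)
        rw [norm_neg, norm_mul, Real.norm_eq_abs, Real.norm_eq_abs, abs_exp, exp_neg, inv_mul_le_iff₀ (exp_pos _)]
        refine h1.trans ?_
        rw [sq_abs]
        have h2 := add_one_le_exp (K*r^2)
        have h3 : (0:ℝ) ≤ |a|+|b| := by positivity
        calc (|a|+|b|)*r^2/2 = (K*r^2) * ((|a|+|b|)/(2*K)) := by field_simp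
          _ ≤ _ := by
            gcongr
            linarith)
  have hT : ContractingWith (1/2) T := by
    refine ⟨by norm_num, LipschitzWith.of_dist_le_mul ?_⟩
    intro g h
    rw [BoundedContinuousFunction.dist_le (by positivity)]
    intro r
    have h1 := pH_diff m (hWc g) (hWc h) hK (C := K * dist g h) (by positivity) (by
      intro x hx
      refine (hlip _ _).trans ?_
      have h2 : |g x - h x| ≤ dist g h := by
        rw [← Real.dist_eq]; exact BoundedContinuousFunction.dist_coe_le_dist x
      have : (α + exp (K * x^2) * g x) - (α + exp (K * x^2) * h x) = exp (K*x^2) * (g x - h x) := by ring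
      rw [this, abs_mul, abs_exp, mul_assoc, mul_comm (dist g h)]
      gcongr) |r| (abs_nonneg r)
    have e : dist (T g r) (T h r) = exp (-(K*r^2)) * abs (pH m (W g) (abs r) - pH m (W h) (abs r)) := by
      rw [Real.dist_eq]
      change abs (-(exp (-(K*r^2)) * pH m (W g) (abs r)) - -(exp (-(K*r^2)) * pH m (W h) (abs r))) = _
      rw [show -(exp (-(K*r^2)) * pH m (W g) |r|) - -(exp (-(K*r^2)) * pH m (W h) |r|) = 
        -(exp (-(K*r^2)) * (pH m (W g) |r| - pH m (W h) |r|)) by ring, abs_neg, abs_mul, abs_exp]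
    rw [e, exp_neg, inv_mul_le_iff₀ (exp_pos _)]
    refine h1.trans (le_of_eq ?_)
    rw [sq_abs]; push_cast; field_simp
  obtain ⟨g, hg⟩ : ∃ g, T g = g := ⟨_, hT.fixedPoint_isFixedPt⟩
  have hgr : ∀ r, 0 ≤ r → α + exp (K*r^2) * g r = α - pH m (W g) r := by
    intro r hr
    have : g r = -(exp (-(K*r^2)) * pH m (W g) |r|) := by
      conv_lhs => rw [← hg]
      rfl
    rw [this, abs_of_nonneg hr, exp_neg]
    have := exp_pos (K*r^2)
    field_simp
    ring
  have hWU : ∀ r, 0 ≤ r → W g r = nf a b (α - pH m (W g) r) := by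
    intro r hr
    change nf a b (α + exp (K*r^2) * g r) = _
    rw [hgr r hr]
  refine ⟨fun r => α - pH m (W g) r, fun r => -(r * pB m (W g) r), ⟨?_, ?_, ?_, ?_⟩, by simp [pH_zero]⟩
  · intro r
    simpa using (pH_deriv m (hWc g) r).const_sub α
  · intro r hr
    have hc : Continuous fun t => t ^ m * W g t := (continuous_pow m).mul (hWc g)
    have hP : HasDerivAt (fun r => ∫ t in (0:ℝ)..r, t ^ m * W g t) (r^m * W g r) r :=
      intervalIntegral.integral_hasDerivAt_right (hc.intervalIntegrable _ _)
        (hc.stronglyMeasurableAtFilter _ _) hc.continuousAt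
    have hr' : r^m ≠ 0 := by positivity
    have h1 := (((hasDerivAt_pow m r).inv hr').mul hP).neg
    have h2 := h1.congr_of_eventuallyEq (f₁ := fun r => -(r * pB m (W g) r)) (by
      filter_upwards [lt_mem_nhds hr] with s hs
      rw [pB_subst m _ hs]
      rfl)
    refine h2.congr_deriv ?_
    rw [pB_subst m _ hr, ← hWU r hr.le]
    simp only [Pi.inv_apply]
    rcases m with _ | m
    · simp
    · push_cast
      simp
      field_simp
      ring
  · have hc := (pB_cont m (hWc g))
    have : HasDerivAt (fun r => r * pB m (W g) r) (pB m (W g) 0) 0 := by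
      rw [hasDerivAt_iff_tendsto_slope]
      have h1 : Tendsto (pB m (W g)) (nhdsWithin 0 {0}ᶜ) (nhds (pB m (W g) 0)) := hc.continuousAt.continuousWithinAt
      refine h1.congr' ?_
      filter_upwards [self_mem_nhdsWithin] with x hx
      have : x ≠ 0 := hx
      simp [slope, this]
    have h3 := this.neg
    rw [pB_zero, hWU 0 le_rfl] at h3
    exact h3
  · simp

theorem nF_lb {a b : ℝ} (ha : 0 < a) (hb : 0 < b) (x : ℝ) : -(b/2) ≤ nF a b x := by
  unfold nF
  have h1 := sin_sq_le_one x
  have : 0 ≤ a * sin x ^ 4 / 4 := by positivity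
  nlinarith

theorem nF_ub {a b : ℝ} (ha : 0 < a) (hb : 0 < b) (x : ℝ) : nF a b x ≤ a := by
  unfold nF
  have h1 := sin_sq_le_one x
  have : 0 ≤ b * sin x ^ 2 / 2 := by positivity
  have h3 := sq_nonneg (sin x)
  have h2 : sin x ^ 4 ≤ 1 := by nlinarith
  nlinarith

theorem Sol.V_bd {a b n U V} (hn : 1 ≤ n) (ha : 0 < a) (hb : 0 < b) (h : Sol a b n U V) (r : ℝ)
    (hr : 0 ≤ r) : |V r| ≤ 1 + 2 * a + b := by
  have h1 := h.En_anti hn (Set.mem_Ici.2 le_rfl) (Set.mem_Ici.2 hr) hr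
  have h2 := nF_lb ha hb (U r)
  have h3 := nF_ub ha hb (U 0)
  unfold En at h1
  rw [h.V0] at h1
  apply abs_le_of_sq_le_sq
  · nlinarith
  · linarith

theorem Sol.shoot_lim {a b n U V c} (hn : 1 ≤ n) (ha : 0 < a) (hb : 0 < b) (h : Sol a b n U V)
    (hpos : ∀ r, 0 ≤ r → 0 < U r) (h1 : U 0 < π/2) (hV : ∀ r, 0 < r → V r < 0) (hc : 0 ≤ c)
    (hE : ∀ r, 0 ≤ r → c ≤ En a b U V r) : Tendsto U atTop (nhds 0) ∧ c ≤ 0 := by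
  have hanti : AntitoneOn U (Set.Ici 0) := by
    apply antitoneOn_of_deriv_nonpos (convex_Ici _) h.contU.continuousOn
    · exact fun x _ => (h.dU x).differentiableAt.differentiableWithinAt
    · intro x hx
      rw [interior_Ici] at hx
      rw [(h.dU x).deriv]; exact (hV x hx).le
  obtain ⟨L, hL⟩ : ∃ L, Tendsto U atTop (nhds L) := by
    have hm : Antitone (fun r => U (max r 0)) := fun x y hxy =>
      hanti (Set.mem_Ici.2 (le_max_right _ _)) (Set.mem_Ici.2 (le_max_right _ _)) (max_le_max_right 0 hxy)
    refine ⟨_, (tendsto_atTop_ciInf hm ⟨0, ?_⟩).congr' ?_⟩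
    · rintro _ ⟨x, rfl⟩
      exact (hpos _ (le_max_right _ _)).le
    · filter_upwards [eventually_ge_atTop 0] with r hr
      rw [max_eq_left hr]
  have hL0 : 0 ≤ L := ge_of_tendsto hL (by
    filter_upwards [eventually_ge_atTop 0] with r hr using (hpos r hr).le)
  have hL1 : L < π/2 := lt_of_le_of_lt (le_of_tendsto hL (by
    filter_upwards [eventually_ge_atTop 0] with r hr using hanti (Set.mem_Ici.2 le_rfl) hr hr)) h1
  have hmvt : ∀ k : ℕ, ∃ ξ : ℝ, (k:ℝ) < ξ ∧ V ξ = U (k+1) - U k := by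
    intro k
    obtain ⟨ξ, h1, h2⟩ := exists_hasDerivAt_eq_slope U V (show (k:ℝ) < k+1 by linarith)
      h.contU.continuousOn (fun x _ => h.dU x)
    refine ⟨ξ, h1.1, ?_⟩
    rw [h2]; simp
  choose ξ hξ1 hξ2 using hmvt
  have hk : Tendsto (fun k : ℕ => (k:ℝ)) atTop atTop := tendsto_natCast_atTop_atTop
  have hξ : Tendsto ξ atTop atTop := tendsto_atTop_mono (fun k => (hξ1 k).le) hk
  have hVξ : Tendsto (fun k => V (ξ k)) atTop (nhds 0) := by
    have h2 := (hL.comp (tendsto_atTop_add_const_right _ 1 hk)).sub (hL.comp hk)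
    rw [sub_self] at h2
    exact h2.congr (fun k => (hξ2 k).symm)
  have hcF : c ≤ nF a b L := by
    have h2 : Tendsto (fun k => En a b U V (ξ k)) atTop (nhds (0^2/2 + nF a b L)) := by
      unfold En
      exact ((hVξ.pow 2).div_const 2).add (((nF_cont a b).tendsto L).comp (hL.comp hξ))
    have := ge_of_tendsto' h2 (fun k => hE _ ((Nat.cast_nonneg k).trans (hξ1 k).le))
    simpa using this
  rcases eq_or_lt_of_le hL0 with h0 | h0
  · rw [← h0] at hL hcF
    exact ⟨hL, by simpa [nF] using hcF⟩
  · exfalso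
    have hf := nf_pos h0 hL1 (of_nF_nonneg hb h0 hL1 (hc.trans hcF))
    set q := nf a b L
    have e1 : ∀ᶠ r in atTop, q/2 < nf a b (U r) :=
      (((nf_cont a b).tendsto L).comp hL).eventually_const_lt (by change q/2 < q; linarith)
    set C := 1 + 2*a+b with hC
    have e2 : ∀ᶠ r:ℝ in atTop, 4 * (n*C)/q ≤ r := eventually_ge_atTop _
    obtain ⟨R, hR⟩ := eventually_atTop.1 (e1.and (e2.and (eventually_gt_atTop (0:ℝ))))
    have hR0 : 0 < R := (hR R le_rfl).2.2
    have hCp : 0 < C := by positivity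
    have hbd : ∀ r, 0 < r → -C ≤ V r := fun r hr => (abs_le.1 (h.V_bd hn ha hb r hr.le)).1
    have hm : AntitoneOn (fun r => V r + q/4 * r) (Set.Ici R) := by
      have hd : ∀ x, R ≤ x → HasDerivAt (fun r => V r + q/4 * r)
          (-(((n:ℝ) - 1) / x * V x) - nf a b (U x) + q/4) x := by
        intro x hx
        have := (h.dV x (hR0.trans_le hx)).add ((hasDerivAt_id x).const_mul (q/4))
        exact this.congr_deriv (by simp)
      apply antitoneOn_of_deriv_nonpos (convex_Ici _)
      · exact fun x hx => (hd x hx).continuousAt.continuousWithinAt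
      · intro x hx
        rw [interior_Ici] at hx
        exact (hd x (le_of_lt hx)).differentiableAt.differentiableWithinAt
      · intro x hx
        rw [interior_Ici] at hx
        rw [(hd x (le_of_lt hx)).deriv]
        obtain ⟨g1, g2, g3⟩ := hR x (le_of_lt hx)
        have g4 := hbd x g3
        have hn1 : (1:ℝ) ≤ n := by exact_mod_cast hn
        have g5 : -(((n:ℝ) - 1) / x * V x) ≤ q/4 := by
          rw [div_le_iff₀ hf] at g2
          rw [div_mul_eq_mul_div, ← neg_div, div_le_iff₀ g3]
          have : -(((n:ℝ)-1) * V x) ≤ (n-1) * C := by nlinarith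
          nlinarith
        linarith
    have hfin := hm (Set.mem_Ici.2 le_rfl) (show R + 4*(C+1)/q ∈ Set.Ici R by
      rw [Set.mem_Ici]; have : 0 < 4*(C+1)/q := by positivity
      linarith) (by have : 0 < 4*(C+1)/q := by positivity
                    linarith)
    have g1 := hV R hR0
    have g2 := hbd (R + 4*(C+1)/q) (by positivity)
    have g3 : q/4 * (4*(C+1)/q) = C+1 := by field_simp
    simp only at hfin
    rw [mul_add (q/4), g3] at hfin
    linarith

theorem Sol.pos_of_nonneg {a b n U V} (hn : 1 ≤ n) (h : Sol a b n U V) (h0 : 0 < U 0)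
    (hnn : ∀ r, 0 ≤ r → 0 ≤ U r) : ∀ r, 0 ≤ r → 0 < U r := by
  intro r hr
  rcases eq_or_lt_of_le (hnn r hr) with h1 | h1
  swap
  · exact h1
  exfalso
  have hr0 : 0 < r := lt_of_le_of_ne hr (by rintro rfl; linarith)
  have hmin : IsLocalMin U r := by
    filter_upwards [lt_mem_nhds hr0] with s hs
    rw [← h1]; exact hnn s (le_of_lt hs)
  have hV : V r = 0 := hmin.hasDerivAt_eq_zero (h.dU r)
  have hz : SolP a b n (fun _ => 0) (fun _ => 0) := by
    intro s hs
    refine ⟨hasDerivAt_const _ _, ?_⟩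
    simpa [nf] using hasDerivAt_const s (0:ℝ)
  have hz2 := h.solP.cauchy hn hz hr0 h1.symm hV
  have : Tendsto U (nhdsWithin 0 (Set.Ioi 0)) (nhds 0) := by
    refine tendsto_const_nhds.congr' ?_
    filter_upwards [self_mem_nhdsWithin] with s hs
    exact (hz2 s hs).1.symm
  have h2 := tendsto_nhds_unique this (h.contU.continuousAt.continuousWithinAt)
  linarith

theorem shoot_A {a b : ℝ} {n : ℕ} (hn : 1 ≤ n) (hb : 0 < b) (hab : 2 * b < a) (α1 : ℝ)
    (hα1 : α1 < π/2) :
    ∃ α, α1 < α ∧ 0 < α ∧ α < π/2 ∧ ∀ U V, Sol a b n U V → U 0 = α → ∃ r, 0 ≤ r ∧ U r < 0 := by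
  have ha : 0 < a := by linarith
  obtain ⟨K, hK0, hK⟩ := nf_lip a b
  set η := a/4 - b/2 with hη
  have hη0 : 0 < η := by linarith
  have hFc : nF a b (π/2) = η := by simp [nF, hη]
  obtain ⟨ε, hε0, hε⟩ : ∃ ε, 0 < ε ∧ ∀ x, |x - π/2| < ε → η/2 < nF a b x := by
    have := (nF_cont a b).continuousAt (x := π/2)
    obtain ⟨ε, h1, h2⟩ := Metric.continuousAt_iff.1 this (η/2) (by linarith)
    refine ⟨ε, h1, fun x hx => ?_⟩
    have := h2 (show dist x (π/2) < ε from hx)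
    rw [Real.dist_eq, hFc, abs_lt] at this
    linarith
  set C := 1 + 2*a+b with hC
  have hCp : 0 < C := by positivity
  have hn1 : (1:ℝ) ≤ n := by exact_mod_cast hn
  set R := 4 * (n * C * π) / η with hR
  have hR0 : 0 < R := by have := pi_pos; positivity
  obtain ⟨δ, hδ0, hδ1⟩ : ∃ δ, 0 < δ ∧ δ^2 * exp ((1+K)*R) < ε^2 := by
    refine ⟨ε / 2 * exp (-((1+K)*R)/2), by positivity, ?_⟩
    have : (ε / 2 * exp (-((1+K)*R)/2))^2 * exp ((1+K)*R) = ε^2/4 := by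
      rw [mul_pow, ← exp_nat_mul, mul_assoc, ← exp_add]
      rw [show ((2:ℕ):ℝ) * (-((1+K)*R)/2) + (1+K)*R = 0 by push_cast; ring, exp_zero]; ring
    rw [this]; nlinarith [sq_pos_of_pos hε0]
  obtain ⟨α, hα, hα2⟩ : ∃ α, max (max α1 0) (π/2 - δ) < α ∧ α < π/2 := exists_between (by
    have := pi_pos
    rw [max_lt_iff, max_lt_iff]; exact ⟨⟨hα1, by linarith⟩, by linarith⟩)
  rw [max_lt_iff, max_lt_iff] at hα
  refine ⟨α, hα.1.1, hα.1.2, hα2, fun U V h hU0 => ?_⟩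
  by_contra hcon
  push Not at hcon
  have hpos := h.pos_of_nonneg hn (by rw [hU0]; exact hα.1.2) hcon
  have hconst : Sol a b n (fun _ => π/2) (fun _ => 0) := by
    refine ⟨fun r => hasDerivAt_const _ _, fun r _ => ?_, ?_, rfl⟩
    · simpa [nf] using hasDerivAt_const r (0:ℝ)
    · simpa [nf] using hasDerivAt_const (0:ℝ) (0:ℝ)
  have hER : η/2 ≤ En a b U V R := by
    have g := h.gron hn hconst hK0 hK R hR0.le
    rw [hU0] at g
    have g2 : (α - π/2)^2 ≤ δ^2 := by nlinarith
    have g3 : (U R - π/2)^2 < ε^2 := by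
      have := mul_le_mul_of_nonneg_right g2 (exp_pos ((1+K)*R)).le
      nlinarith [sq_nonneg (V R - 0)]
    have := hε _ (abs_lt_of_sq_lt_sq g3 hε0.le)
    unfold En
    nlinarith [sq_nonneg (V R)]
  have hkey : ∀ r, 0 ≤ r → (∀ s, 0 ≤ s → s ≤ r → V s ≤ 0) → η/4 ≤ En a b U V r := by
    intro r hr hVr
    rcases le_total r R with h1 | h1
    · have := h.En_anti hn (Set.mem_Ici.2 hr) (Set.mem_Ici.2 hR0.le) h1
      linarith
    · set κ := (n:ℝ) * C / R with hκ
      have hm : MonotoneOn (fun s => En a b U V s - κ * U s) (Set.Icc R r) := by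
        have hd : ∀ x, 0 < x → HasDerivAt (fun s => En a b U V s - κ * U s)
            (-(((n:ℝ) - 1) / x * V x ^ 2) - κ * V x) x := fun x hx =>
          (h.solP.dEn x hx).sub ((h.dU x).const_mul κ)
        apply monotoneOn_of_deriv_nonneg (convex_Icc _ _)
        · exact fun x hx => (hd x (hR0.trans_le hx.1)).continuousAt.continuousWithinAt
        · intro x hx
          rw [interior_Icc] at hx
          exact (hd x (hR0.trans hx.1)).differentiableAt.differentiableWithinAt
        · intro x hx
          rw [interior_Icc] at hx
          have hx0 := hR0.trans hx.1
          rw [(hd x hx0).deriv]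
          have g1 := (abs_le.1 (h.V_bd hn ha hb x hx0.le)).1
          have g2 := hVr x hx0.le hx.2.le
          have g3 : ((n:ℝ)-1)/x ≤ n / R := by
            gcongr
            · linarith
            · exact hx.1.le
          have g4 : V x ^2 ≤ C * -V x := by nlinarith
          have g5 : 0 ≤ ((n:ℝ)-1)/x := div_nonneg (by linarith) hx0.le
          have g6 : ((n:ℝ)-1)/x * V x^2 ≤ n/R * (C * -V x) := by
            apply mul_le_mul g3 g4 (sq_nonneg _) (by positivity)
          have : κ = n/R * C := by rw [hκ]; ring
          rw [this]; linarith
      have g1 := hm (Set.left_mem_Icc.2 h1) (Set.right_mem_Icc.2 h1) h1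
      simp only at g1
      have hUR : U R < π := by
        have g := h.gron hn hconst hK0 hK R hR0.le
        have hUa : U R ≤ U 0 := by
          have : AntitoneOn U (Set.Icc 0 R) := by
            apply antitoneOn_of_deriv_nonpos (convex_Icc _ _) h.contU.continuousOn
            · exact fun x _ => (h.dU x).differentiableAt.differentiableWithinAt
            · intro x hx
              rw [interior_Icc] at hx
              rw [(h.dU x).deriv]; exact hVr x hx.1.le (hx.2.le.trans h1)
          exact this (Set.left_mem_Icc.2 hR0.le) (Set.right_mem_Icc.2 hR0.le) hR0.le
        linarith [pi_pos]
      have g2 := hpos r hr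
      have g3 : κ * π = η/4 := by
        have := pi_pos
        rw [hκ, hR]; field_simp
      have g4 : 0 < κ := by positivity
      nlinarith
  have hVneg := h.V_neg hn hb (by rw [hU0]; exact hα.1.2) (by rw [hU0]; exact hα2) (fun r hr hv =>
    ⟨by linarith [hkey r hr hv], hpos r hr⟩)
  have := (h.shoot_lim (c := η/4) hn ha hb hpos (by rw [hU0]; exact hα2) hVneg (by linarith) (fun r hr =>
    hkey r hr (fun s hs _ => by
      rcases eq_or_lt_of_le hs with h2 | h2
      · rw [← h2, h.V0]
      · exact (hVneg s h2).le))).2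
  linarith

theorem sol_open_A {a b : ℝ} {n : ℕ} (hn : 1 ≤ n) {U V : ℝ → ℝ → ℝ} (hS : ∀ α, Sol a b n (U α) (V α))
    (h0 : ∀ α, U α 0 = α) : ∀ r, 0 ≤ r → Continuous (fun α => U α r) ∧ Continuous (fun α => V α r) := by
  obtain ⟨K, hK0, hK⟩ := nf_lip a b
  intro r hr
  set M := exp ((1+K)*r/2) with hM
  have hM2 : exp ((1+K)*r) = M^2 := by rw [hM, ← exp_nat_mul]; congr 1; push_cast; ring
  have hMp : 0 < M := exp_pos _
  have key : ∀ x y, |U x r - U y r| ≤ M * |x - y| ∧ |V x r - V y r| ≤ M * |x - y| := by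
    intro x y
    have g := (hS x).gron hn (hS y) hK0 hK r hr
    rw [h0, h0, hM2] at g
    have : (M * |x-y|)^2 = (x-y)^2*M^2 := by rw [mul_pow, sq_abs]; ring
    constructor <;>
    · apply abs_le_of_sq_le_sq _ (by positivity)
      rw [this]
      nlinarith [sq_nonneg (U x r - U y r), sq_nonneg (V x r - V y r)]
  constructor
  · exact (LipschitzWith.of_dist_le_mul (K := ⟨M, hMp.le⟩) (fun x y => (key x y).1)).continuous
  · exact (LipschitzWith.of_dist_le_mul (K := ⟨M, hMp.le⟩) (fun x y => (key x y).2)).continuous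

theorem exists_GS {a b : ℝ} {n : ℕ} (hn : 1 ≤ n) (hb : 0 < b) (hab : 2 * b < a) :
    ∃ U V, GS a b n U V := by
  have ha : 0 < a := by linarith
  choose U V hS h0 using fun α => exists_Sol a b hn α
  have hcont := sol_open_A hn hS h0
  obtain ⟨K, hK0, hK⟩ := nf_lip a b
  set A : Set ℝ := {α | ∃ r, 0 ≤ r ∧ U α r < 0} with hA
  set B : Set ℝ := {α | ∃ r, 0 ≤ r ∧ (∀ s, 0 ≤ s → s ≤ r → 0 < U α s) ∧ En a b (U α) (V α) r < 0} with hB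
  have hAo : IsOpen A := by
    rw [isOpen_iff_mem_nhds]
    rintro α ⟨r, hr, h⟩
    filter_upwards [(hcont r hr).1.continuousAt.eventually_lt_const h] with β hβ
    exact ⟨r, hr, hβ⟩
  have hBo : IsOpen B := by
    rw [isOpen_iff_mem_nhds]
    rintro α ⟨r, hr, h1, h2⟩
    obtain ⟨s0, hs0, hmin⟩ := isCompact_Icc.exists_isMinOn (Set.nonempty_Icc.2 hr) (hS α).contU.continuousOn
    have hm := h1 s0 hs0.1 hs0.2
    have hEc : Continuous (fun α => En a b (U α) (V α) r) := by
      unfold En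
      have h3 := (hcont r hr).1
      have h4 := (hcont r hr).2
      have h5 := nF_cont a b
      fun_prop
    have e3 : ∀ᶠ β in nhds α, (β - α)^2 * exp ((1+K)*r) < (U α s0)^2 := by
      have : Continuous fun β : ℝ => (β - α)^2 * exp ((1+K)*r) := by fun_prop
      apply this.continuousAt.eventually_lt_const
      simp; positivity
    filter_upwards [hEc.continuousAt.eventually_lt_const h2, e3] with β hβ hβ2
    refine ⟨r, hr, fun s hs hsr => ?_, hβ⟩
    have g := (hS β).gron hn (hS α) hK0 hK s hs
    rw [h0, h0] at g
    have g2 : (β - α)^2 * exp ((1+K)*s) ≤ (β - α)^2 * exp ((1+K)*r) := by gcongr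
    have g3 : U α s0 ≤ U α s := hmin ⟨hs, hsr⟩
    have g4 : (U β s - U α s)^2 < (U α s0)^2 := by nlinarith [sq_nonneg (V β s - V α s)]
    have := (abs_lt.1 (abs_lt_of_sq_lt_sq g4 hm.le)).1
    linarith
  have hdisj : ∀ α, α ∈ A → α ∈ B → False := by
    rintro α ⟨r1, hr1, g1⟩ ⟨r2, hr2, g2, g3⟩
    have hlt : r2 < r1 := by
      by_contra hc
      push Not at hc
      linarith [g2 r1 hr1 hc]
    obtain ⟨c, hc, hc2⟩ := intermediate_value_Icc' hlt.le (hS α).contU.continuousOn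
      (show (0:ℝ) ∈ Set.Icc (U α r1) (U α r2) from ⟨g1.le, (g2 r2 hr2 le_rfl).le⟩)
    have := (hS α).En_anti hn (Set.mem_Ici.2 hr2) (Set.mem_Ici.2 (hr2.trans hc.1)) hc.1
    have h5 : 0 ≤ En a b (U α) (V α) c := by
      unfold En; rw [hc2]; simp [nF]; positivity
    linarith
  obtain ⟨α1, hα1, hα1p, hα1F⟩ : ∃ α, 0 < α ∧ α < π/2 ∧ nF a b α < 0 := by
    have hc : Continuous fun x => a * sin x ^2 := by fun_prop
    have e1 : ∀ᶠ x in nhds (0:ℝ), a * sin x^2 < b := hc.continuousAt.eventually_lt_const (by simpa using hb)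
    obtain ⟨ε, hε, h1⟩ := Metric.eventually_nhds_iff.1 e1
    have hp := pi_pos
    set x := min (ε/2) (π/4) with hx
    have hx0 : 0 < x := by positivity
    have hx1 : x ≤ ε/2 := min_le_left _ _
    have hx2 : x ≤ π/4 := min_le_right _ _
    refine ⟨x, hx0, by linarith, ?_⟩
    have := nF_le hb hx0.le (by linarith) (h1 (y := x) (by rw [dist_zero_right, Real.norm_eq_abs, abs_of_pos hx0]; linarith)).le
    have h3 : 0 < b/π^2 * x^2 := by positivity
    linarith
  obtain ⟨α2, h12, hα2, hα2p, hα2A⟩ := shoot_A (n := n) hn hb hab α1 hα1p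
  have hex : ∃ α ∈ Set.Icc α1 α2, α ∉ A ∧ α ∉ B := by
    by_contra hc
    push Not at hc
    obtain ⟨x, hx, hxA, hxB⟩ := isPreconnected_Icc (a := α1) (b := α2) A B hAo hBo (fun α hα => by
      by_cases h : α ∈ A
      · exact Or.inl h
      · exact Or.inr (hc α hα h)) ⟨α2, Set.right_mem_Icc.2 h12.le, hα2A _ _ (hS α2) (h0 α2)⟩
      ⟨α1, Set.left_mem_Icc.2 h12.le, 0, le_rfl, fun s hs hs2 => by
        rw [le_antisymm hs2 hs, h0]; exact hα1, by
        unfold En; rw [(hS α1).V0, h0]; simpa using hα1F⟩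
    exact hdisj x hxA hxB
  obtain ⟨α, hα, hαA, hαB⟩ := hex
  have hap : 0 < α := hα1.trans_le hα.1
  have hap2 : α < π/2 := hα.2.trans_lt hα2p
  have hnn : ∀ r, 0 ≤ r → 0 ≤ U α r := by
    intro r hr
    by_contra hc
    push Not at hc
    exact hαA ⟨r, hr, hc⟩
  have h := hS α
  have hpos := h.pos_of_nonneg hn (by rw [h0]; exact hap) hnn
  have hE : ∀ r, 0 ≤ r → 0 ≤ En a b (U α) (V α) r := by
    intro r hr
    by_contra hc
    push Not at hc
    exact hαB ⟨r, hr, fun s hs _ => hpos s hs, hc⟩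
  have hV := h.V_neg hn hb (by rw [h0]; exact hap) (by rw [h0]; exact hap2) (fun r hr _ => ⟨hE r hr, hpos r hr⟩)
  have hlim := (h.shoot_lim hn ha hb hpos (by rw [h0]; exact hap2) hV le_rfl hE).1
  have hanti : AntitoneOn (U α) (Set.Ici 0) := by
    apply antitoneOn_of_deriv_nonpos (convex_Ici _) h.contU.continuousOn
    · exact fun x _ => (h.dU x).differentiableAt.differentiableWithinAt
    · intro x hx
      rw [interior_Ici] at hx
      rw [(h.dU x).deriv]; exact (hV x hx).le
  refine ⟨U α, V α, ⟨h, hpos, fun r hr => ?_, hlim⟩⟩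
  have := hanti (Set.mem_Ici.2 le_rfl) (Set.mem_Ici.2 hr) hr
  rw [h0] at this
  linarith

abbrev Eu (d : ℕ) := EuclideanSpace ℝ (Fin d)

def eb {d : ℕ} (i : Fin d) : Eu d := EuclideanSpace.single i 1

def D2 {d : ℕ} (u : Eu d → ℝ) (x v w : Eu d) : ℝ := fderiv ℝ (fderiv ℝ u) x v w

def lap {d : ℕ} (u : Eu d → ℝ) (x : Eu d) : ℝ := ∑ i, D2 u x (eb i) (eb i)

theorem line0 {d : ℕ} (x v : Eu d) (t : ℝ) : HasDerivAt (fun t : ℝ => x + t • v) v t := by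
  have := ((hasDerivAt_id t).smul_const v).const_add x
  exact this.congr_deriv (by simp)

theorem line1 {d : ℕ} {u : Eu d → ℝ} (hu : ContDiff ℝ 2 u) (x v : Eu d) (t : ℝ) :
    HasDerivAt (fun t : ℝ => u (x + t • v)) (fderiv ℝ u (x + t • v) v) t := by
  have h1 := (hu.differentiable (by norm_num) (x + t • v)).hasFDerivAt
  exact h1.comp_hasDerivAt t (line0 x v t)

theorem line2 {d : ℕ} {u : Eu d → ℝ} (hu : ContDiff ℝ 2 u) (x v w : Eu d) (t : ℝ) :
    HasDerivAt (fun t : ℝ => fderiv ℝ u (x + t • v) w) (D2 u (x + t • v) v w) t := by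
  have h2 : ContDiff ℝ 1 (fderiv ℝ u) := hu.fderiv_right (by norm_num)
  have h1 := (h2.differentiable (by norm_num) (x + t • v)).hasFDerivAt
  have h3 := h1.comp_hasDerivAt t (line0 x v t)
  exact h3.clm_apply (hasDerivAt_const t w) |>.congr_deriv (by simp [D2])

theorem lap_ge {d : ℕ} {u h : Eu d → ℝ} (hu : ContDiff ℝ 2 u) {x : Eu d} {h' : Fin d → ℝ → ℝ}
    {c : Fin d → ℝ} (h1 : ∀ i t, HasDerivAt (fun t : ℝ => h (x + t • eb i)) (h' i t) t)
    (h2 : ∀ i, HasDerivAt (h' i) (c i) 0) (hm : ∀ᶠ y in nhds x, u x - h x ≤ u y - h y) :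
    ∑ i, c i ≤ lap u x := by
  unfold lap
  apply Finset.sum_le_sum
  intro i _
  have hc : Tendsto (fun t : ℝ => x + t • eb i) (nhds 0) (nhds x) := by
    have : Continuous (fun t : ℝ => x + t • eb i) := by fun_prop
    simpa using this.tendsto 0
  obtain ⟨ε, hε, he⟩ := Metric.eventually_nhds_iff.1 (hc.eventually hm)
  have l2 := line2 hu x (eb i) (eb i) 0
  rw [zero_smul, add_zero] at l2
  have := sd_min (g := fun t : ℝ => u (x + t • eb i) - h (x + t • eb i)) (r0 := 0) hε
    (fun r _ => (line1 hu x (eb i) r).sub (h1 i r))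
    (l2.sub (h2 i)) (by
      intro r hr
      have := he (y := r) (by rw [Real.dist_eq, abs_lt]; constructor <;> linarith [hr.1, hr.2])
      simpa using this)
  linarith [this.2]

theorem D2_sub {d : ℕ} {u v : Eu d → ℝ} (hu : ContDiff ℝ 2 u) (hv : ContDiff ℝ 2 v) (x a b : Eu d) :
    D2 (fun x => u x - v x) x a b = D2 u x a b - D2 v x a b := by
  have h1 := line2 (hu.sub hv) x a b 0
  have h2 := (line2 hu x a b 0).sub (line2 hv x a b 0)
  rw [zero_smul, add_zero] at h1 h2
  refine h1.unique (h2.congr_of_eventuallyEq (Eventually.of_forall fun t => ?_))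
  beta_reduce
  rw [fderiv_fun_sub (hu.differentiable (by norm_num) _) (hv.differentiable (by norm_num) _)]
  rfl

theorem lap_sub {d : ℕ} {u v : Eu d → ℝ} (hu : ContDiff ℝ 2 u) (hv : ContDiff ℝ 2 v) (x : Eu d) :
    lap (fun x => u x - v x) x = lap u x - lap v x := by
  simp only [lap, D2_sub hu hv, Finset.sum_sub_distrib]

def rl {d : ℕ} (e : Eu d) (v : Eu d) : Eu d := v - (2 * inner ℝ v e) • e

def rf {d : ℕ} (e : Eu d) (l : ℝ) (x : Eu d) : Eu d := x + (2 * (l - inner ℝ x e)) • e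

theorem rf_line {d : ℕ} (e : Eu d) (l : ℝ) (x v : Eu d) (t : ℝ) :
    rf e l (x + t • v) = rf e l x + t • rl e v := by
  simp only [rf, rl, inner_add_left, real_inner_smul_left]
  module

theorem rf_contDiff {d : ℕ} (e : Eu d) (l : ℝ) : ContDiff ℝ 2 (rf e l) := by
  unfold rf
  exact contDiff_id.add ((contDiff_const.mul (contDiff_const.sub (contDiff_id.inner ℝ contDiff_const))).smul contDiff_const)

theorem rf_cont {d : ℕ} (e : Eu d) : Continuous (fun p : ℝ × Eu d => rf e p.1 p.2) := by
  unfold rf; fun_prop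

theorem rf_inner {d : ℕ} {e : Eu d} (he : ‖e‖ = 1) (l : ℝ) (x : Eu d) :
    inner ℝ (rf e l x) e = 2 * l - inner ℝ x e := by
  simp only [rf, inner_add_left, real_inner_smul_left, real_inner_self_eq_norm_sq, he]
  ring

theorem rf_rf {d : ℕ} {e : Eu d} (he : ‖e‖ = 1) (l : ℝ) (x : Eu d) : rf e l (rf e l x) = x := by
  rw [rf, rf_inner he, rf]
  module

theorem fd_rf {d : ℕ} {u : Eu d → ℝ} (hu : ContDiff ℝ 2 u) (e : Eu d) (l : ℝ) (x v : Eu d) :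
    fderiv ℝ (fun x => u (rf e l x)) x v = fderiv ℝ u (rf e l x) (rl e v) := by
  have h1 := line1 (hu.comp (rf_contDiff e l)) x v 0
  have h2 := line1 hu (rf e l x) (rl e v) 0
  simp only [Function.comp_def, rf_line] at h1
  have := h1.unique h2
  simpa [Function.comp_def] using this

theorem D2_rf {d : ℕ} {u : Eu d → ℝ} (hu : ContDiff ℝ 2 u) (e : Eu d) (l : ℝ) (x v w : Eu d) :
    D2 (fun x => u (rf e l x)) x v w = D2 u (rf e l x) (rl e v) (rl e w) := by
  have h1 := line2 (hu.comp (rf_contDiff e l)) x v w 0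
  have h2 := line2 hu (rf e l x) (rl e v) (rl e w) 0
  simp only [Function.comp_def, fd_rf hu, rf_line] at h1
  have := h1.unique h2
  simpa using this

theorem sum_eb {d : ℕ} (e : Eu d) : ∑ i, e i • eb i = e := by
  have := (EuclideanSpace.basisFun (Fin d) ℝ).sum_repr e
  simpa [eb] using this

theorem inner_eb {d : ℕ} (e : Eu d) (i : Fin d) : inner ℝ (eb i) e = e i := by
  simp [eb, EuclideanSpace.inner_single_left]

theorem eu_norm_sq {d : ℕ} (e : Eu d) : ‖e‖^2 = ∑ i, e i ^ 2 := by
  rw [EuclideanSpace.real_norm_sq_eq]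

theorem lap_rf {d : ℕ} {u : Eu d → ℝ} (hu : ContDiff ℝ 2 u) {e : Eu d} (he : ‖e‖ = 1) (l : ℝ)
    (x : Eu d) : lap (fun x => u (rf e l x)) x = lap u (rf e l x) := by
  unfold lap
  simp only [D2_rf hu, rl, inner_eb]
  set y := rf e l x
  have key : ∀ i, D2 u y (eb i - (2 * e i) • e) (eb i - (2 * e i) • e) =
      D2 u y (eb i) (eb i) - 2 * (D2 u y (e i • eb i) e) - 2 * (D2 u y e (e i • eb i)) +
        4 * (e i ^2) * D2 u y e e := by
    intro i
    simp [D2]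
    ring
  simp only [key, Finset.sum_add_distrib, Finset.sum_sub_distrib, ← Finset.mul_sum, ← Finset.sum_mul]
  have h1 : ∑ i, D2 u y (e i • eb i) e = D2 u y e e := by
    conv_rhs => rw [D2]; arg 1; rw [← sum_eb e]
    rw [map_sum]; simp [D2]
  have h2 : ∑ i, D2 u y e (e i • eb i) = D2 u y e e := by
    conv_rhs => rw [D2]; arg 2; rw [← sum_eb e]
    rw [map_sum]; simp [D2]
  rw [h1, h2, ← eu_norm_sq, he]
  ring

theorem bar_line {d : ℕ} (x y : Eu d) (i : Fin d) (t : ℝ) :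
    ‖x + t • eb i - y‖^2 = ‖x - y‖^2 + 2 * t * (x - y) i + t^2 := by
  have : x + t • eb i - y = (x - y) + t • eb i := by abel
  rw [this, norm_add_sq_real, real_inner_smul_right, real_inner_comm, inner_eb, norm_smul]
  simp [eb]; ring

theorem hopf {d : ℕ} {w : Eu d → ℝ} (hw : ContDiff ℝ 2 w) {y p : Eu d} {R K : ℝ} (hR : 0 < R)
    (hK : 0 < K) (hp : ‖p - y‖ = R) (hwp : w p = 0) (hpos : ∀ x, ‖x - y‖ < R → 0 < w x)
    (hnn : ∀ x, ‖x - y‖ ≤ R → 0 ≤ w x) (hlap : ∀ x, ‖x - y‖ < R → lap w x ≤ K * w x) :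
    fderiv ℝ w p (p - y) < 0 := by
  set A : ℝ := (2 * d + K + 1) / R^2 + 1 with hA
  have hA1 : 1 ≤ A := by rw [hA]; have : 0 ≤ (2 * d + K + 1) / R^2 := by positivity
                         linarith
  have hA0 : 0 < A := by linarith
  have hA2 : K < A * (A * R^2 - 2 * d) := by
    have : A * R^2 = 2 * d + K + 1 + R^2 := by rw [hA]; field_simp
    rw [this]; nlinarith [sq_nonneg R]
  have hcw := hw.continuous
  obtain ⟨xm, hxm, hmin⟩ := (isCompact_closedBall y (R/2)).exists_isMinOn
    ⟨y, Metric.mem_closedBall_self (by positivity)⟩ hcw.continuousOn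
  set m := w xm with hm
  have hm0 : 0 < m := hpos xm (by
    rw [mem_closedBall_iff_norm] at hxm; linarith)
  set h : Eu d → ℝ := fun x => exp (-(A * ‖x - y‖^2)) - exp (-(A * R^2)) with hh
  have hhc : Continuous h := by rw [hh]; fun_prop
  have hh1 : ∀ x, h x ≤ 1 := by
    intro x
    have h1 : exp (-(A * ‖x - y‖^2)) ≤ 1 := exp_le_one_iff.2 (by
      have : 0 ≤ A * ‖x - y‖^2 := by positivity
      linarith)
    have := exp_pos (-(A * R^2))
    simp only [hh]; linarith
  set S : Set (Eu d) := {x | R/2 ≤ ‖x - y‖ ∧ ‖x - y‖ ≤ R} with hS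
  have hScl : IsCompact S := by
    have h1 : IsClosed {x : Eu d | R/2 ≤ ‖x - y‖} := isClosed_le continuous_const (by fun_prop)
    have : S = Metric.closedBall y R ∩ {x : Eu d | R/2 ≤ ‖x - y‖} := by
      ext x; rw [hS, Set.mem_inter_iff, mem_closedBall_iff_norm]
      exact and_comm
    rw [this]
    exact (isCompact_closedBall y R).inter_right h1
  have hge : ∀ x ∈ S, m * h x ≤ w x := by
    by_contra hc
    push Not at hc
    obtain ⟨x1, hx1, hx1n⟩ := hc
    obtain ⟨x, hx, hxmin⟩ := hScl.exists_isMinOn ⟨x1, hx1⟩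
      (f := fun x => w x - m * h x) (by fun_prop)
    have hxn : w x - m * h x < 0 := lt_of_le_of_lt (hxmin hx1) (by linarith)
    have b1 : R/2 < ‖x - y‖ := by
      refine lt_of_le_of_ne hx.1 (fun he => ?_)
      have : m ≤ w x := hmin (by rw [mem_closedBall_iff_norm, ← he])
      have := hh1 x
      nlinarith
    have b2 : ‖x - y‖ < R := by
      refine lt_of_le_of_ne hx.2 (fun he => ?_)
      have h1 : h x = 0 := by simp [hh, he]
      have := hnn x hx.2
      rw [h1] at hxn; linarith
    have hev : ∀ᶠ z in nhds x, w x - m * h x ≤ w z - m * h z := by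
      have e1 : ∀ᶠ z in nhds x, R/2 < ‖z - y‖ :=
        (by fun_prop : ContinuousAt (fun z => ‖z - y‖) x).eventually_const_lt b1
      have e2 : ∀ᶠ z in nhds x, ‖z - y‖ < R :=
        (by fun_prop : ContinuousAt (fun z => ‖z - y‖) x).eventually_lt_const b2
      filter_upwards [e1, e2] with z h1 h2
      exact hxmin ⟨h1.le, h2.le⟩
    set ρ := ‖x - y‖ with hρ
    set E := exp (-(A * ρ^2)) with hE
    have hE0 : 0 < E := exp_pos _
    have := lap_ge hw (h := fun x => m * h x) (x := x)
      (h' := fun i t => m * (exp (-(A * (ρ^2 + 2 * t * (x - y) i + t^2))) * (-(A * (2 * (x - y) i + 2 * t)))))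
      (c := fun i => m * (E * (4 * A^2 * (x-y) i ^2 - 2 * A))) (by
        intro i t
        simp only [hh, bar_line]
        have h1 : HasDerivAt (fun t : ℝ => -(A * (ρ^2 + 2 * t * (x - y) i + t^2))) (-(A * (2 * (x - y) i + 2 * t))) t := by
          have := ((((((hasDerivAt_id t).const_mul 2).mul_const ((x-y) i)).const_add (ρ^2)).add (hasDerivAt_pow 2 t)).const_mul A).neg
          exact this.congr_deriv (by simp)
        exact (h1.exp.sub_const _).const_mul m) (by
        intro i
        have h1 : HasDerivAt (fun t : ℝ => -(A * (ρ^2 + 2 * t * (x - y) i + t^2))) (-(A * (2 * (x - y) i + 2 * 0))) 0 := by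
          have := ((((((hasDerivAt_id (0:ℝ)).const_mul 2).mul_const ((x-y) i)).const_add (ρ^2)).add (hasDerivAt_pow 2 (0:ℝ))).const_mul A).neg
          exact this.congr_deriv (by simp)
        have h2 : HasDerivAt (fun t : ℝ => -(A * (2 * (x - y) i + 2 * t))) (-(A * 2)) 0 := by
          have := ((((hasDerivAt_id (0:ℝ)).const_mul 2).const_add (2 * (x-y) i)).const_mul A).neg
          exact this.congr_deriv (by simp)
        refine ((h1.exp.mul h2).const_mul m).congr_deriv ?_
        simp only [mul_zero, zero_mul, add_zero, hE]
        rw [show ρ^2 + 0^2 = ρ^2 by ring]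
        ring) hev
    have hsum : ∑ i, m * (E * (4 * A^2 * (x-y) i ^2 - 2 * A)) = m * (E * (4 * A^2 * ρ^2 - 2 * A * d)) := by
      rw [← Finset.mul_sum, ← Finset.mul_sum, Finset.sum_sub_distrib, ← Finset.mul_sum, ← eu_norm_sq]
      simp; left; left; ring
    rw [hsum] at this
    have l1 := hlap x b2
    have l2 : w x < m * E := by
      have : h x < E := by simp only [hh]; have := exp_pos (-(A * R^2)); linarith
      nlinarith
    have l3 : R^2/4 ≤ ρ^2 := by nlinarith
    have l4 : K < 4 * A^2 * ρ^2 - 2 * A * d := by nlinarith [sq_nonneg A]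
    have l5 : (m * E) * K < (m * E) * (4 * A^2 * ρ^2 - 2 * A * d) := mul_lt_mul_of_pos_left l4 (by positivity)
    nlinarith
  -- derivative along the inner normal
  have l1 := line1 hw p (y - p) 0
  rw [zero_smul, add_zero] at l1
  have hq : HasDerivAt (fun t : ℝ => -(A * R^2 * (1-t)^2)) (2 * A * R^2) 0 := by
    have := (((((hasDerivAt_id (0:ℝ)).const_sub 1).pow 2).const_mul (A*R^2))).neg
    exact this.congr_deriv (by simp; ring)
  have hg := l1.sub ((hq.exp.sub_const (exp (-(A*R^2)))).const_mul m)
  have hfin : 0 ≤ fderiv ℝ w p (y - p) - m * (exp (-(A * R^2 * (1-0)^2)) * (2 * A * R^2)) := by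
    have h1 := (hasDerivAt_iff_tendsto_slope.1 hg).mono_left
      (nhdsWithin_mono (0:ℝ) (fun y (hy : y ∈ Set.Ioi 0) => ne_of_gt hy))
    refine ge_of_tendsto h1 ?_
    filter_upwards [Ioo_mem_nhdsGT (show (0:ℝ) < 1/2 by norm_num)] with t ht
    rw [slope_def_field]
    apply div_nonneg _ (by linarith [ht.1])
    have hn : ‖p + t • (y - p) - y‖ = (1-t) * R := by
      have : p + t • (y - p) - y = (1 - t) • (p - y) := by module
      rw [this, norm_smul, hp, Real.norm_eq_abs, abs_of_nonneg (by linarith [ht.2])]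
    have h2 := hge (p + t • (y - p)) ⟨by rw [hn]; nlinarith [ht.1, ht.2], by rw [hn]; nlinarith [ht.1, ht.2]⟩
    simp only [hh, hn] at h2
    simp only [Pi.sub_apply, zero_smul, add_zero, hwp]
    rw [show -(A * ((1-t)*R)^2) = -(A * R^2 * (1-t)^2) by ring] at h2
    simp
    linarith
  have hneg : fderiv ℝ w p (y - p) = - fderiv ℝ w p (p - y) := by
    rw [← map_neg]; simp
  rw [hneg] at hfin
  have : 0 < m * (exp (-(A * R^2 * (1-0)^2)) * (2 * A * R^2)) := by positivity
  linarith

/-- strong maximum principle on an open preconnected set -/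
theorem strong_max {d : ℕ} {w : Eu d → ℝ} (hw : ContDiff ℝ 2 w) {S : Set (Eu d)} (hS : IsOpen S)
    (hSc : IsPreconnected S) {K : ℝ} (hK : 0 < K) (hnn : ∀ x ∈ S, 0 ≤ w x)
    (hlap : ∀ x ∈ S, lap w x ≤ K * w x) {x0 : Eu d} (hx0 : x0 ∈ S) (h0 : w x0 = 0) :
    ∀ x ∈ S, w x = 0 := by
  have hcw := hw.continuous
  by_contra hc
  push Not at hc
  obtain ⟨x1, hx1, h1⟩ := hc
  have hPo : IsOpen {x | 0 < w x} := isOpen_lt continuous_const hcw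
  by_cases hop : ∀ z ∈ S, w z = 0 → ∀ᶠ y in nhds z, w y = 0
  · have hZo : IsOpen {x | x ∈ S ∧ w x = 0} := by
      rw [isOpen_iff_mem_nhds]
      rintro z ⟨h2, h3⟩
      filter_upwards [hS.mem_nhds h2, hop z h2 h3] with y h4 h5 using ⟨h4, h5⟩
    obtain ⟨z, hz, hz1, hz2⟩ := hSc {x | x ∈ S ∧ w x = 0} {x | 0 < w x} hZo hPo (fun x hx => by
      rcases eq_or_lt_of_le (hnn x hx) with h | h
      · exact Or.inl ⟨hx, h.symm⟩
      · exact Or.inr h) ⟨x0, hx0, hx0, h0⟩ ⟨x1, hx1, lt_of_le_of_ne (hnn x1 hx1) (Ne.symm h1)⟩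
    have : w z = 0 := hz1.2
    have : 0 < w z := hz2
    linarith
  · push Not at hop
    obtain ⟨z, hz, hwz, hfr⟩ := hop
    obtain ⟨η, hη, hball⟩ := Metric.isOpen_iff.1 hS z hz
    obtain ⟨y, hy1, hy2⟩ := (hfr.and_eventually (Metric.ball_mem_nhds z (show 0 < η/4 by positivity))).exists
    rw [dist_eq_norm] at hy2
    have hyS : ∀ x, ‖x - y‖ ≤ η/4 → x ∈ S := fun x hx => hball (by
      rw [mem_ball_iff_norm]
      calc ‖x - z‖ = ‖(x - y) + (y - z)‖ := by congr 1; abel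
        _ ≤ ‖x - y‖ + ‖y - z‖ := norm_add_le _ _
        _ < η := by linarith)
    have hcomp : IsCompact ({x | w x = 0} ∩ Metric.closedBall y (η/4)) :=
      (isCompact_closedBall y (η/4)).inter_left (isClosed_eq hcw continuous_const)
    obtain ⟨p, hp, hpmin⟩ := hcomp.exists_isMinOn ⟨z, hwz, by
      rw [mem_closedBall_iff_norm, norm_sub_rev]; exact hy2.le⟩ (f := fun x => ‖x - y‖) (by fun_prop)
    have hpη : ‖p - y‖ ≤ η/4 := mem_closedBall_iff_norm.1 hp.2
    have hwp : w p = 0 := hp.1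
    have hR : 0 < ‖p - y‖ := by
      rw [norm_pos_iff, sub_ne_zero]
      rintro rfl
      exact hy1 hwp
    have hH := hopf hw hR hK rfl hwp (fun x hx => by
      refine lt_of_le_of_ne (hnn x (hyS x (hx.le.trans hpη))) (fun he => ?_)
      have := hpmin (show x ∈ _ from ⟨he.symm, mem_closedBall_iff_norm.2 (hx.le.trans hpη)⟩)
      exact absurd hx (not_lt.2 this)) (fun x hx => hnn x (hyS x (hx.trans hpη)))
      (fun x hx => hlap x (hyS x (hx.le.trans hpη)))
    have hpS := hyS p hpη
    have hlm : IsLocalMin w p := by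
      filter_upwards [hS.mem_nhds hpS] with x hx
      rw [hwp]; exact hnn x hx
    rw [hlm.fderiv_eq_zero] at hH
    simp at hH

structure MP {d : ℕ} (f : ℝ → ℝ) (K δ : ℝ) (u : Eu d → ℝ) : Prop where
  cd : ContDiff ℝ 2 u
  pos : ∀ x, 0 < u x
  lim : Tendsto u (cocompact (Eu d)) (nhds 0)
  hK : 0 < K
  lip : ∀ x y, |f x - f y| ≤ K * |x - y|
  hδ : 0 < δ
  anti : StrictAntiOn f (Set.Icc 0 δ)
  eq : ∀ x, lap u x = - f (u x)

theorem rl_self {d : ℕ} {e : Eu d} (he : ‖e‖ = 1) : rl e e = -e := by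
  rw [rl, real_inner_self_eq_norm_sq, he]; module

theorem rf_tendsto {d : ℕ} {e : Eu d} (he : ‖e‖ = 1) (l : ℝ) :
    Tendsto (rf e l) (cocompact (Eu d)) (cocompact (Eu d)) := by
  have hc : Continuous (rf e l) := (rf_contDiff e l).continuous
  let H : Eu d ≃ₜ Eu d := ⟨⟨rf e l, rf e l, rf_rf he l, rf_rf he l⟩, hc, hc⟩
  exact H.isClosedEmbedding.tendsto_cocompact

theorem MP.wcd {d : ℕ} {f K δ} {u : Eu d → ℝ} (h : MP f K δ u) (e : Eu d) (l : ℝ) :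
    ContDiff ℝ 2 (fun x => u x - u (rf e l x)) := h.cd.sub (h.cd.comp (rf_contDiff e l))

theorem MP.wlap {d : ℕ} {f K δ} {u : Eu d → ℝ} (h : MP f K δ u) {e : Eu d} (he : ‖e‖ = 1) (l : ℝ)
    (x : Eu d) : lap (fun x => u x - u (rf e l x)) x = f (u (rf e l x)) - f (u x) := by
  have hc : ContDiff ℝ 2 (fun x => u (rf e l x)) := h.cd.comp (rf_contDiff e l)
  rw [lap_sub h.cd hc, lap_rf h.cd he, h.eq, h.eq]
  ring

theorem MP.wfd {d : ℕ} {f K δ} {u : Eu d → ℝ} (h : MP f K δ u) {e : Eu d} (he : ‖e‖ = 1) (l : ℝ)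
    (x : Eu d) : fderiv ℝ (fun x => u x - u (rf e l x)) x e = fderiv ℝ u x e + fderiv ℝ u (rf e l x) e := by
  have hc : ContDiff ℝ 2 (fun x => u (rf e l x)) := h.cd.comp (rf_contDiff e l)
  rw [fderiv_fun_sub (h.cd.differentiable (by norm_num) _)
    (hc.differentiable (by norm_num) _)]
  rw [ContinuousLinearMap.sub_apply, fd_rf h.cd, rl_self he]
  simp

theorem MP.bad {d : ℕ} {f K δ} {u : Eu d → ℝ} (h : MP f K δ u) {e : Eu d} (he : ‖e‖ = 1) {l : ℝ}
    {x1 : Eu d} (hx1 : inner ℝ x1 e ≤ l) (hb : u x1 < u (rf e l x1)) :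
    ∃ z, l ≤ inner ℝ z e ∧ δ < u z ∧ u (rf e l z) ≤ u z ∧
      fderiv ℝ u (rf e l z) e + fderiv ℝ u z e = 0 := by
  set w : Eu d → ℝ := fun x => u x - u (rf e l x) with hw
  have hwc : ContDiff ℝ 2 w := h.wcd e l
  have hcw := hwc.continuous
  have hwl : Tendsto w (cocompact _) (nhds 0) := by
    have := h.lim.sub (h.lim.comp (rf_tendsto he l))
    simpa using this
  have hw1 : w x1 < 0 := by simp only [hw]; linarith
  obtain ⟨x, hx, hmin⟩ : ∃ x, inner ℝ x e ≤ l ∧ ∀ y, inner ℝ y e ≤ l → w x ≤ w y := by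
    have hcl : IsClosed {x : Eu d | inner ℝ x e ≤ l} := isClosed_le (by fun_prop) continuous_const
    obtain ⟨x, hx, hm⟩ := hcw.continuousOn.exists_isMinOn' hcl (x₀ := x1) hx1 (by
      have := hwl.eventually_const_lt hw1
      filter_upwards [inf_le_left (b := 𝓟 {x : Eu d | inner ℝ x e ≤ l}) this] with y hy using le_of_lt hy)
    exact ⟨x, hx, fun y hy => hm hy⟩
  have hwx : w x < 0 := lt_of_le_of_lt (hmin x1 hx1) hw1
  have hxl : inner ℝ x e < l := by
    refine lt_of_le_of_ne hx (fun hE => ?_)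
    have : rf e l x = x := by rw [rf, hE]; simp
    simp only [hw, this, sub_self] at hwx
    exact lt_irrefl _ hwx
  have hev : ∀ᶠ y in nhds x, w x ≤ w y := by
    have : ∀ᶠ y in nhds x, inner ℝ y e < l :=
      (by fun_prop : ContinuousAt (fun y : Eu d => (inner ℝ y e : ℝ)) x).eventually_lt_const hxl
    filter_upwards [this] with y hy using hmin y hy.le
  have hlap := lap_ge hwc (h := fun _ => 0) (x := x) (h' := fun _ _ => 0) (c := fun _ => 0)
    (fun i t => hasDerivAt_const _ _) (fun i => hasDerivAt_const _ _) (by simpa using hev)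
  rw [h.wlap he] at hlap
  have hlm : IsLocalMin w x := hev
  have hfd : fderiv ℝ w x e = 0 := by rw [hlm.fderiv_eq_zero]; simp
  rw [h.wfd he] at hfd
  have hlt : u x < u (rf e l x) := by simp only [hw] at hwx; linarith
  refine ⟨rf e l x, by rw [rf_inner he]; linarith, ?_, by rw [rf_rf he]; exact hlt.le,
    by rw [rf_rf he]; exact hfd⟩
  by_contra hc
  push Not at hc
  have := h.anti ⟨(h.pos x).le, hlt.le.trans hc⟩ ⟨(h.pos _).le, hc⟩ hlt
  simp at hlap
  linarith

theorem MP.slide {d : ℕ} {f K δ} {u : Eu d → ℝ} (h : MP f K δ u) {x0 : Eu d} (hx0 : ∀ x, u x ≤ u x0)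
    (hδ : δ < u x0) {e : Eu d} (he : ‖e‖ = 1) {l : ℝ} (hl : inner ℝ x0 e < l) (x : Eu d)
    (hx : inner ℝ x e ≤ l) : u (rf e l x) ≤ u x := by
  by_contra hcon
  push Not at hcon
  have hcu := h.cd.continuous
  have hcd : Continuous (fderiv ℝ u) := h.cd.continuous_fderiv (by norm_num)
  set C : Set (Eu d) := {z | δ ≤ u z} with hC
  have hCc : IsCompact C := by
    have h1 := h.lim.eventually_lt_const h.hδ
    obtain ⟨T, hT, hT2⟩ := mem_cocompact.1 h1
    refine hT.of_isClosed_subset (isClosed_le continuous_const hcu) (fun z hz => ?_)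
    by_contra hz2
    have : u z < δ := hT2 hz2
    have : δ ≤ u z := hz
    linarith
  obtain ⟨R0, hR0⟩ := hCc.bddAbove_image (f := fun z : Eu d => (inner ℝ z e : ℝ)) (by fun_prop)
  set 𝒦 : Set (ℝ × Eu d) := {p | inner ℝ x0 e ≤ p.1 ∧ p.1 ≤ inner ℝ p.2 e ∧ p.2 ∈ C ∧
    u (rf e p.1 p.2) ≤ u p.2 ∧ fderiv ℝ u (rf e p.1 p.2) e + fderiv ℝ u p.2 e = 0} with h𝒦
  have hrf := rf_cont e
  have h𝒦c : IsCompact 𝒦 := by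
    refine (isCompact_Icc.prod hCc).of_isClosed_subset (s := Set.Icc (inner ℝ x0 e : ℝ) R0 ×ˢ C) ?_ ?_
    · have c1 : IsClosed {p : ℝ × Eu d | (inner ℝ x0 e : ℝ) ≤ p.1} := isClosed_le (by fun_prop) (by fun_prop)
      have c2 : IsClosed {p : ℝ × Eu d | p.1 ≤ (inner ℝ p.2 e : ℝ)} := isClosed_le (by fun_prop) (by fun_prop)
      have c4 : IsClosed {p : ℝ × Eu d | u (rf e p.1 p.2) ≤ u p.2} := isClosed_le (by fun_prop) (by fun_prop)
      have c5 : IsClosed {p : ℝ × Eu d | fderiv ℝ u (rf e p.1 p.2) e + fderiv ℝ u p.2 e = 0} :=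
        isClosed_eq (by fun_prop) (by fun_prop)
      exact c1.inter (c2.inter ((hCc.isClosed.preimage continuous_snd).inter (c4.inter c5)))
    · rintro ⟨p, z⟩ ⟨h1, h2, h3, -, -⟩
      exact ⟨⟨h1, h2.trans (hR0 ⟨z, h3, rfl⟩)⟩, h3⟩
  have hbad : ∀ l x, inner ℝ x0 e ≤ l → inner ℝ x e ≤ l → u x < u (rf e l x) → ∃ z, (l, z) ∈ 𝒦 := by
    intro l x h1 h2 h3
    obtain ⟨z, z1, z2, z3, z4⟩ := h.bad he h2 h3
    exact ⟨z, h1, z1, z2.le, z3, z4⟩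
  obtain ⟨z0, hz0⟩ := hbad l x hl.le hx hcon
  obtain ⟨⟨L, z⟩, hLz, hmax⟩ := h𝒦c.exists_isMaxOn ⟨_, hz0⟩ (f := Prod.fst) continuous_fst.continuousOn
  have hlL : l ≤ L := hmax hz0
  have hL0 : inner ℝ x0 e < L := hl.trans_le hlL
  have hgood : ∀ l' x, L < l' → inner ℝ x e ≤ l' → u (rf e l' x) ≤ u x := by
    intro l' x h1 h2
    by_contra hc
    push Not at hc
    obtain ⟨z', hz'⟩ := hbad l' x (hL0.le.trans h1.le) h2 hc
    have : l' ≤ L := hmax hz'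
    linarith
  have hgoodL : ∀ x, inner ℝ x e ≤ L → u (rf e L x) ≤ u x := by
    intro x hx
    have hc : Continuous (fun l' => u (rf e l' x)) := by fun_prop
    have : Tendsto (fun l' => u (rf e l' x)) (nhdsWithin L (Set.Ioi L)) (nhds (u (rf e L x))) :=
      hc.continuousAt.continuousWithinAt
    refine le_of_tendsto this ?_
    filter_upwards [self_mem_nhdsWithin] with l' hl'
    exact hgood l' x hl' (hx.trans (le_of_lt hl'))
  obtain ⟨-, k2, k3, k4, k5⟩ := hLz
  simp only at k2 k3 k4 k5
  set w : Eu d → ℝ := fun x => u x - u (rf e L x) with hw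
  have hwc : ContDiff ℝ 2 w := h.wcd e L
  have hwn : ∀ x, inner ℝ x e ≤ L → 0 ≤ w x := fun x hx => sub_nonneg.2 (hgoodL x hx)
  have hwl : ∀ x, inner ℝ x e ≤ L → lap w x ≤ K * w x := by
    intro x hx
    rw [h.wlap he]
    refine (le_abs_self _).trans ((h.lip _ _).trans ?_)
    rw [abs_sub_comm, abs_of_nonneg (hwn x hx)]
  set S : Set (Eu d) := {x | inner ℝ x e < L} with hS
  have hSo : IsOpen S := isOpen_lt (by fun_prop) continuous_const
  have hSconv : Convex ℝ S := by
    intro x hx y hy s t hs ht hst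
    have hx : inner ℝ x e < L := hx
    have hy : inner ℝ y e < L := hy
    change inner ℝ (s • x + t • y) e < L
    rw [inner_add_left, real_inner_smul_left, real_inner_smul_left]
    rcases eq_or_lt_of_le hs with h0 | h0
    · have : t = 1 := by linarith
      rw [← h0, this]; linarith
    · have : s * L + t * L = L := by rw [← add_mul, hst, one_mul]
      linarith [mul_lt_mul_of_pos_left hx h0, mul_le_mul_of_nonneg_left hy.le ht]
  have hw0 : ∃ x1 ∈ S, w x1 = 0 := by
    by_contra hc
    push Not at hc
    have hzin : inner ℝ (rf e L z) e ≤ L := by rw [rf_inner he]; linarith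
    have hwz : w (rf e L z) = 0 := by
      refine le_antisymm ?_ (hwn _ hzin)
      simp only [hw, rf_rf he]; linarith
    rcases lt_or_eq_of_le hzin with h1 | h1
    · exact hc _ h1 hwz
    · have hzL : inner ℝ z e = L := by rw [rf_inner he] at h1; linarith
      have hzz : rf e L z = z := by rw [rf, hzL]; simp
      rw [hzz] at hwz k5
      have hin : ∀ x, (inner ℝ x e : ℝ) ≤ L - 1 + ‖x - (z - e)‖ := by
        intro x
        have h2 : (inner ℝ (x - (z - e)) e : ℝ) ≤ ‖x - (z-e)‖ * ‖e‖ := real_inner_le_norm _ _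
        rw [inner_sub_left, inner_sub_left, hzL, real_inner_self_eq_norm_sq, he] at h2
        linarith
      have hH := hopf hwc (y := z - e) (p := z) (R := 1) one_pos h.hK (by simp [he]) hwz
        (fun x hx => by
          have h3 : inner ℝ x e < L := by linarith [hin x]
          exact lt_of_le_of_ne (hwn x h3.le) (Ne.symm (hc x h3)))
        (fun x hx => hwn x (by linarith [hin x]))
        (fun x hx => hwl x (by linarith [hin x]))
      rw [sub_sub_cancel, h.wfd he, hzz] at hH
      linarith
  obtain ⟨x1, hx1, hwx1⟩ := hw0
  have hz := strong_max hwc hSo hSconv.isPreconnected h.hK (fun x hx => hwn x (le_of_lt hx))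
    (fun x hx => hwl x (le_of_lt hx)) hx1 hwx1
  have hq0 := hz x0 hL0
  set q := rf e L x0 with hq
  have huq : u q = u x0 := by simp only [hw] at hq0; linarith
  have hqe : inner ℝ q e = 2 * L - inner ℝ x0 e := rf_inner he L x0
  obtain ⟨l', h1, h2⟩ := exists_between (show L < inner ℝ q e by rw [hqe]; linarith)
  have hmaxfd : ∀ y, u y = u x0 → fderiv ℝ u y = 0 := by
    intro y hy
    have : IsLocalMax u y := Eventually.of_forall fun t => by rw [hy]; exact hx0 t
    exact this.fderiv_eq_zero
  have g1 := hgood l' (rf e l' q) h1 (by rw [rf_inner he]; linarith)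
  rw [rf_rf he, huq] at g1
  have g2 : u (rf e l' q) = u x0 := le_antisymm (hx0 _) g1
  have : (l', q) ∈ 𝒦 := ⟨hL0.le.trans h1.le, h2.le, by change δ ≤ u q; rw [huq]; exact hδ.le,
    by change u (rf e l' q) ≤ u q; rw [g2, huq],
    by change fderiv ℝ u (rf e l' q) e + fderiv ℝ u q e = 0
       rw [hmaxfd _ g2, hmaxfd _ huq]; simp⟩
  have : l' ≤ L := hmax this
  linarith

theorem MP.symm {d : ℕ} {f K δ} {u : Eu d → ℝ} (h : MP f K δ u) {x0 : Eu d} (hx0 : ∀ x, u x ≤ u x0)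
    (hδ : δ < u x0) {e : Eu d} (he : ‖e‖ = 1) (x : Eu d) : u (rf e (inner ℝ x0 e) x) = u x := by
  have hcu := h.cd.continuous
  have key : ∀ e : Eu d, ‖e‖ = 1 → ∀ x, inner ℝ x e ≤ inner ℝ x0 e → u (rf e (inner ℝ x0 e) x) ≤ u x := by
    intro e he x hx
    have hrf := rf_cont e
    have hc : Continuous (fun l' => u (rf e l' x)) := by fun_prop
    have : Tendsto (fun l' => u (rf e l' x)) (nhdsWithin (inner ℝ x0 e) (Set.Ioi (inner ℝ x0 e)))
      (nhds (u (rf e (inner ℝ x0 e) x))) := hc.continuousAt.continuousWithinAt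
    refine le_of_tendsto this ?_
    filter_upwards [self_mem_nhdsWithin] with l' hl'
    exact h.slide hx0 hδ he hl' x (hx.trans (le_of_lt hl'))
  have hneg : ∀ x, rf (-e) (inner ℝ x0 (-e)) x = rf e (inner ℝ x0 e) x := by
    intro x; simp only [rf, inner_neg_right]; module
  have key2 : ∀ x, u (rf e (inner ℝ x0 e) x) ≤ u x := by
    intro x
    rcases le_total (inner ℝ x e : ℝ) (inner ℝ x0 e) with h1 | h1
    · exact key e he x h1
    · have := key (-e) (by rwa [norm_neg]) x (by rw [inner_neg_right, inner_neg_right]; linarith)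
      rwa [hneg] at this
  refine le_antisymm (key2 x) ?_
  have := key2 (rf e (inner ℝ x0 e) x)
  rwa [rf_rf he] at this

theorem MP.radial {d : ℕ} {f K δ} {u : Eu d → ℝ} (h : MP f K δ u) {x0 : Eu d} (hx0 : ∀ x, u x ≤ u x0)
    (hδ : δ < u x0) {x y : Eu d} (hxy : ‖x - x0‖ = ‖y - x0‖) : u x = u y := by
  by_cases hne : x = y
  · rw [hne]
  have hn : ‖x - y‖ ≠ 0 := by rwa [norm_ne_zero_iff, sub_ne_zero]
  set e : Eu d := (‖x - y‖)⁻¹ • (x - y) with he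
  have he1 : ‖e‖ = 1 := by rw [he, norm_smul, norm_inv, norm_norm]; field_simp
  have := h.symm hx0 hδ he1 x
  rw [← this]
  congr 1
  have h1 : (inner ℝ (x - x0) (x - y) : ℝ) = ‖x - y‖^2/2 := by
    have h2 : y - x0 = (x - x0) - (x - y) := by abel
    have h3 := norm_sub_sq_real (x - x0) (x - y)
    rw [← h2, ← hxy] at h3
    linarith
  have h2 : (inner ℝ x0 e - inner ℝ x e : ℝ) = -(‖x - y‖/2) := by
    rw [← inner_sub_left, he, real_inner_smul_right, show x0 - x = -(x - x0) by abel, inner_neg_left, h1]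
    field_simp
  rw [rf, h2, he, smul_smul, show 2 * -(‖x - y‖/2) * (‖x-y‖)⁻¹ = -1 by field_simp]
  module

theorem norm_eb {d : ℕ} (i : Fin d) : ‖(eb i : Eu d)‖ = 1 := by simp [eb]

theorem norm_two {d : ℕ} {i j : Fin d} (hij : i ≠ j) (t s : ℝ) :
    ‖t • (eb i : Eu d) + s • eb j‖ = √(t^2+s^2) := by
  have h0 : (inner ℝ (eb i : Eu d) (eb j) : ℝ) = 0 := by
    rw [inner_eb]; simp [eb, hij]
  rw [← Real.sqrt_sq (norm_nonneg (t • (eb i : Eu d) + s • eb j)), norm_add_sq_real, norm_smul, norm_smul,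
    norm_eb, norm_eb, real_inner_smul_left, real_inner_smul_right, h0]
  simp

theorem MP.gs {d : ℕ} {a b K δ} {u : Eu d → ℝ} (hd : 1 ≤ d) (h : MP (nf a b) K δ u)
    (hlt : ∀ x, u x < π/2) {x0 : Eu d}
    (hx0 : ∀ x, u x ≤ u x0) (hδ : δ < u x0) :
    ∃ U V, GS a b d U V ∧ ∀ x, u x = U ‖x - x0‖ := by
  let o : Fin d := ⟨0, hd⟩
  have hdpos : (0:ℝ) < d := by exact_mod_cast hd
  set U : ℝ → ℝ := fun t => u (x0 + t • eb o) with hU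
  set V : ℝ → ℝ := fun t => fderiv ℝ u (x0 + t • eb o) (eb o) with hV
  have hrad : ∀ x, u x = U ‖x - x0‖ := by
    intro x
    refine h.radial hx0 hδ ?_
    rw [add_sub_cancel_left, norm_smul, norm_eb, norm_norm, mul_one]
  have hdU : ∀ r, HasDerivAt U (V r) r := fun r => line1 h.cd x0 (eb o) r
  have hdV : ∀ r, HasDerivAt V (D2 u (x0 + r • eb o) (eb o) (eb o)) r := fun r => line2 h.cd x0 (eb o) (eb o) r
  have hoff : ∀ r, 0 < r → ∀ i, i ≠ o → D2 u (x0 + r • eb o) (eb i) (eb i) = V r / r := by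
    intro r hr i hi
    have hsq : √(r^2 + 0^2) = r := by simp [hr.le]
    have hqd : ∀ s, HasDerivAt (fun s => √(r^2 + s^2)) (s / √(r^2+s^2)) s := by
      intro s
      have h1 : HasDerivAt (fun s : ℝ => r^2 + s^2) (2 * s) s := by
        simpa using (hasDerivAt_pow 2 s).const_add (r^2)
      have hne : r^2 + s^2 ≠ 0 := by positivity
      refine (h1.sqrt hne).congr_deriv ?_
      have : √(r^2+s^2) ≠ 0 := (Real.sqrt_pos.2 (by positivity)).ne'
      field_simp
    have hg : ∀ s, u (x0 + r • eb o + s • eb i) = U (√(r^2+s^2)) := by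
      intro s
      rw [hrad, ← norm_two hi.symm r s]
      congr 2; abel
    have hg1 : ∀ s, fderiv ℝ u (x0 + r • eb o + s • eb i) (eb i) = V (√(r^2+s^2)) * (s / √(r^2+s^2)) := by
      intro s
      have l1 := line1 h.cd (x0 + r • eb o) (eb i) s
      simp only [hg] at l1
      exact l1.unique ((hdU _).comp s (hqd s))
    have l2 := line2 h.cd (x0 + r • eb o) (eb i) (eb i) 0
    simp only [hg1, zero_smul, add_zero] at l2
    have hq0 := hqd 0
    have hV0 := HasDerivAt.comp (h₂ := V) 0 (hdV (√(r^2+0^2))) hq0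
    have hdiv := (hasDerivAt_id (0:ℝ)).div hq0 (by rw [hsq]; exact hr.ne')
    have := l2.unique (hV0.mul hdiv)
    rw [this]
    simp only [hsq, id, Function.comp]
    field_simp
    ring
  have hlapr : ∀ r, 0 < r → D2 u (x0 + r • eb o) (eb o) (eb o) = -(((d:ℝ)-1)/r * V r) - nf a b (U r) := by
    intro r hr
    have h1 := h.eq (x0 + r • eb o)
    rw [lap, ← Finset.add_sum_erase _ _ (Finset.mem_univ o),
      Finset.sum_congr rfl (fun i hi => hoff r hr i (Finset.ne_of_mem_erase hi)), Finset.sum_const,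
      Finset.card_erase_of_mem (Finset.mem_univ o), Finset.card_univ, Fintype.card_fin, nsmul_eq_mul,
      Nat.cast_sub hd, Nat.cast_one] at h1
    have : ((d:ℝ)-1)/r * V r = ((d:ℝ)-1) * (V r / r) := by ring
    rw [this]
    simp only [hU]
    linarith
  have hV0 : V 0 = 0 := by
    have : IsLocalMax u x0 := Eventually.of_forall hx0
    simp only [hV, zero_smul, add_zero, this.fderiv_eq_zero]; simp
  have hz : ∀ i, D2 u x0 (eb i) (eb i) = D2 u x0 (eb o) (eb o) := by
    intro i
    have e1 : ∀ s : ℝ, u (x0 + s • eb i) = u (x0 + s • eb o) := by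
      intro s
      refine h.radial hx0 hδ ?_
      rw [add_sub_cancel_left, add_sub_cancel_left, norm_smul, norm_smul, norm_eb, norm_eb]
    have e2 : ∀ s : ℝ, fderiv ℝ u (x0 + s • eb i) (eb i) = fderiv ℝ u (x0 + s • eb o) (eb o) := by
      intro s
      have l1 := line1 h.cd x0 (eb i) s
      simp only [e1] at l1
      exact l1.unique (line1 h.cd x0 (eb o) s)
    have l2 := line2 h.cd x0 (eb i) (eb i) 0
    simp only [e2] at l2
    have := l2.unique (line2 h.cd x0 (eb o) (eb o) 0)
    simpa using this
  have hlap0 : D2 u x0 (eb o) (eb o) = -(nf a b (U 0) / d) := by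
    have h1 := h.eq x0
    rw [lap, Finset.sum_congr rfl (fun i _ => hz i), Finset.sum_const, Finset.card_univ,
      Fintype.card_fin, nsmul_eq_mul] at h1
    simp only [hU, zero_smul, add_zero]
    rw [eq_comm, neg_eq_iff_eq_neg, div_eq_iff hdpos.ne']
    linarith
  refine ⟨U, V, ⟨⟨hdU, fun r hr => (hdV r).congr_deriv (hlapr r hr), ?_, hV0⟩, ?_, ?_, ?_⟩, hrad⟩
  · refine (hdV 0).congr_deriv ?_
    rw [zero_smul, add_zero, hlap0]
  · intros; exact h.pos _
  · intros; exact hlt _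
  · refine h.lim.comp ?_
    rw [← Metric.cobounded_eq_cocompact, ← tendsto_norm_atTop_iff_cobounded]
    refine tendsto_atTop_mono (f := fun t : ℝ => t - ‖x0‖) (fun t => ?_) ?_
    · have h1 := norm_sub_norm_le (t • eb o) (-x0)
      rw [norm_smul, norm_eb, norm_neg, mul_one, sub_neg_eq_add, add_comm (t • eb o)] at h1
      have := le_abs_self t
      rw [Real.norm_eq_abs] at h1
      linarith
    · exact tendsto_atTop_add_const_right _ _ tendsto_id

theorem nls_iff {d : ℕ} {a b : ℝ} {u : Eu d → ℝ} (hu : Differentiable ℝ u)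
    (h0 : ∀ x, 0 < u x) (h1 : ∀ x, u x < π/2) (x : Eu d) {c : Fin d → ℝ}
    (hd : ∀ i, DifferentiableAt ℝ (fun y => fderiv ℝ u y (eb i)) x)
    (hc : ∀ i, fderiv ℝ (fun y => fderiv ℝ u y (eb i)) x (eb i) = c i) :
    (-(∑ i, pd i (fun y => pd i (fun z => sin (u z)) y / (1 - sin (u y) ^ 2)) x)
      + ((∑ i, (pd i (fun z => sin (u z)) x) ^ 2) / (1 - sin (u x) ^ 2) ^ 2) * sin (u x)
      - a * sin (u x) ^ 3 + b * sin (u x) = 0) ↔ ∑ i, c i = - nf a b (u x) := by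
  have hcos : ∀ y, 0 < cos (u y) := fun y => cos_pos_q (h0 y) (h1 y)
  have p1 : ∀ i y, pd i (fun z => sin (u z)) y = cos (u y) * fderiv ℝ u y (eb i) := by
    intro i y
    rw [pd, ((hu y).hasFDerivAt.sin).fderiv]
    simp [eb]
  have p2 : ∀ i y, pd i (fun z => sin (u z)) y / (1 - sin (u y) ^ 2) = fderiv ℝ u y (eb i) / cos (u y) := by
    intro i y
    have := (hcos y).ne'
    rw [p1, ← cos_sq']
    field_simp
  have p3 : ∀ i, pd i (fun y => pd i (fun z => sin (u z)) y / (1 - sin (u y) ^ 2)) x =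
      c i / cos (u x) + sin (u x) / cos (u x)^2 * (fderiv ℝ u x (eb i))^2 := by
    intro i
    simp only [p2]
    have hne := (hcos x).ne'
    have hinv : HasFDerivAt (fun y => (cos (u y))⁻¹) _ x :=
      (hasDerivAt_inv hne).comp_hasFDerivAt x (hu x).hasFDerivAt.cos
    simp only [div_eq_mul_inv]
    rw [pd, ((hd i).hasFDerivAt.fun_mul hinv).fderiv]
    have := hc i
    rw [eb] at this
    simp [eb, this]
    field_simp
    ring
  simp only [p3]
  simp only [p1, Finset.sum_add_distrib, ← Finset.sum_div, ← Finset.mul_sum, mul_pow, ← cos_sq', nf]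
  set S := ∑ i, c i
  set T := ∑ i, (fderiv ℝ u x (eb i))^2
  have hne := (hcos x).ne'
  have : -(S / cos (u x) + sin (u x) / cos (u x)^2 * T) + cos (u x)^2 * T / (cos (u x)^2)^2 * sin (u x)
     - a * sin (u x)^3 + b * sin (u x) = -(S + sin (u x) * cos (u x) * (a * sin (u x)^2 - b)) / cos (u x) := by
    field_simp
    ring
  rw [this, div_eq_zero_iff]
  constructor
  · rintro (h | h)
    · linarith
    · exact absurd h hne
  · intro h; left; linarith

theorem nls_lap {d : ℕ} {a b : ℝ} {φ : Eu d → ℝ} (hφ : ContDiff ℝ 2 φ) (hp : ∀ x, 0 < φ x ∧ φ x < 1)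
    (h : NuclearNLS d a b φ) : ContDiff ℝ 2 (fun x => arcsin (φ x)) ∧
      ∀ x, lap (fun x => arcsin (φ x)) x = - nf a b (arcsin (φ x)) := by
  have hcd : ContDiff ℝ 2 (fun x => arcsin (φ x)) := by
    rw [contDiff_iff_contDiffAt]
    intro x
    exact (Real.contDiffAt_arcsin (by linarith [hp x]) (by linarith [hp x])).comp x hφ.contDiffAt
  refine ⟨hcd, fun x => ?_⟩
  have hs : ∀ x, sin (arcsin (φ x)) = φ x := fun x => sin_arcsin (by linarith [hp x]) (by linarith [hp x])
  have hf : ContDiff ℝ 1 (fderiv ℝ (fun x => arcsin (φ x))) := hcd.fderiv_right (by norm_num)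
  have hdf := hf.differentiable (by norm_num)
  have := (nls_iff (a := a) (b := b) (u := fun x => arcsin (φ x)) (hcd.differentiable (by norm_num))
    (fun x => arcsin_pos.2 (hp x).1)
    (fun x => by rw [arcsin_lt_pi_div_two]; exact (hp x).2) x
    (c := fun i => D2 (fun x => arcsin (φ x)) x (eb i) (eb i))
    (fun i => (hdf x).clm_apply (differentiableAt_const _))
    (fun i => by
      rw [fderiv_clm_apply (hdf x) (differentiableAt_const _)]
      simp [D2])).1
  simp only [hs] at this
  exact this (h x)

theorem fd_norm {d : ℕ} {x : Eu d} (hx : x ≠ 0) :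
    HasFDerivAt (fun y : Eu d => ‖y‖) ((‖x‖)⁻¹ • innerSL ℝ x) x := by
  have hn : ‖x‖ ≠ 0 := norm_ne_zero_iff.2 hx
  have h1 := (hasStrictFDerivAt_norm_sq x).hasFDerivAt.sqrt (by positivity)
  simp only [Real.sqrt_sq (norm_nonneg _)] at h1
  refine h1.congr_fderiv ?_
  ext v
  simp
  field_simp

theorem fd_mul_zero {d : ℕ} {g : Eu d → ℝ} (hg : ContinuousAt g 0) (i : Fin d) :
    HasFDerivAt (fun y : Eu d => g y * y i) (g 0 • (EuclideanSpace.proj i : Eu d →L[ℝ] ℝ)) 0 := by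
  have h0 : (fun y : Eu d => g y - g 0) =o[nhds 0] (fun _ => (1:ℝ)) := by
    rw [Asymptotics.isLittleO_one_iff]
    have := hg.tendsto.sub_const (g 0)
    simpa using this
  have h1 : (fun y : Eu d => y i) =O[nhds 0] (fun y => y) :=
    (EuclideanSpace.proj i : Eu d →L[ℝ] ℝ).isBigO_id _
  refine HasFDerivAt.of_isLittleO ?_
  have := h0.mul_isBigO h1.norm_right
  simp only [one_mul] at this
  rw [← Asymptotics.isLittleO_norm_right]
  refine this.congr (fun y => ?_) (fun y => ?_)
  · simp; ring
  · simp

def Wr (V : ℝ → ℝ) (c : ℝ) (r : ℝ) : ℝ := if r = 0 then c else V r / r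

theorem Sol.fd {d : ℕ} {a b : ℝ} {U V : ℝ → ℝ} (h : Sol a b d U V) (c : ℝ) (x : Eu d) :
    HasFDerivAt (fun y : Eu d => U ‖y‖) (Wr V c ‖x‖ • innerSL ℝ x) x := by
  by_cases hx : x = 0
  · subst hx
    have h1 := h.dU 0
    rw [h.V0] at h1
    have h2 : (fun r : ℝ => U r - U 0) =o[nhds 0] (fun r => r) := by
      have := h1.isLittleO
      simpa using this
    have h3 : Tendsto (fun y : Eu d => ‖y‖) (nhds 0) (nhds 0) := by
      simpa using (continuous_norm (E := Eu d)).tendsto 0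
    refine HasFDerivAt.of_isLittleO ?_
    rw [← Asymptotics.isLittleO_norm_right]
    refine (h2.comp_tendsto h3).congr (fun y => ?_) (fun y => ?_)
    · simp
    · simp
  · have hn : ‖x‖ ≠ 0 := norm_ne_zero_iff.2 hx
    have := (h.dU ‖x‖).comp_hasFDerivAt x (fd_norm hx)
    refine this.congr_fderiv ?_
    rw [smul_smul, Wr, if_neg hn]; rfl

theorem Sol.fdi {d : ℕ} {a b : ℝ} {U V : ℝ → ℝ} (h : Sol a b d U V) (c : ℝ) (i : Fin d) (x : Eu d) :
    fderiv ℝ (fun y : Eu d => U ‖y‖) x (eb i) = Wr V c ‖x‖ * x i := by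
  rw [(h.fd c x).fderiv]
  have : inner ℝ x (eb i) = x i := by rw [real_inner_comm, inner_eb]
  simp [this]

theorem Sol.nls {d : ℕ} (hd : 1 ≤ d) {a b : ℝ} {U V : ℝ → ℝ} (h : GS a b d U V) :
    NuclearNLS d a b (fun x => sin (U ‖x‖)) := by
  have hdpos : (0:ℝ) < d := by exact_mod_cast hd
  have hS := h.toSol
  set c := -(nf a b (U 0) / d) with hc
  have hdiff : Differentiable ℝ (fun y : Eu d => U ‖y‖) := fun x => (hS.fd c x).differentiableAt
  intro x
  by_cases hx : x = 0
  · subst hx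
    have hW : ContinuousAt (fun y : Eu d => Wr V c ‖y‖) 0 := by
      have h1 : ContinuousAt (Wr V c) 0 := by
        have h2 := hasDerivAt_iff_tendsto_slope.1 hS.dV0
        rw [← continuousWithinAt_compl_self]
        have : Wr V c 0 = c := by simp [Wr]
        rw [ContinuousWithinAt, this]
        refine h2.congr' ?_
        filter_upwards [self_mem_nhdsWithin] with r hr
        have hr : r ≠ 0 := hr
        rw [Wr, if_neg hr, slope_def_field, hS.V0]; simp
      have h3 : ContinuousAt (fun y : Eu d => ‖y‖) 0 := continuous_norm.continuousAt
      exact ContinuousAt.comp (by simpa using h1) h3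
    refine (nls_iff (c := fun _ => c) hdiff (fun x => h.pos _ (norm_nonneg x)) (fun x => h.lt _ (norm_nonneg x))
      0 ?_ ?_).2 ?_
    · intro i
      simp only [hS.fdi c]
      exact (fd_mul_zero hW i).differentiableAt
    · intro i
      simp only [hS.fdi c]
      rw [(fd_mul_zero hW i).fderiv]
      simp [Wr, eb]
    · simp [hc]
      field_simp
  · have hn : ‖x‖ ≠ 0 := norm_ne_zero_iff.2 hx
    have hnp : 0 < ‖x‖ := norm_pos_iff.2 hx
    set r := ‖x‖ with hr
    set W' := ((-(((d:ℝ)-1)/r*V r) - nf a b (U r)) * r - V r * 1) / r^2 with hW'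
    have hW : HasDerivAt (Wr V c) W' r := by
      refine ((hS.dV r hnp).div (hasDerivAt_id r) hn).congr_of_eventuallyEq ?_
      filter_upwards [isOpen_ne.mem_nhds hn] with s hs
      have hs : s ≠ 0 := hs
      rw [Wr, if_neg hs]; rfl
    have key : ∀ i, HasFDerivAt (fun y : Eu d => Wr V c ‖y‖ * y i)
        (Wr V c ‖x‖ • (EuclideanSpace.proj i : Eu d →L[ℝ] ℝ) + x i • (W' • (‖x‖)⁻¹ • innerSL ℝ x)) x := by
      intro i
      have k1 : HasFDerivAt (fun y : Eu d => Wr V c ‖y‖) (W' • (‖x‖)⁻¹ • innerSL ℝ x) x :=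
        HasDerivAt.comp_hasFDerivAt (h₂ := Wr V c) x hW (fd_norm hx)
      have k2 : HasFDerivAt (fun y : Eu d => y i) (EuclideanSpace.proj i : Eu d →L[ℝ] ℝ) x :=
        (EuclideanSpace.proj i : Eu d →L[ℝ] ℝ).hasFDerivAt
      exact k1.fun_mul k2
    refine (nls_iff (c := fun i => V r / r + W' / r * x i^2) hdiff (fun x => h.pos _ (norm_nonneg x)) (fun x => h.lt _ (norm_nonneg x))
      x ?_ ?_).2 ?_
    · intro i
      simp only [hS.fdi c]
      exact (key i).differentiableAt
    · intro i
      simp only [hS.fdi c]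
      rw [(key i).fderiv]
      have : inner ℝ x (eb i) = x i := by rw [real_inner_comm, inner_eb]
      have h2 : (eb i : Eu d) i = 1 := by simp [eb]
      simp [this, h2]
      rw [← hr, Wr, if_neg hn]
      field_simp
    · rw [Finset.sum_add_distrib, ← Finset.mul_sum, ← eu_norm_sq, ← hr, hW']
      simp
      field_simp
      ring

theorem uniqueness_up_to_translation (d : ℕ) (hd : 1 ≤ d) (a b : ℝ)
    (hb : 0 < b) (hab : 2 * b < a) :
    ∃ φ₀ : EuclideanSpace ℝ (Fin d) → ℝ,
      NuclearNLS d a b φ₀ ∧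
      (∀ x, 0 < φ₀ x ∧ φ₀ x < 1) ∧
      (∃ ρ : ℝ → ℝ, StrictAntiOn ρ (Set.Ici 0) ∧ ∀ x, φ₀ x = ρ ‖x‖) ∧
      Tendsto φ₀ (cocompact (EuclideanSpace ℝ (Fin d))) (nhds 0) ∧
      ∀ φ : EuclideanSpace ℝ (Fin d) → ℝ,
        ContDiff ℝ 2 φ →
        (∀ x, 0 < φ x ∧ φ x < 1) →
        Tendsto φ (cocompact (EuclideanSpace ℝ (Fin d))) (nhds 0) →
        NuclearNLS d a b φ →
        ∃ x₀ : EuclideanSpace ℝ (Fin d), ∀ x, φ x = φ₀ (x - x₀) := by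
  obtain ⟨U, V, h⟩ := exists_GS hd hb hab
  have hmono : ∀ s t, 0 < s → t < π/2 → s < t → sin s < sin t := by
    intro s t h1 h2 h3
    exact sin_lt_sin_of_lt_of_le_pi_div_two (by linarith [pi_pos]) h2.le h3
  refine ⟨fun x => sin (U ‖x‖), Sol.nls hd h, ?_, ⟨fun r => sin (U r), ?_, fun x => rfl⟩, ?_, ?_⟩
  · intro x
    have h1 := h.pos _ (norm_nonneg x)
    have h2 := h.lt _ (norm_nonneg x)
    refine ⟨sin_pos_q h1 h2, ?_⟩
    have := sin_lt_sin_of_lt_of_le_pi_div_two (by linarith [pi_pos]) le_rfl h2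
    rwa [sin_pi_div_two] at this
  · intro r hr s hs hrs
    exact hmono _ _ (h.pos s hs) (h.lt r hr) (h.anti hd hb hr hs hrs)
  · have h1 : Tendsto (fun x : Eu d => U ‖x‖) (cocompact (Eu d)) (nhds 0) :=
      h.lim.comp tendsto_norm_cocompact_atTop
    have h2 := (continuous_sin.tendsto 0).comp h1
    rw [sin_zero] at h2
    exact h2
  · intro φ hφ hp hlim hnls
    obtain ⟨hcd, hlap⟩ := nls_lap hφ hp hnls
    set u : Eu d → ℝ := fun x => arcsin (φ x) with hu
    have hupos : ∀ x, 0 < u x := fun x => arcsin_pos.2 (hp x).1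
    have hult : ∀ x, u x < π/2 := fun x => by
      simp only [hu]; rw [arcsin_lt_pi_div_two]; exact (hp x).2
    have hulim : Tendsto u (cocompact (Eu d)) (nhds 0) := by
      have := (continuous_arcsin.tendsto 0).comp hlim
      rw [arcsin_zero] at this
      exact this
    obtain ⟨x0, hx0⟩ : ∃ x0, ∀ x, u x ≤ u x0 := by
      refine hcd.continuous.exists_forall_ge' (x₀ := 0) ?_
      filter_upwards [hulim.eventually_lt_const (hupos 0)] with y hy using hy.le
    obtain ⟨δ, d1, d2, d3⟩ := nf_anti a b hb (u x0) (hupos x0)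
    obtain ⟨K, hK, hlip⟩ := nf_lip a b
    have hMP : MP (nf a b) K δ u := ⟨hcd, hupos, hulim, hK, hlip, d1, d3, hlap⟩
    obtain ⟨U', V', hg, hrad⟩ := hMP.gs hd hult hx0 d2
    refine ⟨x0, fun x => ?_⟩
    have hs : sin (u x) = φ x := sin_arcsin (by linarith [hp x]) (by linarith [hp x])
    rw [← hs, hrad, hg.unique hd (by linarith) hb h _ (norm_nonneg _)]
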